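/- Let M be a 3-connected excluded minor of \overline{BL} having a U_{2,4}-minor. Then r(M) \le 11 or r*(M) \le 4. -/

import Mathlib

/-!
The first alternative always holds: an `M` as in the theorem has rank at most 11.

**Binary spaces.** Graphs are handled through their cut spaces, that is, subspaces `R` of `E → 𝔽₂`.
A finite set is a cycle of `R` when its indicator is orthogonal to `R`. The binary matroid of `R`
(`Bn`) has as independent sets those containing no nonempty cycle, and the lift matroid of `R`
(`Lam`) those containing at most one. When `R` is the cut space of a graph these are the graphic
matroid and the bicircular lift matroid (`IsGraphicRep.bn`, `IsLiftRep.lam`, and conversely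
`isBicircularLift_of_lam`). Contraction of `e` corresponds to passing to the vectors of `R` that
vanish at `e` (`ctr R {e}`).

**Gluing.** Let `M` be 3-connected of rank at least 12 with all proper minors in the class. Then `M`
has finite rank, no loops and no cocircuits with fewer than three elements
(`Setup.of_threeConnected`), and the `U₂,₄`-minor survives in some `M ／ {c}`, which is therefore
not binary (`exists_not_bn`) and so is the lift matroid of a graph. A lift matroid of large rank
without small cocircuits determines the cut space of its graph (`Lam.unique`), essentially
because at most one vertex star has an independent complement, so that the other stars are
recovered from the matroid; for the same reason it is not binary (`Lam.not_bn`). Consequently the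
cut spaces of the single-element contractions fit together into one space `R` such that `M` is
the lift matroid of `R` and every `ctr R {e}`, for `e` a nonzero coordinate of `R`, is a cut space
(`Setup.exists_lam`).

**Core theorem.** It remains to see that `R` itself is a cut space, for then `M` is bicircular
lift, a contradiction. This is `core`: a finite binary space of dimension at least 11 all of whose
contractions by a nonzero coordinate are cut spaces is a cut space. The argument uses Tutte's
bridges of a cocircuit `Y`. By induction, a non-graphic `R` may be assumed to have a deletion
`dlt R x` that is a cut space, and from a graph of it one finds a cocircuit with at least two
bridges (`TRep.exists_valid`). Choose `Y` with at least two bridges and a bridge `B` of `Y` as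
large as possible. Since `R` is not graphic while its contraction by `B` is, `B` overlaps two
other bridges `C` and `D` (`Hub.two_overlap`); these overlap each other, since otherwise `B` could
be enlarged (`Hub.enlarge`). A cut of a graph never has three pairwise overlapping bridges
(`Graphic.not_three`), so contracting an element outside `B ∪ C ∪ D ∪ Y` is impossible and there is
no such element. Finally, each of the three bridges comes from a graph with at most four
vertices (`Hub.card_le`), for otherwise contracting some edge of it would leave three pairwise
overlapping bridges. The local spaces of the three bridges all contain `Y`, whence
`dim R ≤ 4 + 4 + 4 - 2 = 10`.
-/

open Set Matroid

universe u

namespace BLFormal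

/-! ### Matroid preliminaries -/

/-- A circuit of a matroid: a minimal dependent set. -/
def Circuit {α : Type u} (M : Matroid α) (C : Set α) : Prop := Minimal M.Dep C

/-- Deletion of a set of elements from a matroid. -/
def del {α : Type u} (M : Matroid α) (D : Set α) : Matroid α := M ↾ (M.E \ D)

/-- Contraction of a set of elements of a matroid, defined by duality. -/
def con {α : Type u} (M : Matroid α) (C : Set α) : Matroid α := (del M✶ C)✶

/-- `N` is a minor of `M` if it is obtained by a contraction followed by a deletion. -/
def IsMinor {α : Type u} (N M : Matroid α) : Prop := ∃ C D : Set α, N = del (con M C) D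

/-- `N` is a proper (strict) minor of `M`. -/
def IsStrictMinor {α : Type u} (N M : Matroid α) : Prop := IsMinor N M ∧ N ≠ M

/-- The rank of a set `X` in the matroid `M`, as an extended natural number:
the supremum of the cardinalities of the independent subsets of `X`. -/
noncomputable def eRk {α : Type u} (M : Matroid α) (X : Set α) : ℕ∞ :=
  ⨆ I : {I : Set α // M.Indep I ∧ I ⊆ X}, (I : Set α).encard

/-- The rank `r(M)` of a matroid, as an extended natural number. -/
noncomputable def eRank {α : Type u} (M : Matroid α) : ℕ∞ := eRk M M.E

/-- A loop of a matroid. -/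
def MLoop {α : Type u} (M : Matroid α) (e : α) : Prop := M.Dep {e}

/-- A coloop of a matroid: a loop of the dual. -/
def MColoop {α : Type u} (M : Matroid α) (e : α) : Prop := MLoop M✶ e

/-- A `k`-separation of a matroid: a partition `(X, Y)` of the ground set with
`|X|, |Y| ≥ k` and `r(X) + r(Y) - r(M) ≤ k - 1`. -/
def IsKSep {α : Type u} (M : Matroid α) (k : ℕ) (X Y : Set α) : Prop :=
  X ∪ Y = M.E ∧ Disjoint X Y ∧ (k : ℕ∞) ≤ X.encard ∧ (k : ℕ∞) ≤ Y.encard ∧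
    eRk M X + eRk M Y ≤ eRank M + ((k - 1 : ℕ) : ℕ∞)

/-- A matroid is connected if it has no 1-separation. -/
def MConnected {α : Type u} (M : Matroid α) : Prop := ¬ ∃ X Y, IsKSep M 1 X Y

/-- A matroid is 3-connected if it is connected and has no 2-separation. -/
def ThreeConnected {α : Type u} (M : Matroid α) : Prop :=
  MConnected M ∧ ¬ ∃ X Y, IsKSep M 2 X Y

/-- Two elements of a matroid form a series pair if no circuit contains exactly one
of them, and some circuit contains both. -/
def SeriesPair {α : Type u} (M : Matroid α) (e f : α) : Prop :=
  (∀ C, Circuit M C → (e ∈ C ↔ f ∈ C)) ∧ ∃ C, Circuit M C ∧ e ∈ C ∧ f ∈ C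

/-- A series class: a maximal set in which every two elements form a series pair. -/
def IsSeriesClass {α : Type u} (M : Matroid α) (S : Set α) : Prop :=
  Maximal (fun T => T.Nonempty ∧ ∀ e ∈ T, ∀ f ∈ T, SeriesPair M e f) S

/-- `N` is a cosimplification `co(M)` of `M`: it is obtained from `M` by contracting
all coloops and, in each series class, all but one element. -/
def IsCosimplification {α : Type u} (M N : Matroid α) : Prop :=
  ∃ D ⊆ M.E, N = con M D ∧ (∀ e, MColoop M e → e ∈ D) ∧
    ∀ S, IsSeriesClass M S → ∃ x ∈ S, S \ D = {x}

/-- `M` is isomorphic to the uniform matroid `U_{k, n}`: the ground set has `n` elements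
and the circuits are precisely the `(k+1)`-element subsets of the ground set. -/
def IsUnif {α : Type u} (k n : ℕ) (M : Matroid α) : Prop :=
  M.E.encard = n ∧ ∀ C, Circuit M C ↔ C ⊆ M.E ∧ C.encard = k + 1

/-- `M` has a `U_{2,4}`-minor. -/
def HasU24Minor {α : Type u} (M : Matroid α) : Prop := ∃ N, IsMinor N M ∧ IsUnif 2 4 N

/-- `M` is isomorphic to the direct sum `U_{2,4} ⊕ U_{0,1}` of `U_{2,4}` and a loop:
its ground set consists of a 4-element set `X` together with one further element `l`,
and its circuits are `{l}` and the 3-element subsets of `X`. -/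
def IsU24PlusLoop {α : Type u} (M : Matroid α) : Prop :=
  ∃ (X : Set α) (l : α), l ∉ X ∧ M.E = insert l X ∧ X.encard = 4 ∧
    ∀ C, Circuit M C ↔ (C = {l} ∨ (C ⊆ X ∧ C.encard = 3))

/-- `M` is isomorphic to the Fano matroid `F₇`: the rank-3 matroid represented over
`GF(2)` by the seven nonzero vectors of `GF(2)³`. -/
def IsFano {α : Type u} (M : Matroid α) : Prop :=
  ∃ v : α → (Fin 3 → ZMod 2),
    Set.BijOn v M.E {w | w ≠ 0} ∧
    ∀ I ⊆ M.E, (M.Indep I ↔ LinearIndependent (ZMod 2) (fun x : I => v x))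

/-! ### Graphs (with loops and parallel edges allowed) -/

/-- A graph on vertex type `V`, with edge set `E` living in the ambient edge type `α`;
each edge is sent to the unordered pair of its end-vertices. -/
structure Graph (V : Type u) (α : Type u) where
  E : Set α
  inc : α → Sym2 V

namespace Graph

variable {V : Type u} {α : Type u}

/-- The vertices incident with an edge set `C`. -/
def vertsOf (G : Graph V α) (C : Set α) : Set V := {v | ∃ e ∈ C, v ∈ G.inc e}

/-- The vertex set of a graph (we consider graphs without isolated vertices). -/
def verts (G : Graph V α) : Set V := G.vertsOf G.E

/-- Deletion of a set of edges from a graph. -/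
def delete (G : Graph V α) (D : Set α) : Graph V α := ⟨G.E \ D, G.inc⟩

/-- The degree of a vertex `v` in the edge set `C`, with loops counting twice. -/
noncomputable def deg (G : Graph V α) (C : Set α) (v : V) : ℕ :=
  {e ∈ C | v ∈ G.inc e}.ncard + {e ∈ C | G.inc e = Sym2.diag v}.ncard

/-- Two vertices are adjacent via an edge of `C`. -/
def AdjOn (G : Graph V α) (C : Set α) (u v : V) : Prop := ∃ e ∈ C, G.inc e = s(u, v)

/-- The subgraph with edge set `C` is connected. -/
def ConnectedOn (G : Graph V α) (C : Set α) : Prop :=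
  ∀ u ∈ G.vertsOf C, ∀ v ∈ G.vertsOf C, Relation.ReflTransGen (G.AdjOn C) u v

/-- `C` is a cycle of `G` : the edge set of a connected 2-regular subgraph. -/
def IsCycle (G : Graph V α) (C : Set α) : Prop :=
  C ⊆ G.E ∧ C.Finite ∧ C.Nonempty ∧ (∀ v ∈ G.vertsOf C, G.deg C v = 2) ∧ G.ConnectedOn C

/-- A graph is 2-edge-connected if each of its edges lies in a cycle. -/
def TwoEdgeConnected (G : Graph V α) : Prop := ∀ e ∈ G.E, ∃ C, G.IsCycle C ∧ e ∈ C

/-- A graph is connected if it has at least one vertex and any two of its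
vertices are joined by a path. -/
def Connected (G : Graph V α) : Prop := G.verts.Nonempty ∧ G.ConnectedOn G.E

/-- Delete a vertex from a graph (removing all edges incident with it). -/
def delVert (G : Graph V α) (v : V) : Graph V α := ⟨{e ∈ G.E | v ∉ G.inc e}, G.inc⟩

/-- A graph is 2-connected if it is connected and stays connected after the
deletion of any vertex. -/
def TwoConnected (G : Graph V α) : Prop :=
  G.Connected ∧ ∀ v ∈ G.verts, (G.delVert v).Connected

/-- `X` contains at least two (distinct) cycles of `G`. -/
def HasTwoCycles (G : Graph V α) (X : Set α) : Prop :=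
  ∃ C₁ C₂, G.IsCycle C₁ ∧ G.IsCycle C₂ ∧ C₁ ≠ C₂ ∧ C₁ ⊆ X ∧ C₂ ⊆ X

/-- The circuits of the bicircular lift matroid of `G`: edge sets containing at
least two cycles and minimal with this property. -/
def LiftCircuit (G : Graph V α) (X : Set α) : Prop :=
  Minimal (fun Y => Y ⊆ G.E ∧ G.HasTwoCycles Y) X

/-- Two edges of a graph form a series pair if no cycle contains exactly one of
them, and some cycle contains both. -/
def SeriesPair (G : Graph V α) (e f : α) : Prop :=
  (∀ C, G.IsCycle C → (e ∈ C ↔ f ∈ C)) ∧ ∃ C, G.IsCycle C ∧ e ∈ C ∧ f ∈ C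

end Graph

/-- `N` is the bicircular lift matroid `L(G)` of `G` : its ground set is `E(G)`
and its circuits are the lift circuits of `G`. -/
def IsLiftRep {V α : Type u} (G : Graph V α) (N : Matroid α) : Prop :=
  N.E = G.E ∧ ∀ C, Circuit N C ↔ G.LiftCircuit C

/-- `N` is the cycle matroid `M(G)` of `G` : its ground set is `E(G)` and its
circuits are the cycles of `G`. -/
def IsGraphicRep {V α : Type u} (G : Graph V α) (N : Matroid α) : Prop :=
  N.E = G.E ∧ ∀ C, Circuit N C ↔ G.IsCycle C

/-- A matroid is bicircular lift if it is (isomorphic to) `L(G)` for some graph `G`. -/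
def IsBicircularLift {α : Type u} (N : Matroid α) : Prop :=
  ∃ (V : Type u) (G : Graph V α), IsLiftRep G N

/-- A matroid is graphic if it is (isomorphic to) the cycle matroid of some graph. -/
def IsGraphic {α : Type u} (N : Matroid α) : Prop :=
  ∃ (V : Type u) (G : Graph V α), IsGraphicRep G N

/-- The class `BL-bar` of matroids that are graphic or bicircular lift. -/
def InBL {α : Type u} (N : Matroid α) : Prop := IsGraphic N ∨ IsBicircularLift N

/-- `M` is an excluded minor for the class `BL-bar`. -/
def ExcludedMinorBL {α : Type u} (M : Matroid α) : Prop :=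
  ¬ InBL M ∧ ∀ N, IsStrictMinor N M → InBL N

/-! ### Special graphs and subdivisions -/

/-- `G` is (a copy of) the complete graph `K₄`. -/
def IsK4 {V α : Type u} (G : Graph V α) : Prop :=
  ∃ v : Fin 4 → V, Function.Injective v ∧
    ∃ ed : {p : Sym2 (Fin 4) // ¬ p.IsDiag} → α, Function.Injective ed ∧
      G.E = Set.range ed ∧ ∀ p, G.inc (ed p) = Sym2.map v p.1

/-- `G` is (a copy of) the complete graph `K₅`. -/
def IsK5 {V α : Type u} (G : Graph V α) : Prop :=
  ∃ v : Fin 5 → V, Function.Injective v ∧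
    ∃ ed : {p : Sym2 (Fin 5) // ¬ p.IsDiag} → α, Function.Injective ed ∧
      G.E = Set.range ed ∧ ∀ p, G.inc (ed p) = Sym2.map v p.1

/-- `G` is (a copy of) the complete bipartite graph `K₃,₃`. -/
def IsK33 {V α : Type u} (G : Graph V α) : Prop :=
  ∃ a b : Fin 3 → V, Function.Injective a ∧ Function.Injective b ∧
    Set.range a ∩ Set.range b = ∅ ∧
    ∃ ed : Fin 3 × Fin 3 → α, Function.Injective ed ∧
      G.E = Set.range ed ∧ ∀ p, G.inc (ed p) = s(a p.1, b p.2)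

/-- `G` is (a copy of) the graph `K₂ⁿ` with two vertices joined by `n` parallel edges. -/
def IsK2n {V α : Type u} (n : ℕ) (G : Graph V α) : Prop :=
  ∃ u v : V, u ≠ v ∧ ∃ ed : Fin n → α, Function.Injective ed ∧
    G.E = Set.range ed ∧ ∀ i, G.inc (ed i) = s(u, v)

/-- `H` is obtained from `G` by subdividing a single edge. -/
def ElemSub {V α : Type u} (G H : Graph V α) : Prop :=
  ∃ e ∈ G.E, ∃ (f g : α) (u v w : V),
    G.inc e = s(u, v) ∧ w ∉ G.verts ∧ f ≠ g ∧
    f ∉ G.E \ {e} ∧ g ∉ G.E \ {e} ∧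
    H.E = (G.E \ {e}) ∪ {f, g} ∧
    H.inc f = s(u, w) ∧ H.inc g = s(w, v) ∧
    ∀ x ∈ G.E \ {e}, H.inc x = G.inc x

/-- `H` is a subdivision of `G` : it is obtained from `G` by repeatedly
subdividing edges. -/
def IsSubdivision {V α : Type u} (G H : Graph V α) : Prop :=
  Relation.ReflTransGen ElemSub G H

/-! ### 2-sums and simplification -/

/-- `N` is the 2-sum `N₁ ⊕₂ᵉ N₂` of `N₁` and `N₂` along `e`. -/
def Is2Sum {α : Type u} (N N₁ N₂ : Matroid α) (e : α) : Prop :=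
  N₁.E ∩ N₂.E = {e} ∧
  ¬ MLoop N₁ e ∧ ¬ MColoop N₁ e ∧ ¬ MLoop N₂ e ∧ ¬ MColoop N₂ e ∧
  N.E = (N₁.E ∪ N₂.E) \ {e} ∧
  ∀ C, Circuit N C ↔
    ((Circuit N₁ C ∧ e ∉ C) ∨ (Circuit N₂ C ∧ e ∉ C) ∨
      ∃ C₁ C₂, Circuit N₁ C₁ ∧ Circuit N₂ C₂ ∧ e ∈ C₁ ∧ e ∈ C₂ ∧
        C = (C₁ \ {e}) ∪ (C₂ \ {e}))

/-- `H` is a simplification `si(G)` of `G` : it is obtained from `G` by deleting all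
loops and all but one edge of each parallel class. -/
def IsSimplification {V α : Type u} (G H : Graph V α) : Prop :=
  H.inc = G.inc ∧ H.E ⊆ G.E ∧ (∀ e ∈ H.E, ¬ (G.inc e).IsDiag) ∧
    ∀ e ∈ G.E, ¬ (G.inc e).IsDiag → ∃! f, f ∈ H.E ∧ G.inc f = G.inc e

/-- `H` is 2-connected, or is obtained from a 2-connected graph and a single edge `K₂`
by identifying one end-vertex of the edge with a vertex of the 2-connected graph. -/
def TwoConnOrPendant {V α : Type u} (H : Graph V α) : Prop :=
  H.TwoConnected ∨
    ∃ (e : α) (u w : V), e ∈ H.E ∧ H.inc e = s(u, w) ∧ u ≠ w ∧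
      (H.delete {e}).TwoConnected ∧ u ∈ (H.delete {e}).verts ∧ w ∉ (H.delete {e}).verts

set_option linter.unusedSimpArgs false

/-- The two-element field. -/
abbrev K := ZMod 2

lemma k01 (x : K) : x = 0 ∨ x = 1 := by revert x; decide

lemma k_one {x : K} (h : x ≠ 0) : x = 1 := (k01 x).resolve_left h

lemma k_eq {x y : K} (h : x + y = 0) : x = y := by grind

lemma k_self (x : K) : x + x = 0 := by grind

lemma exists_min {ι : Type*} (P : ι → Prop) (m : ι → ℕ) (h : ∃ i, P i) :
    ∃ i, P i ∧ ∀ j, P j → m i ≤ m j := by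
  obtain ⟨i, hi⟩ := h
  have := (InvImage.wf m Nat.lt_wfRel.wf).has_min {i | P i} ⟨i, hi⟩
  obtain ⟨j, hj, hm⟩ := this
  exact ⟨j, hj, fun k hk => not_lt.1 (hm k hk)⟩

lemma exists_max {ι : Type*} (P : ι → Prop) (m : ι → ℕ) (N : ℕ) (hN : ∀ i, P i → m i ≤ N)
    (h : ∃ i, P i) : ∃ i, P i ∧ ∀ j, P j → m j ≤ m i := by
  obtain ⟨i, hi, hm⟩ := exists_min P (fun i => N - m i) h
  refine ⟨i, hi, fun j hj => ?_⟩
  have := hm j hj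
  have := hN i hi
  have := hN j hj
  omega

section Core
variable {α : Type*} {V : Type}

/-- The coboundary of a vertex function, for the multigraph in which `e` joins `a e` to `b e`. -/
def dl (a b : α → V) (f : V → K) : α → K := fun e => f (a e) + f (b e)

lemma dl_apply (a b : α → V) (f : V → K) (e : α) : dl a b f e = f (a e) + f (b e) := rfl

lemma dl_add (a b : α → V) (f g : V → K) : dl a b (f + g) = dl a b f + dl a b g := by
  funext e; simp only [dl, Pi.add_apply]; ring

/-- The indicator function of a set, with values in the two-element field. -/
noncomputable def ind {β : Type*} (U : Set β) : β → K := by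
  classical exact fun v => if v ∈ U then 1 else 0

lemma ind_of_mem {β : Type*} {U : Set β} {v : β} (h : v ∈ U) : ind U v = 1 := by
  simp [ind, h]

lemma ind_of_notMem {β : Type*} {U : Set β} {v : β} (h : v ∉ U) : ind U v = 0 := by
  simp [ind, h]

lemma ind_eq_iff {β : Type*} {U : Set β} {v w : β} : ind U v = ind U w ↔ (v ∈ U ↔ w ∈ U) := by
  by_cases h : v ∈ U <;> by_cases h2 : w ∈ U <;> simp [ind, h, h2]

/-- A binary space of edge vectors is graphic if it is the space of cuts of a finite graph. -/
def Graphic (R : Submodule K (α → K)) : Prop :=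
  ∃ (V : Type) (_ : Finite V) (a b : α → V), ∀ w, w ∈ R ↔ ∃ f : V → K, w = dl a b f

/-- `R` is the cut space of the connected graph `(V, a, b)`. -/
structure GRep (R : Submodule K (α → K)) (a b : α → V) : Prop where
  mem : ∀ w, w ∈ R ↔ ∃ f : V → K, w = dl a b f
  conn : ∀ f : V → K, (∀ e, f (a e) = f (b e)) → ∀ u v, f u = f v

/-- Identifying vertices in different components makes the graph connected. -/
lemma Graphic.exists_gRep {R : Submodule K (α → K)} (h : Graphic R) :
    ∃ (V : Type) (_ : Finite V) (a b : α → V), GRep R a b := by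
  obtain ⟨V0, h0, a0, b0, hm0⟩ := h
  obtain ⟨n, hn⟩ : ∃ n, n = Nat.card V0 := ⟨_, rfl⟩
  induction n using Nat.strong_induction_on generalizing V0 with
  | _ n ih =>
    by_cases hc : ∀ f : V0 → K, (∀ e, f (a0 e) = f (b0 e)) → ∀ u v, f u = f v
    · exact ⟨V0, h0, a0, b0, hm0, hc⟩
    push Not at hc
    obtain ⟨f, hf, u, v, huv⟩ := hc
    have huv' : u ≠ v := fun h => huv (by rw [h])
    classical
    let π : V0 → {x : V0 // x ≠ v} := fun x => if h : x = v then ⟨u, huv'⟩ else ⟨x, h⟩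
    have hπ : ∀ g : V0 → K, g u = g v → ∀ x, g (π x).1 = g x := by
      intro g hg x
      by_cases h : x = v
      · simp [π, h, hg]
      · simp [π, h]
    refine ih (Nat.card {x : V0 // x ≠ v}) ?_ {x : V0 // x ≠ v} inferInstance
      (π ∘ a0) (π ∘ b0) ?_ rfl
    · rw [hn]
      exact Finite.card_subtype_lt (x := v) (by simp)
    · intro w
      rw [hm0]
      constructor
      · rintro ⟨f', rfl⟩
        let g : V0 → K := fun x => f' x + (f' u + f' v) * (f x + f u)
        have hg : g u = g v := by
          have h1 := k01 (f u); have h2 := k01 (f v)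
          simp only [g]; grind
        refine ⟨fun x => g x.1, ?_⟩
        funext e
        simp only [dl, Function.comp, hπ g hg]
        simp only [g, hf e]
        grind
      · rintro ⟨g, rfl⟩
        exact ⟨g ∘ π, rfl⟩

lemma GRep.graphic [Finite V] {R : Submodule K (α → K)} {a b : α → V} (h : GRep R a b) :
    Graphic R := ⟨V, inferInstance, a, b, h.mem⟩

lemma GRep.dl_mem {R : Submodule K (α → K)} {a b : α → V} (h : GRep R a b) (f : V → K) :
    dl a b f ∈ R := (h.mem _).2 ⟨f, rfl⟩

/-- Contraction: the vectors of `R` that vanish on `X`. -/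
def ctr (R : Submodule K (α → K)) (X : Set α) : Submodule K (α → K) where
  carrier := {w | w ∈ R ∧ ∀ x ∈ X, w x = 0}
  add_mem' := fun h h' => ⟨R.add_mem h.1 h'.1, fun x hx => by simp [h.2 x hx, h'.2 x hx]⟩
  zero_mem' := ⟨R.zero_mem, fun _ _ => rfl⟩
  smul_mem' := fun c w h => ⟨R.smul_mem c h.1, fun x hx => by simp [h.2 x hx]⟩

lemma mem_ctr {R : Submodule K (α → K)} {X : Set α} {w : α → K} :
    w ∈ ctr R X ↔ w ∈ R ∧ ∀ x ∈ X, w x = 0 := Iff.rfl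

lemma ctr_le (R : Submodule K (α → K)) (X : Set α) : ctr R X ≤ R := fun _ h => h.1

/-- Deletion: the coordinate `x` is replaced by zero. -/
def dlt (R : Submodule K (α → K)) (x : α) : Submodule K (α → K) where
  carrier := {w | w x = 0 ∧ ∃ r ∈ R, ∀ e, e ≠ x → w e = r e}
  add_mem' := by
    rintro w w' ⟨h, r, hr, hw⟩ ⟨h', r', hr', hw'⟩
    exact ⟨by simp [h, h'], r + r', R.add_mem hr hr', fun e he => by simp [hw e he, hw' e he]⟩
  zero_mem' := ⟨rfl, 0, R.zero_mem, fun _ _ => rfl⟩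
  smul_mem' := by
    rintro c w ⟨h, r, hr, hw⟩
    exact ⟨by simp [h], c • r, R.smul_mem c hr, fun e he => by simp [hw e he]⟩

lemma mem_dlt {R : Submodule K (α → K)} {x : α} {w : α → K} :
    w ∈ dlt R x ↔ w x = 0 ∧ ∃ r ∈ R, ∀ e, e ≠ x → w e = r e := Iff.rfl

/-- The elements at which some vector of `R` is nonzero. -/
def NL (R : Submodule K (α → K)) : Set α := {e | ∃ w ∈ R, w e ≠ 0}

lemma Graphic.ctr {R : Submodule K (α → K)} (h : Graphic R) (X : Set α) : Graphic (ctr R X) := by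
  obtain ⟨V, _, a, b, hm⟩ := h
  let r : V → V → Prop := fun u v => ∃ x ∈ X, a x = u ∧ b x = v
  refine ⟨Quot r, Finite.of_surjective (Quot.mk r) Quot.mk_surjective,
    fun e => Quot.mk r (a e), fun e => Quot.mk r (b e), fun w => ?_⟩
  constructor
  · rintro ⟨hw, hX⟩
    obtain ⟨f, rfl⟩ := (hm w).1 hw
    refine ⟨Quot.lift f ?_, rfl⟩
    rintro _ _ ⟨x, hx, rfl, rfl⟩
    exact k_eq (hX x hx)
  · rintro ⟨f, rfl⟩
    refine ⟨(hm _).2 ⟨fun v => f (Quot.mk r v), rfl⟩, fun x hx => ?_⟩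
    have : Quot.mk r (a x) = Quot.mk r (b x) := Quot.sound ⟨x, hx, rfl, rfl⟩
    simp only [dl, this, k_self]

lemma Graphic.dlt {R : Submodule K (α → K)} (h : Graphic R) (x : α) : Graphic (dlt R x) := by
  classical
  obtain ⟨V, _, a, b, hm⟩ := h
  refine ⟨V, inferInstance, a, Function.update b x (a x), fun w => ?_⟩
  constructor
  · rintro ⟨hx, r, hr, hw⟩
    obtain ⟨f, rfl⟩ := (hm r).1 hr
    refine ⟨f, funext fun e => ?_⟩
    by_cases he : e = x
    · subst he; simp [dl, hx, k_self]
    · simp [dl, he, hw e he]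
  · rintro ⟨f, rfl⟩
    refine ⟨by simp [dl, k_self], dl a b f, (hm _).2 ⟨f, rfl⟩, fun e he => by simp [dl, he]⟩

lemma ctr_ctr (R : Submodule K (α → K)) (X Y : Set α) : ctr (ctr R X) Y = ctr R (X ∪ Y) := by
  ext w; simp only [mem_ctr, mem_union]; grind

lemma ctr_dlt (R : Submodule K (α → K)) (x y : α) (h : y ≠ x) :
    ctr (dlt R x) {y} = dlt (ctr R {y}) x := by
  ext w; simp only [mem_ctr, mem_dlt, mem_singleton_iff, forall_eq]; grind

lemma Graphic.mono {R : Submodule K (α → K)} {X Y : Set α} (h : Graphic (BLFormal.ctr R X))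
    (hXY : X ⊆ Y) : Graphic (BLFormal.ctr R Y) := by
  have := h.ctr Y
  rwa [ctr_ctr, union_eq_self_of_subset_left hXY] at this

/-- `R` is the direct sum of its parts supported on `X` and off `X`. -/
def GSep (R : Submodule K (α → K)) (X : Set α) : Prop :=
  ∀ w ∈ R, ∃ w' ∈ R, (∀ e ∈ X, w' e = w e) ∧ ∀ e ∉ X, w' e = 0

lemma GSep.graphic {R : Submodule K (α → K)} {X : Set α} (h : GSep R X)
    (h1 : Graphic (BLFormal.ctr R X)) (h2 : Graphic (BLFormal.ctr R Xᶜ)) : Graphic R := by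
  classical
  obtain ⟨V1, _, a1, b1, hm1⟩ := h1
  obtain ⟨V2, _, a2, b2, hm2⟩ := h2
  have v1 : ∀ (f : V1 → K) (e), e ∈ X → f (a1 e) + f (b1 e) = 0 := fun f e he =>
    ((hm1 (dl a1 b1 f)).2 ⟨f, rfl⟩).2 e he
  have v2 : ∀ (f : V2 → K) (e), e ∉ X → f (a2 e) + f (b2 e) = 0 := fun f e he =>
    ((hm2 (dl a2 b2 f)).2 ⟨f, rfl⟩).2 e he
  let a : α → V1 ⊕ V2 := fun e => if e ∈ X then Sum.inr (a2 e) else Sum.inl (a1 e)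
  let b : α → V1 ⊕ V2 := fun e => if e ∈ X then Sum.inr (b2 e) else Sum.inl (b1 e)
  have key : ∀ f, dl a b f = dl a1 b1 (f ∘ Sum.inl) + dl a2 b2 (f ∘ Sum.inr) := by
    intro f; funext e
    by_cases he : e ∈ X
    · have := v1 (f ∘ Sum.inl) e he
      simp only [dl, Pi.add_apply, a, b, if_pos he, Function.comp] at this ⊢; simp [this]
    · have := v2 (f ∘ Sum.inr) e he
      simp only [dl, Pi.add_apply, a, b, if_neg he, Function.comp] at this ⊢; simp [this]
  refine ⟨V1 ⊕ V2, inferInstance, a, b, fun w => ⟨fun hw => ?_, ?_⟩⟩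
  · obtain ⟨w', hw', hX, hXc⟩ := h w hw
    obtain ⟨f2, hf2⟩ := (hm2 w').1 ⟨hw', fun x hx => hXc x hx⟩
    obtain ⟨f1, hf1⟩ := (hm1 (w + w')).1 ⟨R.add_mem hw hw', fun x hx => by simp [hX x hx, k_self]⟩
    refine ⟨Sum.elim f1 f2, ?_⟩
    rw [key, Sum.elim_comp_inl, Sum.elim_comp_inr, ← hf1, ← hf2]
    funext e; simp only [Pi.add_apply]; grind
  · rintro ⟨f, rfl⟩
    rw [key]
    exact R.add_mem ((hm1 _).2 ⟨_, rfl⟩).1 ((hm2 _).2 ⟨_, rfl⟩).1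

end Core

section Core
variable {α : Type*} {V : Type}

/-! ### Cocircuits, separators and bridges -/

/-- `Y` is (the characteristic vector of) a cocircuit: a nonzero vector of minimal support. -/
structure IsCoc (R : Submodule K (α → K)) (Y : α → K) : Prop where
  mem : Y ∈ R
  ne : Y ≠ 0
  min : ∀ w ∈ R, (∀ e, Y e = 0 → w e = 0) → w = 0 ∨ w = Y

/-- The vectors of `R` supported on `X` together with the support of `Y`. -/
def loc (R : Submodule K (α → K)) (Y : α → K) (X : Set α) : Submodule K (α → K) :=
  ctr R {e | e ∉ X ∧ Y e = 0}

lemma mem_loc {R : Submodule K (α → K)} {Y : α → K} {X : Set α} {w : α → K} :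
    w ∈ loc R Y X ↔ w ∈ R ∧ ∀ e, e ∉ X → Y e = 0 → w e = 0 := by
  simp only [loc, mem_ctr, mem_ofPred_eq, and_imp]

/-- `X` is a separator relative to `Y`: every restriction to `X` of a vector of `R` is also
the restriction of a vector supported on `X` and `Y`. -/
def Sep (R : Submodule K (α → K)) (Y : α → K) (X : Set α) : Prop :=
  ∀ w ∈ R, ∃ v ∈ loc R Y X, ∀ e ∈ X, v e = w e

/-- The bridges of a cocircuit `Y`: minimal nonempty separators off `Y`. -/
structure Bridge (R : Submodule K (α → K)) (Y : α → K) (B : Set α) : Prop where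
  ne : B.Nonempty
  zero : ∀ e ∈ B, Y e = 0
  nl : ∀ e ∈ B, e ∈ NL R
  sep : Sep R Y B
  min : ∀ X ⊆ B, X.Nonempty → Sep R Y X → X = B

/-- Two elements of the cocircuit are equivalent for `X` if no vector supported on `X` and `Y`
distinguishes them. -/
def eqv (R : Submodule K (α → K)) (Y : α → K) (X : Set α) (y y' : α) : Prop :=
  ∀ w ∈ loc R Y X, w y = w y'

lemma eqv.symm {R : Submodule K (α → K)} {Y : α → K} {X : Set α} {y y' : α}
    (h : eqv R Y X y y') : eqv R Y X y' y := fun w hw => (h w hw).symm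

lemma eqv.trans {R : Submodule K (α → K)} {Y : α → K} {X : Set α} {y y' y'' : α}
    (h : eqv R Y X y y') (h2 : eqv R Y X y' y'') : eqv R Y X y y'' :=
  fun w hw => (h w hw).trans (h2 w hw)

/-- Two bridges avoid each other if the cocircuit is covered by one equivalence class of each. -/
def Avoid (R : Submodule K (α → K)) (Y : α → K) (B C : Set α) : Prop :=
  ∃ y1 y2, Y y1 ≠ 0 ∧ Y y2 ≠ 0 ∧ ∀ y, Y y ≠ 0 → eqv R Y B y y1 ∨ eqv R Y C y y2

lemma Avoid.symm {R : Submodule K (α → K)} {Y : α → K} {B C : Set α} (h : Avoid R Y B C) :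
    Avoid R Y C B := by
  obtain ⟨y1, y2, h1, h2, h⟩ := h
  exact ⟨y2, y1, h2, h1, fun y hy => (h y hy).symm⟩

lemma IsCoc.exists_ne {R : Submodule K (α → K)} {Y : α → K} (h : IsCoc R Y) : ∃ y, Y y ≠ 0 := by
  by_contra hc; push Not at hc; exact h.ne (funext hc)

lemma IsCoc.of_le {R R' : Submodule K (α → K)} {Y : α → K} (h : IsCoc R Y) (hle : R' ≤ R)
    (hY : Y ∈ R') : IsCoc R' Y := ⟨hY, h.ne, fun w hw => h.min w (hle hw)⟩

lemma IsCoc.mem_loc {R : Submodule K (α → K)} {Y : α → K} (h : IsCoc R Y) (X : Set α) :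
    Y ∈ loc R Y X := BLFormal.mem_loc.2 ⟨h.mem, fun _ _ h => h⟩

/-- Inside any vector nonzero at `x` there is a cocircuit through `x`. -/
lemma exists_coc [Finite α] {R : Submodule K (α → K)} {w : α → K} (hw : w ∈ R) {x : α}
    (hx : w x ≠ 0) : ∃ Y, IsCoc R Y ∧ Y x ≠ 0 ∧ ∀ e, w e = 0 → Y e = 0 := by
  obtain ⟨Y, ⟨hY, hYx, hYw⟩, hmin⟩ := exists_min
    (fun Y : α → K => Y ∈ R ∧ Y x ≠ 0 ∧ ∀ e, w e = 0 → Y e = 0)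
    (fun Y => {e | Y e ≠ 0}.ncard) ⟨w, hw, hx, fun _ h => h⟩
  refine ⟨Y, ⟨hY, fun h => hYx (by rw [h]; rfl), ?_⟩, hYx, hYw⟩
  have key : ∀ w' ∈ R, (∀ e, Y e = 0 → w' e = 0) → w' x ≠ 0 → w' = Y := by
    intro w' hw' hs hx'
    have h1 := hmin w' ⟨hw', hx', fun e he => hs e (hYw e he)⟩
    have h2 : {e | w' e ≠ 0} ⊆ {e | Y e ≠ 0} := fun e he h => he (hs e h)
    have h3 := Set.eq_of_subset_of_ncard_le h2 h1
    funext e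
    have h4 : w' e ≠ 0 ↔ Y e ≠ 0 := by
      have := congrArg (fun S => e ∈ S) h3
      simpa using this
    by_cases he : Y e = 0
    · rw [he, hs e he]
    · rw [k_one he, k_one (h4.2 he)]
  intro w' hw' hs
  by_cases hx' : w' x = 0
  · left
    have := key (Y + w') (R.add_mem hY hw') (fun e he => by simp [he, hs e he])
      (by simpa [hx'] using hYx)
    simpa using this
  · right; exact key w' hw' hs hx'

section sep
variable {R : Submodule K (α → K)} {Y : α → K}

lemma Sep.inter {X X' : Set α} (h : Sep R Y X) (h' : Sep R Y X') : Sep R Y (X ∩ X') := by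
  intro w hw
  obtain ⟨w1, hw1, e1⟩ := h w hw
  rw [mem_loc] at hw1
  obtain ⟨w2, hw2, e2⟩ := h' w1 hw1.1
  rw [mem_loc] at hw2
  refine ⟨w2, mem_loc.2 ⟨hw2.1, fun e he hY => ?_⟩, fun e he => ?_⟩
  · by_cases h : e ∈ X'
    · rw [e2 e h]; exact hw1.2 e (fun hx => he ⟨hx, h⟩) hY
    · exact hw2.2 e h hY
  · rw [e2 e he.2, e1 e he.1]

lemma Sep.diff {X X' : Set α} (h : Sep R Y X) (h' : Sep R Y X') (hY : ∀ e ∈ X, Y e = 0) :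
    Sep R Y (X \ X') := by
  intro w hw
  obtain ⟨w1, hw1, e1⟩ := h w hw
  rw [mem_loc] at hw1
  obtain ⟨w2, hw2, e2⟩ := h' w1 hw1.1
  rw [mem_loc] at hw2
  refine ⟨w1 + w2, mem_loc.2 ⟨R.add_mem hw1.1 hw2.1, fun e he hY => ?_⟩, fun e he => ?_⟩
  · by_cases h : e ∈ X'
    · simp [e2 e h, k_self]
    · simp [hw2.2 e h hY, hw1.2 e (fun hx => he ⟨hx, h⟩) hY]
  · simp [e1 e he.1, hw2.2 e he.2 (hY e he.1)]

lemma Bridge.subset_of_sep {B X : Set α} (hB : Bridge R Y B) (hX : Sep R Y X)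
    (h : (B ∩ X).Nonempty) : B ⊆ X := by
  have := hB.min (B ∩ X) inter_subset_left h (hB.sep.inter hX)
  exact inter_eq_left.1 this

lemma Bridge.disjoint {B C : Set α} (hB : Bridge R Y B) (hC : Bridge R Y C) (h : B ≠ C) :
    ∀ e ∈ B, e ∉ C := fun e he hc =>
  h ((hB.subset_of_sep hC.sep ⟨e, he, hc⟩).antisymm (hC.subset_of_sep hB.sep ⟨e, hc, he⟩))

lemma exists_bridge [Finite α] {e : α} (he : e ∈ NL R) (hY : Y e = 0) :
    ∃ B, Bridge R Y B ∧ e ∈ B := by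
  obtain ⟨B, ⟨hB, heB, hs⟩, hmin⟩ := exists_min
    (fun B : Set α => (∀ e ∈ B, Y e = 0 ∧ e ∈ NL R) ∧ e ∈ B ∧ Sep R Y B) Set.ncard
    ⟨{e | Y e = 0 ∧ e ∈ NL R}, fun e h => h, ⟨hY, he⟩, fun w hw => ⟨w, mem_loc.2 ⟨hw,
      fun e h hy => by by_contra hc; exact h ⟨hy, w, hw, hc⟩⟩, fun _ _ => rfl⟩⟩
  refine ⟨B, ⟨⟨e, heB⟩, fun e he => (hB e he).1, fun e he => (hB e he).2, hs, ?_⟩, heB⟩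
  intro X hX hne hsX
  by_cases heX : e ∈ X
  · exact Set.eq_of_subset_of_ncard_le hX (hmin X ⟨fun e he => hB e (hX he), heX, hsX⟩)
  · have h1 := hmin (B \ X) ⟨fun e he => hB e he.1, ⟨heB, heX⟩,
      hs.diff hsX fun e he => (hB e he).1⟩
    have h2 := Set.eq_of_subset_of_ncard_le sdiff_subset h1
    obtain ⟨x, hx⟩ := hne
    have := h2.symm ▸ hX hx
    exact absurd hx this.2

/-- Passing to a subspace containing the local space of a bridge changes nothing about it. -/
lemma loc_of_le {R' : Submodule K (α → K)} {C : Set α} (hle : R' ≤ R) (h : loc R Y C ≤ R') :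
    loc R' Y C = loc R Y C := by
  ext w; rw [mem_loc, mem_loc]
  exact ⟨fun h => ⟨hle h.1, h.2⟩, fun h' => ⟨h (mem_loc.2 h'), h'.2⟩⟩

lemma Bridge.of_le {R' : Submodule K (α → K)} {C : Set α} (hC : Bridge R Y C) (hle : R' ≤ R)
    (h : loc R Y C ≤ R') : Bridge R' Y C := by
  refine ⟨hC.ne, hC.zero, fun e he => ?_, fun w hw => ?_, fun X hX hne hs => ?_⟩
  · obtain ⟨w, hw, hwe⟩ := hC.nl e he
    obtain ⟨w', hw', h'⟩ := hC.sep w hw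
    exact ⟨w', h hw', by rwa [h' e he]⟩
  · rw [loc_of_le hle h]; exact hC.sep w (hle hw)
  · refine hC.min X hX hne fun w hw => ?_
    obtain ⟨w', hw', h'⟩ := hC.sep w hw
    obtain ⟨w2, hw2, h2⟩ := hs w' (h hw')
    rw [mem_loc] at hw2
    exact ⟨w2, mem_loc.2 ⟨hle hw2.1, hw2.2⟩, fun e he => by rw [h2 e he, h' e (hX he)]⟩

lemma eqv_of_le {R' : Submodule K (α → K)} {C : Set α} (hle : R' ≤ R) (h : loc R Y C ≤ R')
    {y y' : α} : eqv R' Y C y y' ↔ eqv R Y C y y' := by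
  simp only [eqv, loc_of_le hle h]

/-- Bridges of `R / B` different from `B` are bridges of `R`. -/
lemma Bridge.lift {B C : Set α} (hB : Bridge R Y B) (hC : Bridge (ctr R B) Y C) :
    Bridge R Y C ∧ loc R Y C ≤ ctr R B ∧ ∀ e ∈ C, e ∉ B := by
  have hd : ∀ e ∈ C, e ∉ B := by
    intro e he hb
    obtain ⟨w, hw, hwe⟩ := hC.nl e he
    exact hwe (hw.2 e hb)
  have hloc : ∀ X ⊆ C, loc R Y X ≤ ctr R B := by
    intro X hX w hw
    rw [mem_loc] at hw
    exact ⟨hw.1, fun e he => hw.2 e (fun h => hd e (hX h) he) (hB.zero e he)⟩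
  refine ⟨⟨hC.ne, hC.zero, fun e he => ?_, fun w hw => ?_, fun X hX hne hs => ?_⟩,
    hloc C subset_rfl, hd⟩
  · obtain ⟨w, hw, h⟩ := hC.nl e he
    exact ⟨w, hw.1, h⟩
  · obtain ⟨w1, hw1, h1⟩ := hB.sep w hw
    rw [mem_loc] at hw1
    obtain ⟨w2, hw2, h2⟩ := hC.sep (w + w1) ⟨R.add_mem hw hw1.1, fun e he => by
      simp [h1 e he, k_self]⟩
    rw [mem_loc] at hw2
    exact ⟨w2, mem_loc.2 ⟨hw2.1.1, hw2.2⟩, fun e he => by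
      simp [h2 e he, hw1.2 e (hd e he) (hC.zero e he)]⟩
  · refine hC.min X hX hne fun w hw => ?_
    obtain ⟨w', hw', h'⟩ := hs w hw.1
    have := hloc X hX hw'
    rw [mem_loc] at hw'
    exact ⟨w', mem_loc.2 ⟨this, hw'.2⟩, h'⟩

end sep

/-! ### Connectivity of graphs -/

/-- The subgraph with vertex set `U` and the edges of `F` inside `U` is connected. -/
def Conn (a b : α → V) (F : Set α) (U : Set V) : Prop :=
  ∀ f : V → K, (∀ e ∈ F, a e ∈ U → b e ∈ U → f (a e) = f (b e)) → ∀ u ∈ U, ∀ v ∈ U, f u = f v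

/-- The component of `u` in the subgraph with vertex set `U` and edges from `F`. -/
def comp (a b : α → V) (F : Set α) (U : Set V) (u : V) : Set V :=
  {v ∈ U | ∀ f : V → K, (∀ e ∈ F, a e ∈ U → b e ∈ U → f (a e) = f (b e)) → f u = f v}

section conn
variable {a b : α → V} {F : Set α} {U : Set V}

lemma Conn.swap (h : Conn a b F U) : Conn b a F U :=
  fun f hf => h f fun e he h1 h2 => (hf e he h2 h1).symm

lemma mem_comp_self {u : V} (h : u ∈ U) : u ∈ comp a b F U u := ⟨h, fun _ _ => rfl⟩

lemma comp_subset {u : V} : comp a b F U u ⊆ U := fun _ h => h.1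

lemma comp_closed {u : V} {e : α} (he : e ∈ F) (h1 : a e ∈ U) (h2 : b e ∈ U) :
    a e ∈ comp a b F U u ↔ b e ∈ comp a b F U u := by
  constructor
  · exact fun h => ⟨h2, fun f hf => (h.2 f hf).trans (hf e he h1 h2)⟩
  · exact fun h => ⟨h1, fun f hf => (h.2 f hf).trans (hf e he h1 h2).symm⟩

lemma comp_eq {u v : V} (h : v ∈ comp a b F U u) :
    comp a b F U v = comp a b F U u := by
  ext x
  exact ⟨fun hx => ⟨hx.1, fun f hf => (h.2 f hf).trans (hx.2 f hf)⟩,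
    fun hx => ⟨hx.1, fun f hf => (h.2 f hf).symm.trans (hx.2 f hf)⟩⟩

lemma conn_comp {u : V} : Conn a b F (comp a b F U u) := by
  classical
  intro g hg
  have key : ∀ v ∈ comp a b F U u, g u = g v := by
    intro v hv
    let f : V → K := fun x => if x ∈ comp a b F U u then g x else g u
    have := hv.2 f (fun e he h1 h2 => by
      have hc := comp_closed (u := u) he h1 h2
      by_cases h : a e ∈ comp a b F U u
      · simp only [f, if_pos h, if_pos (hc.1 h)]; exact hg e he h (hc.1 h)
      · simp only [f, if_neg h, if_neg (fun h' => h (hc.2 h'))])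
    simpa [f, hv] using this
  exact fun x hx y hy => (key x hx).symm.trans (key y hy)

/-- Adjacency through an edge of `F`. -/
def Adj (a b : α → V) (F : Set α) (u v : V) : Prop :=
  ∃ e ∈ F, (a e = u ∧ b e = v) ∨ (a e = v ∧ b e = u)

lemma Adj.symm {u v : V} (h : Adj a b F u v) : Adj a b F v u := by
  obtain ⟨e, he, h⟩ := h
  exact ⟨e, he, h.symm⟩

/-- A connected vertex set has an edge leaving each of its proper parts. -/
lemma Conn.exists_adj (h : Conn a b F U) {S : Set V} {u v : V} (hu : u ∈ U) (hv : v ∈ U)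
    (huS : u ∈ S) (hvS : v ∉ S) : ∃ p ∈ S ∩ U, ∃ q ∈ U \ S, Adj a b F p q := by
  by_contra hc
  push Not at hc
  have := h (ind S) (fun e he h1 h2 => ind_eq_iff.2 ⟨fun h => by
    by_contra h'; exact hc _ ⟨h, h1⟩ _ ⟨h2, h'⟩ ⟨e, he, .inl ⟨rfl, rfl⟩⟩, fun h => by
    by_contra h'; exact hc _ ⟨h, h2⟩ _ ⟨h1, h'⟩ ⟨e, he, .inr ⟨rfl, rfl⟩⟩⟩) u hu v hv
  exact hvS ((ind_eq_iff.1 this).1 huS)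

lemma Conn.insert {w u : V} (h : Conn a b F U) (hu : u ∈ U) (hw : Adj a b F u w) :
    Conn a b F (insert w U) := by
  intro f hf
  have h1 := h f fun e he h1 h2 => hf e he (.inr h1) (.inr h2)
  have h2 : f w = f u := by
    obtain ⟨e, he, ⟨rfl, rfl⟩ | ⟨rfl, rfl⟩⟩ := hw
    · exact (hf e he (.inr hu) (.inl rfl)).symm
    · exact hf e he (.inl rfl) (.inr hu)
  have h3 : ∀ x ∈ Insert.insert w U, f x = f u := by
    rintro x (rfl | hx)
    · exact h2
    · exact h1 x hx u hu
  exact fun x hx y hy => (h3 x hx).trans (h3 y hy).symm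

lemma conn_singleton (v : V) : Conn a b F {v} := by
  rintro f - u rfl w rfl; rfl

/-- In a graph without cut vertices, a vertex set with connected complement can be enlarged by
a neighbour while keeping the complement connected. -/
lemma growth [Finite V] (h2 : ∀ q, Conn a b F {q}ᶜ) (hU : U.Nonempty) (hc : Conn a b F Uᶜ)
    (hn : Uᶜ.Nontrivial) :
    ∃ w, w ∉ U ∧ (∃ u ∈ U, Adj a b F u w) ∧ Conn a b F (insert w U)ᶜ := by
  obtain ⟨p, hp, q, hq, hpq⟩ := hn
  obtain ⟨u0, hu0⟩ := hU
  have hne : ∀ {x y}, x ∈ U → y ∉ U → x ≠ y := fun h h' he => h' (he ▸ h)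
  obtain ⟨⟨w, Q⟩, ⟨hw, hadj, hQn, hQ, hQc⟩, hmax⟩ := exists_max
    (fun x : V × Set V => x.1 ∉ U ∧ (∃ u ∈ U, Adj a b F u x.1) ∧ x.2.Nonempty ∧
      x.2 ⊆ (insert x.1 U)ᶜ ∧ Conn a b F x.2) (fun x => x.2.ncard) (Nat.card V)
    (fun x _ => Set.ncard_le_card _) (by
      obtain ⟨u, hu, w, hw, h⟩ := (h2 p).exists_adj (S := U) (u := u0) (v := q)
        (hne hu0 hp) (by simpa using hpq.symm) hu0 hq
      refine ⟨(w, {p}), hw.2, ⟨u, hu.1, h⟩, ⟨p, rfl⟩, ?_, conn_singleton p⟩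
      rintro x rfl
      rintro (rfl | h')
      · exact hw.1 rfl
      · exact hp h')
  simp only at hw hadj hQn hQ hQc hmax
  by_cases hall : ∀ x ∉ insert w U, x ∈ Q
  · refine ⟨w, hw, hadj, ?_⟩
    rwa [show (insert w U)ᶜ = Q from Subset.antisymm hall hQ]
  exfalso
  push Not at hall
  obtain ⟨l, hl, hlQ⟩ := hall
  obtain ⟨k, hk⟩ := hQn
  have hcl : ∀ x ∈ Q, ∀ y ∉ insert w U, y ∉ Q → ¬ Adj a b F x y := by
    intro x hx y hy hyQ hA
    have := hmax (w, insert y Q) ⟨hw, hadj, ⟨y, .inl rfl⟩, Set.insert_subset hy hQ,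
      hQc.insert hx hA⟩
    simp only [Set.ncard_insert_of_notMem hyQ (Set.toFinite Q)] at this
    omega
  -- the remaining vertices are joined to `U`, because `w` is not a cut vertex
  obtain ⟨w', hw', u', hu', hA'⟩ := (h2 w).exists_adj
    (S := {x | x ∉ insert w U ∧ x ∉ Q}) (u := l) (v := k)
    (fun h => hl (.inl h)) (fun h => hQ hk (.inl h)) ⟨hl, hlQ⟩ (fun h => h.2 hk)
  have hu'U : u' ∈ U := by
    by_contra hc'
    have h1 : u' ∉ insert w U := by rintro (h | h); exacts [hu'.1 h, hc' h]
    have h2 : u' ∈ Q := by by_contra h; exact hu'.2 ⟨h1, h⟩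
    exact hcl u' h2 w' hw'.1.1 hw'.1.2 hA'.symm
  obtain ⟨x, hx, y, hy, hA⟩ := hc.exists_adj (S := Q) (u := k) (v := w)
    (fun h => hQ hk (.inr h)) hw hk (fun h => hQ h (.inl rfl))
  have hyw : y = w := by
    by_contra h
    exact hcl x hx.1 y (by rintro (h' | h'); exacts [h h', hy.1 h']) hy.2 hA
  subst hyw
  have := hmax (w', insert y Q) ⟨fun h => hw'.1.1 (.inr h), ⟨u', hu'U, hA'.symm⟩, ⟨y, .inl rfl⟩,
    by
      rintro z (rfl | hz)
      · rintro (h | h)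
        · exact hw'.1.1 (h ▸ .inl rfl)
        · exact hw h
      · rintro (h | h)
        · exact hw'.1.2 ((show z = w' from h) ▸ hz)
        · exact hQ hz (.inr h), hQc.insert hx.1 hA⟩
  simp only [Set.ncard_insert_of_notMem hy.2 (Set.toFinite Q)] at this
  omega

end conn

/-! ### Representations adapted to a cocircuit -/

/-- A connected graph representing `R` in which `Y` is the cut between `U` and its complement,
each edge of the cut being directed out of `U`. -/
structure ORep (R : Submodule K (α → K)) (Y : α → K) (a b : α → V) (U : Set V) : Prop
    extends GRep R a b where
  out : ∀ e, Y e ≠ 0 → a e ∈ U ∧ b e ∉ U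
  same : ∀ e, Y e = 0 → (a e ∈ U ↔ b e ∈ U)

section orep
variable {R : Submodule K (α → K)} {Y : α → K} {a b : α → V} {U : Set V}

lemma GRep.exists_oRep (h : GRep R a b) (hY : Y ∈ R) :
    ∃ (a' b' : α → V) (U : Set V), ORep R Y a' b' U := by
  classical
  obtain ⟨f, rfl⟩ := (h.mem Y).1 hY
  let U : Set V := {v | f v = 1}
  let a' : α → V := fun e => if a e ∈ U then a e else b e
  let b' : α → V := fun e => if a e ∈ U then b e else a e
  have key : ∀ g, dl a' b' g = dl a b g := by
    intro g; funext e; simp only [dl, a', b']; split_ifs <;> ring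
  refine ⟨a', b', U, ⟨⟨fun w => ?_, fun g hg => h.conn g fun e => ?_⟩, fun e he => ?_,
    fun e he => ?_⟩⟩
  · simp only [key]; exact h.mem w
  · have := congrFun (key g) e
    have h2 := hg e
    simp only [dl] at this
    apply k_eq; rw [← this, h2, k_self]
  · have h1 := k01 (f (a e)); have h2 := k01 (f (b e))
    simp only [dl] at he
    simp only [a', b', U, mem_ofPred_eq]
    split_ifs <;> grind
  · have h1 := k_eq he
    simp only [a', b', U, mem_ofPred_eq]
    split_ifs <;> grind

lemma ORep.swap (h : ORep R Y a b U) : ORep R Y b a Uᶜ := by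
  have key : ∀ g, dl b a g = dl a b g := by intro g; funext e; simp only [dl]; ring
  refine ⟨⟨fun w => ?_, fun g hg => h.conn g fun e => (hg e).symm⟩, fun e he => ?_, fun e he => ?_⟩
  · simp only [key]; exact h.mem w
  · exact ⟨(h.out e he).2, fun h' => h' (h.out e he).1⟩
  · exact (not_congr (h.same e he)).symm

lemma ORep.conn_left (h : ORep R Y a b U) (hY : IsCoc R Y) : Conn a b univ U := by
  classical
  intro g hg u hu v hv
  let f : V → K := fun x => if x ∈ U then g x else 0
  have h1 := hY.min _ (h.dl_mem f) (fun e he => by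
    have := h.same e he
    by_cases h1 : a e ∈ U
    · have h2 := this.1 h1
      simp only [dl, f, if_pos h1, if_pos h2, hg e trivial h1 h2, k_self]
    · have h2 : b e ∉ U := fun h => h1 (this.2 h)
      simp only [dl, f, if_neg h1, if_neg h2, k_self])
  have hfu : f u = g u := by simp [f, hu]
  have hfv : f v = g v := by simp [f, hv]
  rw [← hfu, ← hfv]
  rcases h1 with h1 | h1
  · exact h.conn f (fun e => k_eq (congrFun h1 e)) u v
  · have hYe : ∀ e, Y e = dl a b (ind U) e := by
      intro e
      by_cases he : Y e = 0
      · rw [dl, he, ind_eq_iff.2 (h.same e he), k_self]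
      · rw [dl, k_one he, ind_of_mem (h.out e he).1, ind_of_notMem (h.out e he).2, add_zero]
    have := h.conn (f + ind U) (fun e => by
      have h2 := congrFun h1 e
      rw [hYe e] at h2
      simp only [dl] at h2
      simp only [Pi.add_apply]; grind) u v
    simpa [ind_of_mem hu, ind_of_mem hv] using this

lemma ORep.conn_right (h : ORep R Y a b U) (hY : IsCoc R Y) : Conn a b univ Uᶜ :=
  (h.swap.conn_left hY).swap

/-- A vertex function supported in `U` and constant along the edges of `U` outside `X` gives a
vector of the local space of `X`. -/
lemma ORep.dl_mem_loc (h : ORep R Y a b U) {X : Set α} {f : V → K} (h0 : ∀ v ∉ U, f v = 0)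
    (hf : ∀ e, e ∉ X → a e ∈ U → b e ∈ U → f (a e) = f (b e)) : dl a b f ∈ loc R Y X := by
  refine mem_loc.2 ⟨h.dl_mem f, fun e he hY => ?_⟩
  have := h.same e hY
  by_cases h1 : a e ∈ U
  · rw [dl, hf e he h1 (this.1 h1), k_self]
  · rw [dl, h0 _ h1, h0 _ (fun h => h1 (this.2 h)), k_self]

/-- A bridge lies on one side of the cut. -/
lemma ORep.bridge_side (h : ORep R Y a b U) {B : Set α} (hB : Bridge R Y B) :
    (∀ e ∈ B, a e ∈ U ∧ b e ∈ U) ∨ ∀ e ∈ B, b e ∈ Uᶜ ∧ a e ∈ Uᶜ := by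
  classical
  by_cases hne : ∃ e ∈ B, a e ∈ U
  · left
    have hs : Sep R Y {e | a e ∈ U ∧ b e ∈ U} := by
      intro w hw
      obtain ⟨f, rfl⟩ := (h.mem w).1 hw
      refine ⟨_, h.dl_mem_loc (f := fun v => if v ∈ U then f v else 0) (fun v hv => by simp [hv])
        (fun e he h1 h2 => absurd ⟨h1, h2⟩ he), fun e he => ?_⟩
      simp [dl, he.1, he.2]
    obtain ⟨e, he, heU⟩ := hne
    exact hB.subset_of_sep hs ⟨e, he, heU, (h.same e (hB.zero e he)).1 heU⟩
  · right
    push Not at hne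
    exact fun e he => ⟨fun h' => hne e he ((h.same e (hB.zero e he)).2 h'), hne e he⟩

end orep
end Core

section Core
variable {α : Type*} {V : Type}

/-! ### The graph of a single bridge -/

/-- A graph of a bridge `B` of `Y`: the edges of `B` live on the vertex set `V`, and the
elements of `Y` join `V` to one further vertex, `s y` being the end of `y` in `V`. -/
structure Hub (R : Submodule K (α → K)) (Y : α → K) (B : Set α) (a b s : α → V) : Prop where
  mem : ∀ w, w ∈ loc R Y B ↔ ∃ (f : V → K) (c : K), (∀ e ∈ B, w e = f (a e) + f (b e)) ∧
    (∀ y, Y y ≠ 0 → w y = f (s y) + c) ∧ ∀ e, e ∉ B → Y e = 0 → w e = 0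
  conn : Conn a b B univ

lemma ORep.exists_hub_aux [Finite V] {R : Submodule K (α → K)} {Y : α → K} {B : Set α}
    (hY : IsCoc R Y) (hB : Bridge R Y B) {a b : α → V} {U : Set V}
    (h : ORep (loc R Y B) Y a b U) (hU : ∀ e ∈ B, a e ∈ U ∧ b e ∈ U) :
    ∃ (V : Type) (_ : Finite V) (a b s : α → V), Hub R Y B a b s := by
  classical
  have hY0 : IsCoc (loc R Y B) Y := hY.of_le (ctr_le _ _) (hY.mem_loc B)
  have hloop : ∀ e, e ∉ B → Y e = 0 → ∀ f : V → K, f (a e) = f (b e) := fun e he hy f =>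
    k_eq ((mem_loc.1 (h.dl_mem f)).2 e he hy)
  have hcon : ∀ (f : V → K), ∀ u ∉ U, ∀ v ∉ U, f u = f v := by
    intro f
    refine h.conn_right hY0 f fun e _ h1 h2 => ?_
    by_cases he : e ∈ B
    · exact absurd (hU e he).1 h1
    · refine hloop e he ?_ f
      by_contra hy; exact h1 (h.out e hy).1
  obtain ⟨e0, he0⟩ := hB.ne
  let z : U := ⟨a e0, (hU e0 he0).1⟩
  let p : V → U := fun v => if hv : v ∈ U then ⟨v, hv⟩ else z
  have hp : ∀ v ∈ U, (p v).1 = v := fun v hv => by simp [p, hv]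
  have hp' : ∀ v : U, p v.1 = v := fun v => by simp [p]
  refine ⟨U, inferInstance, p ∘ a, p ∘ b, p ∘ a, ⟨fun w => ?_, ?_⟩⟩
  · constructor
    · intro hw
      obtain ⟨f, rfl⟩ := (h.mem w).1 hw
      obtain ⟨y, hy⟩ := hY.exists_ne
      refine ⟨fun v => f v.1, f (b y), fun e he => ?_, fun y' hy' => ?_, fun e he hy => ?_⟩
      · simp [dl, hp _ (hU e he).1, hp _ (hU e he).2]
      · simp [dl, hp _ (h.out y' hy').1, hcon f _ (h.out y hy).2 _ (h.out y' hy').2]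
      · exact (mem_loc.1 hw).2 e he hy
    · rintro ⟨f, c, h1, h2, h3⟩
      refine (h.mem w).2 ⟨fun v => if hv : v ∈ U then f ⟨v, hv⟩ else c, funext fun e => ?_⟩
      by_cases hy : Y e = 0
      · by_cases he : e ∈ B
        · simp [dl, h1 e he, p, (hU e he).1, (hU e he).2]
        · have h4 := hloop e he hy (fun v => if hv : v ∈ U then f ⟨v, hv⟩ else c)
          rw [h3 e he hy]
          exact ((congrArg (· + _) h4).trans (k_self _)).symm
      · simp [dl, h2 e hy, (h.out e hy).1, (h.out e hy).2, p]
  · intro f hf u _ v _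
    have := h.conn_left hY0 (fun x => f (p x)) (fun e _ h1 h2 => by
      by_cases he : e ∈ B
      · exact hf e he trivial trivial
      · refine hloop e he ?_ (fun x => f (p x))
        by_contra hy; exact (h.out e hy).2 h2) u u.2 v v.2
    simpa [hp'] using this

section hub
variable {R : Submodule K (α → K)} {Y : α → K} {B : Set α}

lemma exists_hub (hY : IsCoc R Y) (hB : Bridge R Y B) (hg : Graphic (loc R Y B)) :
    ∃ (V : Type) (_ : Finite V) (a b s : α → V), Hub R Y B a b s := by
  obtain ⟨V, _, a, b, h⟩ := hg.exists_gRep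
  obtain ⟨a, b, U, h⟩ := h.exists_oRep (hY.mem_loc B)
  have hloc : loc R Y B ≤ loc R Y B := le_rfl
  rcases h.bridge_side (hB.of_le (ctr_le _ _) hloc) with h1 | h1
  · exact h.exists_hub_aux hY hB h1
  · exact h.swap.exists_hub_aux hY hB h1

variable {a b s : α → V}

open Classical in
/-- The vector of the local space given by a vertex function on the graph of a bridge. -/
noncomputable def hv (Y : α → K) (B : Set α) (a b s : α → V) (f : V → K) : α → K := fun e =>
  if e ∈ B then f (a e) + f (b e) else if Y e = 0 then 0 else f (s e)

lemma hv_B {f : V → K} {e : α} (he : e ∈ B) : hv Y B a b s f e = f (a e) + f (b e) := by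
  simp [hv, he]

lemma hv_Y {f : V → K} (hB : Bridge R Y B) {y : α} (hy : Y y ≠ 0) :
    hv Y B a b s f y = f (s y) := by
  have : y ∉ B := fun h => hy (hB.zero y h)
  simp [hv, this, hy]

lemma hv_else {f : V → K} {e : α} (he : e ∉ B) (hy : Y e = 0) : hv Y B a b s f e = 0 := by
  simp [hv, he, hy]

lemma Hub.hv_mem (h : Hub R Y B a b s) (hB : Bridge R Y B) (f : V → K) :
    hv Y B a b s f ∈ loc R Y B :=
  (h.mem _).2 ⟨f, 0, fun e he => hv_B he, fun y hy => by rw [hv_Y hB hy, add_zero],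
    fun e he hy => hv_else he hy⟩

/-- The extra constant can be absorbed into the vertex function. -/
lemma Hub.exists_hv (h : Hub R Y B a b s) (hB : Bridge R Y B) {w : α → K}
    (hw : w ∈ loc R Y B) : ∃ f, w = hv Y B a b s f := by
  obtain ⟨f, c, h1, h2, h3⟩ := (h.mem w).1 hw
  refine ⟨fun v => f v + c, funext fun e => ?_⟩
  by_cases he : e ∈ B
  · rw [hv_B he, h1 e he]; grind
  · by_cases hy : Y e = 0
    · rw [hv_else he hy, h3 e he hy]
    · rw [hv_Y hB hy, h2 e hy]

lemma Hub.eqv_iff (h : Hub R Y B a b s) (hB : Bridge R Y B) {y y' : α} (hy : Y y ≠ 0)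
    (hy' : Y y' ≠ 0) : eqv R Y B y y' ↔ s y = s y' := by
  constructor
  · intro he
    have := he _ (h.hv_mem hB (ind {s y}))
    rw [hv_Y hB hy, hv_Y hB hy', ind_eq_iff] at this
    exact (this.1 rfl).symm
  · intro he w hw
    obtain ⟨f, rfl⟩ := h.exists_hv hB hw
    rw [hv_Y hB hy, hv_Y hB hy', he]

lemma Hub.ne_of_mem (h : Hub R Y B a b s) (hB : Bridge R Y B) {e : α} (he : e ∈ B) :
    a e ≠ b e := by
  intro hab
  obtain ⟨w, hw, hwe⟩ := hB.nl e he
  obtain ⟨w', hw', h'⟩ := hB.sep w hw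
  obtain ⟨f, rfl⟩ := h.exists_hv hB hw'
  apply hwe
  rw [← h' e he, hv_B he, hab, k_self]

/-- The graph of a bridge has no cut vertex. -/
lemma Hub.conn_compl (h : Hub R Y B a b s) (hB : Bridge R Y B) (q : V) :
    Conn a b B {q}ᶜ := by
  classical
  have main : ∀ f : V → K, (∀ e ∈ B, a e ≠ q → b e ≠ q → f (a e) = f (b e)) →
      ∀ u, u ≠ q → f u = 1 → ∀ v, v ≠ q → f v = 0 → False := by
    intro f hf u hu hfu v hv' hfv
    let W : Set V := {x | x ≠ q ∧ f x = 1}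
    have huW : u ∈ W := ⟨hu, hfu⟩
    let X : Set α := {e ∈ B | a e ∈ W ∨ b e ∈ W}
    have hs : Sep R Y X := by
      intro w hw
      obtain ⟨w1, hw1, h1⟩ := hB.sep w hw
      obtain ⟨g, rfl⟩ := h.exists_hv hB hw1
      have hX : ∀ e ∈ B, hv Y B a b s (fun x => if x ∈ W then g x + g q else 0) e =
          if a e ∈ W ∨ b e ∈ W then g (a e) + g (b e) else 0 := by
        intro e he
        rw [hv_B he]
        have := hf e he
        have ka := k01 (f (a e)); have kb := k01 (f (b e))
        by_cases h1 : a e ∈ W <;> by_cases h2 : b e ∈ W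
        · simp only [h1, h2, if_true, or_true]; grind
        · have : b e = q := by
            simp only [W, mem_ofPred_eq] at h1 h2
            grind
          simp only [h1, h2, if_true, true_or, if_false, this]; grind
        · have : a e = q := by
            simp only [W, mem_ofPred_eq] at h1 h2
            grind
          simp only [h1, h2, if_true, or_true, if_false, this]; grind
        · simp [h1, h2]
      refine ⟨hv Y B a b s (fun x => if x ∈ W then g x + g q else 0), mem_loc.2
        ⟨(mem_loc.1 (h.hv_mem hB _)).1, fun e he hy => ?_⟩, fun e he => ?_⟩
      · by_cases heB : e ∈ B
        · rw [hX e heB, if_neg fun h' => he ⟨heB, h'⟩]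
        · exact hv_else heB hy
      · rw [hX e he.1, if_pos he.2, ← h1 e he.1, hv_B he.1]
    have hXB : X = B := by
      refine hB.min X (fun e he => he.1) ?_ hs
      obtain ⟨p, hp, r, hr, e, he, h'⟩ := h.conn.exists_adj (S := W) (u := u) (v := v) trivial
        trivial huW (fun h' => by simp [W, hfv] at h')
      refine ⟨e, he, ?_⟩
      rcases h' with ⟨rfl, -⟩ | ⟨-, rfl⟩
      exacts [.inl hp.1, .inr hp.1]
    obtain ⟨p, hp, r, hr, e, he, h'⟩ := h.conn.exists_adj (S := {x | x ≠ q ∧ f x = 0}) (u := v)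
      (v := u) trivial trivial ⟨hv', hfv⟩ (fun h' => by simp [hfu] at h')
    have h2 : e ∈ X := hXB ▸ he
    obtain ⟨-, h2⟩ := h2
    have h3 := hf e he
    have h4 := hp.1
    simp only [W, mem_ofPred_eq] at h2 h4
    grind
  intro f hf u hu v hv'
  have h1 := main f (fun e he h1 h2 => hf e he h1 h2)
  rcases k01 (f u) with h2 | h2 <;> rcases k01 (f v) with h3 | h3
  · rw [h2, h3]
  · exact (h1 v hv' h3 u hu h2).elim
  · exact (h1 u hu h2 v hv' h3).elim
  · rw [h2, h3]

/-! ### Reinserting a bridge -/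

/-- If the vertex set on one side of the cut of `R / B` has a vertex `z` such that the
attachments of `B` factor through the components of `U - z`, then `B` can be inserted at `z`. -/
lemma insert_bridge {V' : Type} [Finite V] [Finite V'] (hB : Bridge R Y B)
    (h : Hub R Y B a b s) {c d : α → V'} {U : Set V'}
    (hR : ORep (ctr R B) Y c d U) {z : V'} (hz : z ∈ U) (φ : V' → V)
    (h1 : ∀ e, c e ∈ U → d e ∈ U → c e ≠ z → d e ≠ z → φ (c e) = φ (d e))
    (h2 : ∀ y, Y y ≠ 0 → c y ≠ z → s y = φ (c y)) : Graphic R := by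
  classical
  let a' : α → V' ⊕ V := fun e => if e ∈ B then .inr (a e) else if c e = z then
    (if Y e ≠ 0 then .inr (s e) else if d e = z then .inl z else .inr (φ (d e))) else .inl (c e)
  let b' : α → V' ⊕ V := fun e => if e ∈ B then .inr (b e) else if d e = z then
    (if c e = z then .inl z else .inr (φ (c e))) else .inl (d e)
  have key : ∀ (F : V' ⊕ V → K) (f : V' → K), f z = 0 →
      (∀ u, u ≠ z → F (.inl u) = f u + if u ∈ U then F (.inr (φ u)) else 0) →
      dl a' b' F = dl c d f + hv Y B a b s (F ∘ .inr) := by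
    intro F f hfz hF
    funext e
    rw [Pi.add_apply]
    by_cases he : e ∈ B
    · have h3 := (hR.dl_mem f).2 e he
      rw [h3, hv_B he]
      simp [dl, a', b', he]
    by_cases hy : Y e = 0
    · rw [hv_else he hy, add_zero]
      have hs := hR.same e hy
      have hh := h1 e
      by_cases hc : c e = z <;> by_cases hd : d e = z
      · simp [dl, a', b', he, hc, hd, hy, k_self]
      · have hdU : d e ∈ U := hs.1 (hc ▸ hz)
        simp only [dl, a', b', if_neg he, if_pos hc, if_neg hd, hy, ne_eq, not_true, if_false,
          hF _ hd, if_pos hdU, hc, hfz]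
        grind
      · have hcU : c e ∈ U := hs.2 (hd ▸ hz)
        simp only [dl, a', b', if_neg he, if_pos hd, if_neg hc,
          hF _ hc, if_pos hcU, hd, hfz]
        grind
      · simp only [dl, a', b', if_neg he, if_neg hc, if_neg hd, hF _ hc, hF _ hd]
        by_cases hcU : c e ∈ U
        · have hdU := hs.1 hcU
          rw [if_pos hcU, if_pos hdU, hh hcU hdU hc hd]; grind
        · have hdU : d e ∉ U := fun h => hcU (hs.2 h)
          rw [if_neg hcU, if_neg hdU]; grind
    · rw [hv_Y hB hy]
      have ho := hR.out e hy
      have hd : d e ≠ z := fun h => ho.2 (h ▸ hz)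
      have hh := h2 e hy
      by_cases hc : c e = z
      · simp only [dl, a', b', if_neg he, if_pos hc, if_neg hd, ne_eq, hy, not_false_eq_true,
          if_true, hF _ hd, if_neg ho.2, hc, hfz, Function.comp]
        grind
      · simp only [dl, a', b', if_neg he, if_neg hc, if_neg hd, hF _ hd, if_neg ho.2,
          hF _ hc, if_pos ho.1, Function.comp, hh hc]
        grind
  refine ⟨V' ⊕ V, inferInstance, a', b', fun w => ⟨fun hw => ?_, ?_⟩⟩
  · obtain ⟨w1, hw1, e1⟩ := hB.sep w hw
    obtain ⟨f, hf⟩ := (hR.mem (w + w1)).1 ⟨R.add_mem hw (mem_loc.1 hw1).1, fun e he => by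
      simp [e1 e he, k_self]⟩
    obtain ⟨g, rfl⟩ := h.exists_hv hB hw1
    refine ⟨Sum.elim (fun u => f u + f z + if u ∈ U then g (φ u) else 0) g, ?_⟩
    rw [key _ (fun u => f u + f z) (k_self _) (fun u _ => rfl), Sum.elim_comp_inr]
    have : dl c d (fun u => f u + f z) = dl c d f := by funext e; simp only [dl]; grind
    rw [this, ← hf]
    funext e; simp only [Pi.add_apply]; grind
  · rintro ⟨F, rfl⟩
    rw [key F (fun u => if u = z then 0 else F (.inl u) + if u ∈ U then F (.inr (φ u)) else 0)
      (by simp) (fun u hu => by simp only [if_neg hu]; grind)]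
    exact R.add_mem (hR.dl_mem _).1 (mem_loc.1 (h.hv_mem hB _)).1

end hub
end Core

section Core
variable {α : Type*} {V : Type}

/-! ### Bridges on one side of a cut -/

/-- The end-vertices of the edges in `C`. -/
def ends (a b : α → V) (C : Set α) : Set V := {v | ∃ e ∈ C, v = a e ∨ v = b e}

section side
variable {R : Submodule K (α → K)} {Y : α → K} {a b : α → V} {U : Set V} {C : Set α}

lemma GRep.ne_of_nl (h : GRep R a b) {e : α} (he : e ∈ NL R) : a e ≠ b e := by
  intro hab
  obtain ⟨w, hw, hwe⟩ := he
  obtain ⟨f, rfl⟩ := (h.mem w).1 hw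
  exact hwe (by rw [dl, hab, k_self])

lemma GRep.nl_of_ne (h : GRep R a b) {e : α} (he : a e ≠ b e) : e ∈ NL R :=
  ⟨_, h.dl_mem (ind {a e}), by
    rw [dl, ind_of_mem (mem_singleton _),
      ind_of_notMem (fun h => he (mem_singleton_iff.1 h).symm)]; simp⟩

lemma ORep.zero_of_mem (h : ORep R Y a b U) {e : α} (he : b e ∈ U) : Y e = 0 := by
  by_contra hy; exact (h.out e hy).2 he

/-- The edges of a bridge form a connected graph. -/
lemma ORep.bridge_conn (h : ORep R Y a b U) (hC : Bridge R Y C) {f : V → K}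
    (hf : ∀ e ∈ C, f (a e) = f (b e)) : ∀ u ∈ ends a b C, ∀ v ∈ ends a b C, f u = f v := by
  classical
  have hs : ∀ t : K, Sep R Y {e ∈ C | f (a e) = t} := by
    intro t w hw
    obtain ⟨g, rfl⟩ := (h.mem w).1 hw
    obtain ⟨w', hw', h'⟩ := hC.sep _ (h.dl_mem (fun v => if f v = t then g v else 0))
    refine ⟨w', mem_loc.2 ⟨(mem_loc.1 hw').1, fun e he hy => ?_⟩, fun e he => ?_⟩
    · by_cases heC : e ∈ C
      · have h1 : f (a e) ≠ t := fun h => he ⟨heC, h⟩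
        rw [h' e heC]; simp [dl, ← hf e heC, h1]
      · exact (mem_loc.1 hw').2 e heC hy
    · rw [h' e he.1, dl, ← hf e he.1, if_pos he.2, if_pos he.2, dl]
  have key : ∀ e ∈ C, ∀ e' ∈ C, f (a e) = f (a e') := by
    intro e he e' he'
    have := hC.min {x ∈ C | f (a x) = f (a e')} (fun x hx => hx.1) ⟨e', he', rfl⟩ (hs _)
    rw [← this] at he
    exact he.2
  have key2 : ∀ u ∈ ends a b C, ∃ e ∈ C, f u = f (a e) := by
    rintro u ⟨e, he, rfl | rfl⟩
    exacts [⟨e, he, rfl⟩, ⟨e, he, (hf e he).symm⟩]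
  intro u hu v hv
  obtain ⟨e, he, h1⟩ := key2 u hu
  obtain ⟨e', he', h2⟩ := key2 v hv
  exact h1.trans ((key e he e' he').trans h2.symm)

/-- Distinct attachments of a bridge are not joined outside the bridge within the side. -/
lemma ORep.ends_unique (h : ORep R Y a b U) (hC : Bridge R Y C) {u v : V}
    (hu : u ∈ ends a b C) (hv : v ∈ ends a b C) (huv : v ∈ comp a b Cᶜ U u) : u = v := by
  obtain ⟨w', hw', h'⟩ := hC.sep _ (h.dl_mem (ind {u}))
  obtain ⟨f, rfl⟩ := (h.mem w').1 (mem_loc.1 hw').1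
  have h1 : f u = f v := huv.2 f fun e he h1 h2 =>
    k_eq ((mem_loc.1 hw').2 e he (h.zero_of_mem h2))
  have h2 := h.bridge_conn hC (f := f + ind {u}) (fun e he => by
    have := h' e he
    simp only [dl] at this
    simp only [Pi.add_apply]; grind) u hu v hv
  simp only [Pi.add_apply, h1, add_right_inj, ind_eq_iff] at h2
  exact (h2.1 rfl).symm

lemma ORep.exists_end (h : ORep R Y a b U) (hY : IsCoc R Y) (hC : Bridge R Y C)
    (hU : ∀ e ∈ C, a e ∈ U ∧ b e ∈ U) {u : V} (hu : u ∈ U) :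
    ∃ n ∈ ends a b C, n ∈ comp a b Cᶜ U u := by
  obtain ⟨e, he⟩ := hC.ne
  by_cases h1 : a e ∈ comp a b Cᶜ U u
  · exact ⟨a e, ⟨e, he, .inl rfl⟩, h1⟩
  obtain ⟨p, hp, q, hq, e', -, h'⟩ := (h.conn_left hY).exists_adj hu (hU e he).1
    (mem_comp_self hu) h1
  by_cases he' : e' ∈ C
  · refine ⟨p, ⟨e', he', ?_⟩, hp.1⟩
    rcases h' with ⟨rfl, -⟩ | ⟨-, rfl⟩
    exacts [.inl rfl, .inr rfl]
  · exfalso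
    rcases h' with ⟨rfl, rfl⟩ | ⟨rfl, rfl⟩
    · exact hq.2 ((comp_closed (F := Cᶜ) he' hp.2 hq.1).1 hp.1)
    · exact hq.2 ((comp_closed (F := Cᶜ) he' hq.1 hp.2).2 hp.1)

lemma ORep.eqv_of_comp (h : ORep R Y a b U) (hY : IsCoc R Y)
    (hU : ∀ e ∈ C, a e ∈ U ∧ b e ∈ U) {y y' : α} (hy : Y y ≠ 0) (hy' : Y y' ≠ 0) {u : V}
    (h1 : a y ∈ comp a b Cᶜ U u) (h2 : a y' ∈ comp a b Cᶜ U u) : eqv R Y C y y' := by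
  intro w hw
  rw [mem_loc] at hw
  obtain ⟨f, rfl⟩ := (h.mem w).1 hw.1
  have hf : ∀ e ∈ Cᶜ, a e ∈ U → b e ∈ U → f (a e) = f (b e) := fun e he _ h2 =>
    k_eq (hw.2 e he (h.zero_of_mem h2))
  have h3 : f (a y) = f (a y') := (h1.2 f hf).symm.trans (h2.2 f hf)
  have h4 : f (b y) = f (b y') := by
    refine h.conn_right hY f (fun e _ h1 h2 => ?_) _ (h.out y hy).2 _ (h.out y' hy').2
    refine k_eq (hw.2 e (fun he => h1 (hU e he).1) ?_)
    by_contra hc; exact h1 (h.out e hc).1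
  rw [dl, dl, h3, h4]

lemma ORep.comp_of_eqv (h : ORep R Y a b U) {y y' : α} (hy : Y y ≠ 0) (hy' : Y y' ≠ 0)
    (he : eqv R Y C y y') {u : V} (h1 : a y ∈ comp a b Cᶜ U u) : a y' ∈ comp a b Cᶜ U u := by
  have := he _ (h.dl_mem_loc (X := C) (f := ind (comp a b Cᶜ U u))
    (fun v hv => ind_of_notMem fun h => hv h.1)
    (fun e he h1 h2 => ind_eq_iff.2 (comp_closed (F := Cᶜ) he h1 h2)))
  rw [dl, dl, ind_of_notMem (v := b y) (fun h' => (h.out y hy).2 h'.1),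
    ind_of_notMem (v := b y') (fun h' => (h.out y' hy').2 h'.1), add_zero, add_zero,
    ind_eq_iff] at this
  exact this.1 h1

/-- Two bridges on the same side avoid each other. -/
lemma ORep.avoid (h : ORep R Y a b U) (hY : IsCoc R Y) {C' : Set α} (hC : Bridge R Y C)
    (hC' : Bridge R Y C') (hne : C ≠ C') (hU : ∀ e ∈ C, a e ∈ U ∧ b e ∈ U)
    (hU' : ∀ e ∈ C', a e ∈ U ∧ b e ∈ U) : Avoid R Y C C' := by
  classical
  have hd := hC.disjoint hC' hne
  have aux : ∀ {C C' : Set α}, Bridge R Y C' → (∀ e ∈ C, e ∉ C') →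
      (∀ e ∈ C', a e ∈ U ∧ b e ∈ U) → ∃ n ∈ U, ends a b C' ⊆ comp a b Cᶜ U n := by
    intro C C' hC' hd hU'
    obtain ⟨e, he⟩ := hC'.ne
    refine ⟨a e, (hU' e he).1, fun v hv => ⟨?_, fun f hf => ?_⟩⟩
    · obtain ⟨e', he', rfl | rfl⟩ := hv
      exacts [(hU' e' he').1, (hU' e' he').2]
    · exact h.bridge_conn hC' (fun e he => hf e (fun h => hd e h he) (hU' e he).1 (hU' e he).2)
        _ ⟨e, he, .inl rfl⟩ _ hv
  obtain ⟨n2, hn2, h2⟩ := aux hC' hd hU'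
  obtain ⟨n1, hn1, h1⟩ := aux hC (fun e he h => hd e h he) hU
  set κ := comp a b Cᶜ U n2 with hκ
  set κ' := comp a b C'ᶜ U n1 with hκ'
  have hcov : ∀ v ∈ U, v ∈ κ ∪ κ' := by
    intro v hv
    by_contra hc
    obtain ⟨p, hp, q, hq, e, -, h'⟩ := (h.conn_left hY).exists_adj (S := κ ∪ κ') hn2 hv
      (.inl (mem_comp_self hn2)) hc
    have hab : a e ∈ U ∧ b e ∈ U := by
      rcases h' with ⟨rfl, rfl⟩ | ⟨rfl, rfl⟩
      exacts [⟨hp.2, hq.1⟩, ⟨hq.1, hp.2⟩]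
    have hq1 : e ∈ C → q ∈ κ' := fun he => h1 ⟨e, he, by grind⟩
    have hq2 : e ∈ C' → q ∈ κ := fun he => h2 ⟨e, he, by grind⟩
    have hc1 : e ∉ C → (a e ∈ κ ↔ b e ∈ κ) := fun he => comp_closed (F := Cᶜ) he hab.1 hab.2
    have hc2 : e ∉ C' → (a e ∈ κ' ↔ b e ∈ κ') := fun he => comp_closed (F := C'ᶜ) he hab.1 hab.2
    have hq3 : q ∉ κ := fun h => hq.2 (.inl h)
    have hq4 : q ∉ κ' := fun h => hq.2 (.inr h)
    rcases hp.1 with hp | hp <;> grind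
  obtain ⟨y0, hy0⟩ := hY.exists_ne
  have pick : ∀ S : Set V, ∃ y1, Y y1 ≠ 0 ∧ ∀ y, Y y ≠ 0 → a y ∈ S → a y1 ∈ S := by
    intro S
    by_cases hS : ∃ y, Y y ≠ 0 ∧ a y ∈ S
    · obtain ⟨y, hy, hyS⟩ := hS
      exact ⟨y, hy, fun _ _ _ => hyS⟩
    · push Not at hS
      exact ⟨y0, hy0, fun y hy hyS => absurd hyS (hS y hy)⟩
  obtain ⟨y1, hy1, p1⟩ := pick κ
  obtain ⟨y2, hy2, p2⟩ := pick κ'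
  refine ⟨y1, y2, hy1, hy2, fun y hy => ?_⟩
  rcases hcov (a y) (h.out y hy).1 with hk | hk
  · exact .inl (h.eqv_of_comp hY hU hy hy1 hk (p1 y hy hk))
  · exact .inr (h.eqv_of_comp hY hU' hy hy2 hk (p2 y hy hk))

/-- A cut of a graph cannot have three pairwise overlapping bridges. -/
lemma Graphic.not_three (hR : Graphic R) (hY : IsCoc R Y) {B1 B2 B3 : Set α}
    (h1 : Bridge R Y B1) (h2 : Bridge R Y B2) (h3 : Bridge R Y B3) (h12 : B1 ≠ B2)
    (h13 : B1 ≠ B3) (h23 : B2 ≠ B3) (o12 : ¬ Avoid R Y B1 B2) (o13 : ¬ Avoid R Y B1 B3)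
    (o23 : ¬ Avoid R Y B2 B3) : False := by
  obtain ⟨V, _, a, b, h⟩ := hR.exists_gRep
  obtain ⟨a, b, U, h⟩ := h.exists_oRep hY.mem
  have h' := h.swap
  rcases h.bridge_side h1 with s1 | s1 <;> rcases h.bridge_side h2 with s2 | s2 <;>
    rcases h.bridge_side h3 with s3 | s3
  · exact o12 (h.avoid hY h1 h2 h12 s1 s2)
  · exact o12 (h.avoid hY h1 h2 h12 s1 s2)
  · exact o13 (h.avoid hY h1 h3 h13 s1 s3)
  · exact o23 (h'.avoid hY h2 h3 h23 s2 s3)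
  · exact o23 (h.avoid hY h2 h3 h23 s2 s3)
  · exact o13 (h'.avoid hY h1 h3 h13 s1 s3)
  · exact o12 (h'.avoid hY h1 h2 h12 s1 s2)
  · exact o12 (h'.avoid hY h1 h2 h12 s1 s2)

/-- `D` is a component of `U - z` containing ends of two elements of `Y` with different labels. -/
structure Bad (Y : α → K) (a b : α → V) (U : Set V) {S : Type*} (s : α → S) (z : V) (D : Set V) :
    Prop where
  sub : D ⊆ U
  nz : z ∉ D
  conn : Conn a b univ D
  closed : ∀ e, a e ∈ U → b e ∈ U → a e ≠ z → b e ≠ z → (a e ∈ D ↔ b e ∈ D)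
  diff : ∃ y x, Y y ≠ 0 ∧ Y x ≠ 0 ∧ a y ∈ D ∧ a x ∈ D ∧ s y ≠ s x

/-- If no vertex of the side `U` admits an insertion for the labelling `s`, then some bridge on
the side `U` overlaps the labelling. -/
lemma ORep.exists_overlap [Finite α] [Finite V] (h : ORep R Y a b U) (hY : IsCoc R Y)
    {S : Type*} (s : α → S) (hU : U.Nonempty) (hbad : ∀ z ∈ U, ∃ D, Bad Y a b U s z D) :
    ∃ C, Bridge R Y C ∧ (∀ e ∈ C, a e ∈ U ∧ b e ∈ U) ∧
      ∀ y1 y2, Y y1 ≠ 0 → Y y2 ≠ 0 → ∃ y, Y y ≠ 0 ∧ s y ≠ s y1 ∧ ¬ eqv R Y C y y2 := by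
  classical
  obtain ⟨⟨z, D⟩, ⟨hz, hD⟩, hmin⟩ := exists_min
    (fun x : V × Set V => x.1 ∈ U ∧ Bad Y a b U s x.1 x.2) (fun x => x.2.ncard) (by
      obtain ⟨z, hz⟩ := hU
      obtain ⟨D, hD⟩ := hbad z hz
      exact ⟨(z, D), hz, hD⟩)
  simp only at hz hD hmin
  have hcU := h.conn_left hY
  -- every component `D` of `U - z` is attached to `z`
  have hattach : ∀ {z D}, z ∈ U → Bad Y a b U s z D →
      ∃ e, (a e = z ∧ b e ∈ D) ∨ (a e ∈ D ∧ b e = z) := by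
    intro z D hz hD
    obtain ⟨y, y', -, -, hyD, -⟩ := hD.diff
    obtain ⟨p, hp, q, hq, e, -, h'⟩ := hcU.exists_adj (S := D) (hD.sub hyD) hz hyD hD.nz
    have hc := hD.closed e
    have hpz : p ≠ z := fun h => hD.nz (h ▸ hp.1)
    have h1 := hp.1; have h2 := hp.2; have h3 := hq.1; have h4 := hq.2
    exact ⟨e, by grind⟩
  -- the edges inside `D ∪ {z}` form a separator
  have hsep : ∀ {z D}, z ∈ U → Bad Y a b U s z D →
      Sep R Y {e | a e ∈ insert z D ∧ b e ∈ insert z D} := by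
    intro z D hz hD w hw
    obtain ⟨f, rfl⟩ := (h.mem w).1 hw
    refine ⟨_, h.dl_mem_loc (f := fun v => if v ∈ D then f v + f z else 0)
      (fun v hv => if_neg fun h => hv (hD.sub h)) (fun e he h1 h2 => ?_), fun e he => ?_⟩
    · have h3 := hD.closed e h1 h2
      have : a e ∉ D ∧ b e ∉ D := by
        simp only [mem_insert_iff, mem_ofPred_eq] at he
        have := hD.nz
        grind
      simp [this.1, this.2]
    · have h3 := hD.nz
      rcases he with ⟨h1 | h1, h2 | h2⟩
      · simp only [dl, h1, h2, k_self]
      · simp only [dl, h1, if_pos h2, if_neg h3]; grind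
      · simp only [dl, h2, if_pos h1, if_neg h3]; grind
      · simp only [dl, if_pos h1, if_pos h2]; grind
  obtain ⟨e0, he0⟩ := hattach hz hD
  have he0U : a e0 ∈ U ∧ b e0 ∈ U := by
    rcases he0 with ⟨rfl, h2⟩ | ⟨h1, rfl⟩
    exacts [⟨hz, hD.sub h2⟩, ⟨hD.sub h1, hz⟩]
  have he0ne : a e0 ≠ b e0 := by
    have := hD.nz
    rcases he0 with ⟨h1, h2⟩ | ⟨h1, h2⟩
    · rw [h1]; exact fun h => this (h ▸ h2)
    · rw [h2]; exact fun h => this (h ▸ h1)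
  obtain ⟨C, hC, heC⟩ := exists_bridge (R := R) (Y := Y) (h.nl_of_ne he0ne)
    (h.zero_of_mem he0U.2)
  have hCU : ∀ e ∈ C, a e ∈ U ∧ b e ∈ U := by
    rcases h.bridge_side hC with h1 | h1
    · exact h1
    · exact absurd he0U.1 (h1 e0 heC).2
  have hCD : ∀ e ∈ C, a e ∈ insert z D ∧ b e ∈ insert z D :=
    hC.subset_of_sep (hsep hz hD) ⟨e0, heC, by
      rcases he0 with ⟨h1, h2⟩ | ⟨h1, h2⟩
      exacts [⟨.inl h1, .inr h2⟩, ⟨.inr h1, .inl h2⟩]⟩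
  have hall : ∀ n ∈ ends a b C, ∃ D', Bad Y a b U s n D' ∧
      ∀ e ∈ C, a e ∈ insert n D' ∧ b e ∈ insert n D' := by
    intro n hn
    have hnD : n ∈ insert z D := by
      obtain ⟨e, he, rfl | rfl⟩ := hn
      exacts [(hCD e he).1, (hCD e he).2]
    rcases hnD with rfl | hnD
    · exact ⟨D, hD, hCD⟩
    have hnU := hD.sub hnD
    obtain ⟨D', hD'⟩ := hbad n hnU
    have hzn : z ≠ n := fun h => hD.nz (h ▸ hnD)
    have hzD' : z ∈ D' := by
      by_contra hzD'
      obtain ⟨e, he⟩ := hattach hnU hD'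
      have hsub : insert n D' ⊆ D := by
        have hconn : Conn a b univ (insert n D') := by
          rcases he with ⟨h1, h2⟩ | ⟨h1, h2⟩
          · exact hD'.conn.insert h2 ⟨e, trivial, .inr ⟨h1, rfl⟩⟩
          · exact hD'.conn.insert h1 ⟨e, trivial, .inl ⟨rfl, h2⟩⟩
        have hin : ∀ v ∈ insert n D', v ∈ U ∧ v ≠ z := by
          rintro v (rfl | hv)
          exacts [⟨hnU, hzn.symm⟩, ⟨hD'.sub hv, fun h => hzD' (h ▸ hv)⟩]
        intro v hv
        have := hconn (ind D) (fun e _ h1 h2 => ind_eq_iff.2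
          (hD.closed e (hin _ h1).1 (hin _ h2).1 (hin _ h1).2 (hin _ h2).2)) n (.inl rfl) v hv
        exact (ind_eq_iff.1 this).1 hnD
      have h1 := hmin (n, D') ⟨hnU, hD'⟩
      have h2 := Set.ncard_le_ncard hsub (Set.toFinite D)
      rw [Set.ncard_insert_of_notMem hD'.nz (Set.toFinite D')] at h2
      simp only at h1
      omega
    refine ⟨D', hD', hC.subset_of_sep (hsep hnU hD') ⟨e0, heC, ?_⟩⟩
    have := hD'.closed e0 he0U.1 he0U.2
    change a e0 ∈ insert n D' ∧ b e0 ∈ insert n D'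
    clear hbad hattach hsep hmin
    rcases he0 with ⟨h1, h2⟩ | ⟨h1, h2⟩
    · have hza : a e0 ∈ D' := h1 ▸ hzD'
      by_cases hb : b e0 = n
      · exact ⟨.inr hza, .inl hb⟩
      · exact ⟨.inr hza, .inr ((this (h1 ▸ hzn) hb).1 hza)⟩
    · have hza : b e0 ∈ D' := h2 ▸ hzD'
      by_cases hb : a e0 = n
      · exact ⟨.inl hb, .inr hza⟩
      · exact ⟨.inr ((this hb (h2 ▸ hzn)).2 hza), .inr hza⟩
  refine ⟨C, hC, hCU, fun y1 y2 hy1 hy2 => ?_⟩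
  by_contra hcon
  push Not at hcon
  obtain ⟨n, hn, hnκ⟩ := h.exists_end hY hC hCU (h.out y2 hy2).1
  obtain ⟨D', hD', hCD'⟩ := hall n hn
  set κ := comp a b Cᶜ U (a y2) with hκ
  have hκn : comp a b Cᶜ U n = κ := comp_eq hnκ
  have huniq : ∀ v ∈ ends a b C, v ∈ κ → n = v := fun v hv hvκ =>
    h.ends_unique hC hn hv (hκn ▸ hvκ)
  have hdisj : ∀ v ∈ D', v ∉ κ := by
    intro v hvD hvκ
    by_cases hsub : D' ⊆ κ
    · have hsub' : insert n D' ⊆ κ := Set.insert_subset hnκ hsub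
      obtain ⟨h1, h2⟩ := hCD' e0 heC
      exact he0ne ((huniq _ ⟨e0, heC, .inl rfl⟩ (hsub' h1)).symm.trans
        (huniq _ ⟨e0, heC, .inr rfl⟩ (hsub' h2)))
    · obtain ⟨x, hx, hxκ⟩ := Set.not_subset.1 hsub
      obtain ⟨p, hp, q, hq, e, -, h'⟩ := hD'.conn.exists_adj (S := κ) hvD hx hvκ hxκ
      have hpU := hD'.sub hp.2
      have hqU := hD'.sub hq.1
      by_cases heC' : e ∈ C
      · have : n = p := huniq p ⟨e, heC', by grind⟩ hp.1
        exact hD'.nz (this ▸ hp.2)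
      · rcases h' with ⟨rfl, rfl⟩ | ⟨rfl, rfl⟩
        · exact hq.2 ((comp_closed (F := Cᶜ) heC' hpU hqU).1 hp.1)
        · exact hq.2 ((comp_closed (F := Cᶜ) heC' hqU hpU).2 hp.1)
  obtain ⟨y, y', hy, hy', hyD, hyD', hne⟩ := hD'.diff
  have key : ∀ y, Y y ≠ 0 → a y ∈ D' → s y = s y1 := by
    intro y hy hyD
    by_contra hs
    exact hdisj _ hyD (h.comp_of_eqv hy2 hy (hcon y hy hs).symm (mem_comp_self (h.out y2 hy2).1))
  exact hne ((key y hy hyD).trans (key y' hy' hyD').symm)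

end side
end Core

section Core
variable {α : Type*} {V : Type}

/-! ### Overlapping bridges -/

section overlap
variable {R : Submodule K (α → K)} {Y : α → K} {B : Set α}

lemma Hub.side_overlap [Finite α] [Finite V] {a b s : α → V} {V' : Type} [Finite V']
    (h : Hub R Y B a b s) (hg : ¬ Graphic R) (hY : IsCoc R Y) (hB : Bridge R Y B)
    {c d : α → V'} {U : Set V'} (hR : ORep (ctr R B) Y c d U) :
    ∃ C, Bridge R Y C ∧ (∀ e ∈ C, c e ∈ U ∧ d e ∈ U) ∧ B ≠ C ∧ ¬ Avoid R Y B C := by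
  classical
  have hY' : IsCoc (ctr R B) Y := hY.of_le (ctr_le _ _) ⟨hY.mem, hB.zero⟩
  obtain ⟨y0, hy0⟩ := hY.exists_ne
  have hbad : ∀ z ∈ U, ∃ D, Bad Y c d U s z D := by
    intro z hz
    by_contra hno
    push Not at hno
    let ψ : Set V' → V := fun S => if hS : ∃ y, Y y ≠ 0 ∧ c y ∈ S then s hS.choose else s y0
    have hψ : ∀ S : Set V', ∀ y, Y y ≠ 0 → c y ∈ S → ∃ y', Y y' ≠ 0 ∧ c y' ∈ S ∧ ψ S = s y' := by
      intro S y hy hyS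
      have hS : ∃ y, Y y ≠ 0 ∧ c y ∈ S := ⟨y, hy, hyS⟩
      exact ⟨hS.choose, hS.choose_spec.1, hS.choose_spec.2, by simp only [ψ, dif_pos hS]⟩
    refine hg (insert_bridge hB h hR hz (fun u => ψ (comp c d univ (U \ {z}) u)) ?_ ?_)
    · intro e h1 h2 h3 h4
      have := (comp_closed (a := c) (b := d) (F := univ) (U := U \ {z}) (u := c e) (e := e)
        trivial ⟨h1, h3⟩ ⟨h2, h4⟩).1 (mem_comp_self ⟨h1, h3⟩)
      simp only [comp_eq this]
    · intro y hy hyz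
      have hyU : c y ∈ U \ {z} := ⟨(hR.out y hy).1, hyz⟩
      obtain ⟨y', hy', hyS', he⟩ := hψ (comp c d univ (U \ {z}) (c y)) y hy (mem_comp_self hyU)
      simp only [he]
      by_contra hne
      exact hno (comp c d univ (U \ {z}) (c y)) ⟨fun v hv => hv.1.1, fun hv => hv.1.2 rfl,
        conn_comp, fun e h1 h2 h3 h4 => comp_closed trivial ⟨h1, h3⟩ ⟨h2, h4⟩,
        y, y', hy, hy', mem_comp_self hyU, hyS', hne⟩
  obtain ⟨C, hC, hCU, hov⟩ := hR.exists_overlap hY' s ⟨_, (hR.out y0 hy0).1⟩ hbad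
  obtain ⟨hC', hle, hd⟩ := hB.lift hC
  refine ⟨C, hC', hCU, ?_, ?_⟩
  · rintro rfl
    obtain ⟨e, he⟩ := hB.ne
    exact hd e he he
  · rintro ⟨y1, y2, h1, h2, hall⟩
    obtain ⟨y, hy, hs, hn⟩ := hov y1 y2 h1 h2
    rcases hall y hy with hyy | hyy
    · exact hs ((h.eqv_iff hB hy h1).1 hyy)
    · exact hn ((eqv_of_le (ctr_le _ _) hle).2 hyy)

/-- A bridge of a non-graphic space whose contraction is graphic overlaps two other bridges. -/
lemma Hub.two_overlap [Finite α] [Finite V] {a b s : α → V} (h : Hub R Y B a b s)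
    (hg : ¬ Graphic R) (hY : IsCoc R Y) (hB : Bridge R Y B) (hgB : Graphic (ctr R B)) :
    ∃ C C', Bridge R Y C ∧ Bridge R Y C' ∧ C ≠ C' ∧ B ≠ C ∧ B ≠ C' ∧ ¬ Avoid R Y B C ∧
      ¬ Avoid R Y B C' := by
  obtain ⟨V', _, c, d, hR⟩ := hgB.exists_gRep
  obtain ⟨c, d, U, hR⟩ := hR.exists_oRep (Y := Y) ⟨hY.mem, hB.zero⟩
  obtain ⟨C, hC, hU, hne, ho⟩ := h.side_overlap hg hY hB hR
  obtain ⟨C', hC', hU', hne', ho'⟩ := h.side_overlap hg hY hB hR.swap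
  refine ⟨C, C', hC, hC', ?_, hne, hne', ho, ho'⟩
  rintro rfl
  obtain ⟨e, he⟩ := hC.ne
  exact (hU' e he).1 (hU e he).2

/-- If `C` overlaps `B` but avoids `D`, then a cocircuit in `C ∪ Y` has a bridge properly
containing `B` and disjoint from `D`. -/
lemma Hub.enlarge [Finite α] {a b s : α → V} {C D : Set α} (h : Hub R Y C a b s)
    (hY : IsCoc R Y) (hB : Bridge R Y B) (hC : Bridge R Y C) (hD : Bridge R Y D)
    (hBC : B ≠ C) (hBD : B ≠ D) (hCD : C ≠ D) (ho : ¬ Avoid R Y B C) (ha : Avoid R Y C D) :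
    ∃ Y' B', IsCoc R Y' ∧ Bridge R Y' B' ∧ B ⊂ B' ∧ ∀ e ∈ D, e ∉ B' ∧ Y' e = 0 := by
  classical
  obtain ⟨y1, y2, hy1, hy2, hall⟩ := ha
  have dBC := hB.disjoint hC hBC
  have dBD := hB.disjoint hD hBD
  have dCD := hC.disjoint hD hCD
  set q := s y1 with hq
  set Y' := hv Y C a b s (ind {q}) with hY'
  have hY'm := h.hv_mem hC (ind {q})
  rw [← hY'] at hY'm
  have hY'R := (mem_loc.1 hY'm).1
  have hY'Y : ∀ y, Y y ≠ 0 → (Y' y ≠ 0 ↔ s y = q) := by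
    intro y hy
    rw [hY', hv_Y hC hy]
    by_cases hs : s y = q
    · rw [hs, ind_of_mem (mem_singleton _)]; simp
    · simp [ind_of_notMem (U := {q}) hs, hs]
  have hY'0 : ∀ e, e ∉ C → Y e = 0 → Y' e = 0 := (mem_loc.1 hY'm).2
  have hY'C : ∀ e ∈ C, Y' e = 0 → a e ≠ q ∧ b e ≠ q := by
    intro e he h0
    have hne := h.ne_of_mem hC he
    rw [hY', hv_B he] at h0
    have := (ind_eq_iff.1 (k_eq h0))
    simp only [mem_singleton_iff] at this
    grind
  -- some element of `Y` is attached away from `q`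
  obtain ⟨y3, hy3, hs3⟩ : ∃ y, Y y ≠ 0 ∧ s y ≠ q := by
    by_contra hc
    push Not at hc
    exact ho ⟨y1, y1, hy1, hy1, fun y hy => .inr ((h.eqv_iff hC hy hy1).2 (hc y hy))⟩
  have hYp : Y' y1 ≠ 0 := (hY'Y y1 hy1).2 rfl
  have hcoc : IsCoc R Y' := by
    refine ⟨hY'R, fun h => hYp (by rw [h]; rfl), fun w hw hsup => ?_⟩
    have hwl : w ∈ loc R Y C := mem_loc.2 ⟨hw, fun e he hy => hsup e (hY'0 e he hy)⟩
    obtain ⟨f, hf⟩ := h.exists_hv hC hwl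
    have hcst := h.conn_compl hC q f (fun e he h1 h2 => by
      have h0 : Y' e = 0 := by
        rw [hY', hv_B he, ind_of_notMem (U := {q}) h1, ind_of_notMem (U := {q}) h2, add_zero]
      have := hsup e h0
      rw [hf, hv_B he] at this
      exact k_eq this)
    have hf3 : f (s y3) = 0 := by
      have := hsup y3 (by
        by_contra hc; exact hs3 ((hY'Y y3 hy3).1 hc))
      rwa [hf, hv_Y hC hy3] at this
    have hf0 : ∀ v, v ≠ q → f v = 0 := fun v hv => (hcst v hv _ hs3).trans hf3
    rcases k01 (f q) with hfq | hfq
    · left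
      rw [hf]
      have : f = 0 := by
        funext v
        by_cases hv : v = q
        · rw [hv, hfq]; rfl
        · exact hf0 v hv
      subst this
      funext e; simp [hv]
    · right
      rw [hf, hY']
      congr 1
      funext v
      by_cases hv : v = q
      · rw [hv, hfq, ind_of_mem (mem_singleton _)]
      · rw [hf0 v hv, ind_of_notMem (U := {q}) hv]
  obtain ⟨b0, hb0⟩ := hB.ne
  obtain ⟨B', hB', hb0'⟩ := exists_bridge (R := R) (Y := Y') (hB.nl b0 hb0)
    (hY'0 b0 (dBC b0 hb0) (hB.zero b0 hb0))
  have hBB' : B ⊆ B' := by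
    refine hB.subset_of_sep (X := B ∩ B') ?_ ⟨b0, hb0, hb0, hb0'⟩ |>.trans inter_subset_right
    intro w hw
    obtain ⟨w1, hw1, e1⟩ := hB.sep w hw
    rw [mem_loc] at hw1
    obtain ⟨w2, hw2, e2⟩ := hB'.sep w1 hw1.1
    rw [mem_loc] at hw2
    obtain ⟨w3, hw3, e3⟩ := hC.sep w2 hw2.1
    rw [mem_loc] at hw3
    refine ⟨w2 + w3, mem_loc.2 ⟨R.add_mem hw2.1 hw3.1, fun e he hy => ?_⟩, fun e he => ?_⟩
    · rw [Pi.add_apply]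
      by_cases heC : e ∈ C
      · rw [e3 e heC, k_self]
      · rw [hw3.2 e heC hy, add_zero]
        by_cases heB' : e ∈ B'
        · rw [e2 e heB']
          exact hw1.2 e (fun h => he ⟨h, heB'⟩) hy
        · exact hw2.2 e heB' (hY'0 e heC hy)
    · rw [Pi.add_apply, hw3.2 e (dBC e he.1) (hB.zero e he.1), add_zero, e2 e he.2, e1 e he.1]
  have hBne : B ≠ B' := by
    rintro rfl
    refine ho ⟨y3, y1, hy3, hy1, fun y hy => ?_⟩
    by_cases hs : s y = q
    · exact .inr ((h.eqv_iff hC hy hy1).2 hs)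
    left
    intro w hw
    obtain ⟨w', hw', e'⟩ := hB'.sep w (mem_loc.1 hw).1
    rw [mem_loc] at hw hw'
    have hl : w + w' ∈ loc R Y C := mem_loc.2 ⟨R.add_mem hw.1 hw'.1, fun e he hy => by
      rw [Pi.add_apply]
      by_cases heB : e ∈ B
      · rw [e' e heB, k_self]
      · rw [hw.2 e heB hy, hw'.2 e heB (hY'0 e he hy), add_zero]⟩
    obtain ⟨f, hf⟩ := h.exists_hv hC hl
    have hcst := h.conn_compl hC q f (fun e he h1 h2 => by
      have h0 : Y' e = 0 := by
        rw [hY', hv_B he, ind_of_notMem (U := {q}) h1, ind_of_notMem (U := {q}) h2, add_zero]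
      have heB : e ∉ B := fun h => dBC e h he
      have : (w + w') e = 0 := by
        rw [Pi.add_apply, hw.2 e heB (hC.zero e he), hw'.2 e heB h0, add_zero]
      rw [hf, hv_B he] at this
      exact k_eq this)
    have hval : ∀ y, Y y ≠ 0 → s y ≠ q → w y = f (s y) := by
      intro y hy hs
      have hyB : y ∉ B := fun h => hy (hB.zero y h)
      have h0 : Y' y = 0 := by
        by_contra hc; exact hs ((hY'Y y hy).1 hc)
      have : (w + w') y = f (s y) := by rw [hf, hv_Y hC hy]
      rwa [Pi.add_apply, hw'.2 y hyB h0, add_zero] at this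
    rw [hval y hy hs, hval y3 hy3 hs3]
    exact hcst _ hs _ hs3
  have hDs : Sep R Y' D := by
    intro w hw
    obtain ⟨w1, hw1, e1⟩ := hD.sep w hw
    rw [mem_loc] at hw1
    -- all elements of `Y` attached away from `q` are equivalent for `D`
    have hc : ∀ y, Y y ≠ 0 → s y ≠ q → w1 y = w1 y2 := by
      intro y hy hs
      rcases hall y hy with h' | h'
      · exact absurd ((h.eqv_iff hC hy hy1).1 h') hs
      · exact h' w1 (mem_loc.2 hw1)
    refine ⟨w1 + (w1 y2) • Y, mem_loc.2 ⟨R.add_mem hw1.1 (R.smul_mem _ hY.mem),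
      fun e he h0 => ?_⟩, fun e he => ?_⟩
    · rw [Pi.add_apply, Pi.smul_apply, smul_eq_mul]
      by_cases hy : Y e = 0
      · rw [hy, hw1.2 e he hy, mul_zero, add_zero]
      · have hs : s e ≠ q := fun hc => (hY'Y e hy).2 hc h0
        rw [hc e hy hs, k_one hy, mul_one, k_self]
    · rw [Pi.add_apply, Pi.smul_apply, hD.zero e he, smul_zero, add_zero, e1 e he]
  refine ⟨Y', B', hcoc, hB', hBB'.ssubset_of_ne hBne, fun e he => ⟨fun heB' => ?_, ?_⟩⟩
  · exact dBD b0 hb0 (hB'.subset_of_sep hDs ⟨e, heB', he⟩ hb0')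
  · exact hY'0 e (fun h => dCD e h he) (hD.zero e he)

end overlap
end Core

section Core
variable {α : Type*} {V : Type}

/-! ### Contracting an edge of a bridge -/

section contractEdge
variable {R : Submodule K (α → K)} {Y : α → K} {B : Set α} {a b s : α → V}

/-- The edges of `B` that do not become loops when `P` is contracted to a point. -/
def crossing (B : Set α) (a b : α → V) (P : Set V) : Set α := {e ∈ B | ¬ (a e ∈ P ∧ b e ∈ P)}

open Classical in
/-- The class of `v` when `P` is contracted to a point. -/
noncomputable def cls (P : Set V) (v : V) : Set V := if v ∈ P then P else {v}

lemma mem_cls (P : Set V) (v : V) : v ∈ cls P v := by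
  unfold cls; split_ifs with h
  exacts [h, rfl]

lemma cls_eq {P : Set V} {u v : V} (hu : u ∈ P) (hv : v ∈ P) : cls P u = cls P v := by
  simp [cls, hu, hv]

lemma eq_on_cls {P : Set V} {g : V → K} (hg : ∀ u ∈ P, ∀ v ∈ P, g u = g v) (v : V) :
    ∀ u ∈ cls P v, g u = g v := by
  intro u hu
  unfold cls at hu; split_ifs at hu with h
  · exact hg u hu v h
  · rw [mem_singleton_iff.1 hu]

lemma ind_cls {P : Set V} (v : V) : ∀ u ∈ P, ∀ u' ∈ P, ind (cls P v) u = ind (cls P v) u' := by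
  intro u hu u' hu'
  refine ind_eq_iff.2 ?_
  unfold cls; split_ifs with h
  · simp [hu, hu']
  · simp only [mem_singleton_iff]
    exact ⟨fun h' => absurd (h' ▸ hu) h, fun h' => absurd (h' ▸ hu') h⟩

lemma Hub.mem_loc_contract (h : Hub R Y B a b s) (hB : Bridge R Y B) {x : α} (hx : x ∈ B)
    {P : Set V} (hP : P = {a x, b x}) {w : α → K} :
    w ∈ loc (ctr R {x}) Y (crossing B a b P) ↔
      ∃ f : V → K, (∀ u ∈ P, ∀ v ∈ P, f u = f v) ∧ w = hv Y B a b s f := by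
  constructor
  · intro hw
    rw [mem_loc, mem_ctr] at hw
    obtain ⟨f, rfl⟩ := h.exists_hv hB (w := w)
      (mem_loc.2 ⟨hw.1.1, fun e he => hw.2 e fun h => he h.1⟩)
    refine ⟨f, ?_, rfl⟩
    have := hw.1.2 x rfl
    rw [hv_B hx] at this
    have := k_eq this
    subst hP
    rintro u (rfl | rfl) v (rfl | rfl)
    exacts [rfl, this, this.symm, rfl]
  · rintro ⟨f, hf, rfl⟩
    refine mem_loc.2 ⟨⟨(mem_loc.1 (h.hv_mem hB f)).1, ?_⟩, fun e he hy => ?_⟩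
    · intro e he
      rw [mem_singleton_iff.1 he, hv_B hx, hf (a x) (by simp [hP]) (b x) (by simp [hP]), k_self]
    · by_cases heB : e ∈ B
      · have : a e ∈ P ∧ b e ∈ P := by
          by_contra hc; exact he ⟨heB, hc⟩
        rw [hv_B heB, hf _ this.1 _ this.2, k_self]
      · exact hv_else heB hy

/-- If the complement of an edge of a bridge is connected, contracting the edge keeps the bridge
in one piece. -/
lemma Hub.bridge_contract (h : Hub R Y B a b s) (hB : Bridge R Y B) {x : α} (hx : x ∈ B)
    {P : Set V} (hP : P = {a x, b x}) (hc : Conn a b B Pᶜ) (hn : ∃ v, v ∉ P) :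
    Bridge (ctr R {x}) Y (crossing B a b P) := by
  classical
  have hml := fun w => h.mem_loc_contract hB hx hP (w := w)
  have haP : a x ∈ P := by simp [hP]
  have hbP : b x ∈ P := by simp [hP]
  have hcc : ∀ v, Conn a b B (cls P v)ᶜ := by
    intro v
    unfold cls; split_ifs
    exacts [hc, h.conn_compl hB v]
  have hcr : ∀ e ∈ crossing B a b P, ∀ v, a e ∈ cls P v → b e ∈ cls P v → False := by
    intro e he v h1 h2
    unfold cls at h1 h2; split_ifs at h1 h2
    · exact he.2 ⟨h1, h2⟩
    · exact h.ne_of_mem hB he.1 ((mem_singleton_iff.1 h1).trans (mem_singleton_iff.1 h2).symm)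
  refine ⟨?_, fun e he => hB.zero e he.1, fun e he => ?_, fun w hw => ?_, fun X hX hXn hs => ?_⟩
  · obtain ⟨v, hv⟩ := hn
    obtain ⟨p, hp, q, hq, e, he, h'⟩ := h.conn.exists_adj (S := P) (u := a x) (v := v) trivial
      trivial haP hv
    refine ⟨e, he, fun h2 => hq.2 ?_⟩
    rcases h' with ⟨-, rfl⟩ | ⟨rfl, -⟩
    exacts [h2.2, h2.1]
  · refine ⟨_, (mem_loc.1 ((hml _).2 ⟨_, ind_cls (a e), rfl⟩)).1, ?_⟩
    rw [hv_B he.1, ind_of_mem (mem_cls _ _),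
      ind_of_notMem (fun h' => hcr e he _ (mem_cls _ _) h')]
    simp
  · obtain ⟨w1, hw1, e1⟩ := hB.sep w hw.1
    obtain ⟨f, rfl⟩ := h.exists_hv hB hw1
    refine ⟨_, (hml _).2 ⟨f, ?_, rfl⟩, fun e he => e1 e he.1⟩
    have := e1 x hx
    rw [hv_B hx, hw.2 x rfl] at this
    have := k_eq this
    rw [hP]
    rintro u (rfl | rfl) v (rfl | rfl)
    exacts [rfl, this, this.symm, rfl]
  · -- all crossing edges at a class lie in `X`, or none does
    have hunif : ∀ v, ∀ e ∈ X, ∀ e' ∈ crossing B a b P, (a e ∈ cls P v ∨ b e ∈ cls P v) →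
        (a e' ∈ cls P v ∨ b e' ∈ cls P v) → e' ∈ X := by
      intro v e he e' he' h1 h2
      obtain ⟨w', hw', e1⟩ := hs _ (mem_loc.1 ((hml _).2 ⟨_, ind_cls v, rfl⟩)).1
      have hw2 := mem_loc.1 hw'
      obtain ⟨g, hg, rfl⟩ := (hml w').1 (mem_loc.2 ⟨hw2.1, fun e he => hw2.2 e fun h => he (hX h)⟩)
      have hg1 : ∀ e ∈ B, e ∉ X → g (a e) = g (b e) := by
        intro e he heX
        have := hw2.2 e heX (hB.zero e he)
        rw [hv_B he] at this
        exact k_eq this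
      have hg2 : ∀ e ∈ X, g (a e) + g (b e) = ind (cls P v) (a e) + ind (cls P v) (b e) := by
        intro e he
        have := e1 e he
        rwa [hv_B (hX he).1, hv_B (hX he).1] at this
      have hg3 := hcc v g fun e he h1 h2 => by
        by_cases heX : e ∈ X
        · have := hg2 e heX
          rw [ind_of_notMem h1, ind_of_notMem h2, add_zero] at this
          exact k_eq this
        · exact hg1 e he heX
      have hg4 := eq_on_cls hg v
      have h3 := hcr e (hX he) v
      have h4 := hcr e' he' v
      by_contra heX
      have h5 := hg1 e' he'.1 heX
      have h6 := hg2 e he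
      have h7 : ind (cls P v) (a e) + ind (cls P v) (b e) = 1 := by
        rcases h1 with h1 | h1
        · rw [ind_of_mem h1, ind_of_notMem fun h' => h3 h1 h', add_zero]
        · rw [ind_of_mem h1, ind_of_notMem fun h' => h3 h' h1, zero_add]
      have h8 : ∃ p ∈ (cls P v)ᶜ, g p = g v := by
        rcases h2 with h2 | h2
        · exact ⟨b e', fun h' => h4 h2 h', h5.symm.trans (hg4 _ h2)⟩
        · exact ⟨a e', fun h' => h4 h' h2, h5.trans (hg4 _ h2)⟩
      obtain ⟨p, hp, hgp⟩ := h8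
      have h9 : g (a e) = g (b e) := by
        rcases h1 with h1 | h1
        · rw [hg4 _ h1, ← hgp, hg3 p hp (b e) fun h' => h3 h1 h']
        · rw [hg4 _ h1, ← hgp, hg3 p hp (a e) fun h' => h3 h' h1]
      rw [h9, k_self, h7] at h6
      exact zero_ne_one h6
    let Z : Set V := {v | ∃ e ∈ X, a e ∈ cls P v ∨ b e ∈ cls P v}
    have hZ : ∀ v, v ∈ Z := by
      obtain ⟨e0, he0⟩ := hXn
      intro v
      have := h.conn (ind Z) (fun e he _ _ => ind_eq_iff.2 ?_) (a e0) trivial v trivial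
      · exact (ind_eq_iff.1 this).1 ⟨e0, he0, .inl (mem_cls _ _)⟩
      · by_cases hcr' : a e ∈ P ∧ b e ∈ P
        · simp only [Z, mem_ofPred_eq, cls_eq hcr'.1 hcr'.2]
        · constructor
          · rintro ⟨e1, he1, h1⟩
            exact ⟨e, hunif _ e1 he1 e ⟨he, hcr'⟩ h1 (.inl (mem_cls _ _)), .inr (mem_cls _ _)⟩
          · rintro ⟨e1, he1, h1⟩
            exact ⟨e, hunif _ e1 he1 e ⟨he, hcr'⟩ h1 (.inr (mem_cls _ _)), .inl (mem_cls _ _)⟩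
    refine hX.antisymm fun e he => ?_
    obtain ⟨e1, he1, h1⟩ := hZ (a e)
    exact hunif _ e1 he1 e he h1 (.inl (mem_cls _ _))

/-- The pair `P` of vertices of the graph of `B` is an obstruction to overlapping with `C`. -/
def BadPair (R : Submodule K (α → K)) (Y : α → K) (s : α → V) (C : Set α) (P : Set V) : Prop :=
  ∃ y2, Y y2 ≠ 0 ∧ ∀ y, Y y ≠ 0 → s y ∈ P ∨ eqv R Y C y y2

lemma Hub.badPair (h : Hub R Y B a b s) (hY : IsCoc R Y) (hB : Bridge R Y B) {C D : Set α}
    (hC : Bridge R Y C) (hD : Bridge R Y D) (hBC : B ≠ C) (hBD : B ≠ D) (hCD : C ≠ D)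
    (oBC : ¬ Avoid R Y B C) (oBD : ¬ Avoid R Y B D) (oCD : ¬ Avoid R Y C D) {x : α} (hx : x ∈ B)
    {P : Set V} (hP : P = {a x, b x}) (hc : Conn a b B Pᶜ) (hn : ∃ v, v ∉ P)
    (hg : Graphic (ctr R {x})) : BadPair R Y s C P ∨ BadPair R Y s D P := by
  have dBC := hB.disjoint hC hBC
  have dBD := hB.disjoint hD hBD
  have hB' := h.bridge_contract hB hx hP hc hn
  have hY0 := hB.zero x hx
  have hle := ctr_le R {x}
  have hlC : ∀ {C}, x ∉ C → loc R Y C ≤ ctr R {x} := by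
    intro C hxC w hw
    rw [mem_loc] at hw
    refine ⟨hw.1, ?_⟩
    rintro _ rfl
    exact hw.2 _ hxC hY0
  have hxC := dBC x hx
  have hxD := dBD x hx
  obtain ⟨e0, he0⟩ := hB'.ne
  have hav : ∀ {C}, Bridge R Y C → x ∉ C → ¬ Avoid R Y B C →
      Avoid (ctr R {x}) Y (crossing B a b P) C → BadPair R Y s C P := by
    rintro C hC hxC ho ⟨y1, y2, hy1, hy2, hall⟩
    have key : ∀ y, Y y ≠ 0 → eqv (ctr R {x}) Y (crossing B a b P) y y1 → s y ∈ cls P (s y1) := by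
      intro y hy he
      have := he _ ((h.mem_loc_contract hB hx hP).2 ⟨_, ind_cls (s y1), rfl⟩)
      rw [hv_Y hB hy, hv_Y hB hy1, ind_eq_iff] at this
      exact this.2 (mem_cls _ _)
    refine ⟨y2, hy2, fun y hy => ?_⟩
    by_cases hs : s y1 ∈ P
    · refine (hall y hy).imp (fun h' => ?_) (fun h' => (eqv_of_le hle (hlC hxC)).1 h')
      have := key y hy h'
      rwa [cls, if_pos hs] at this
    · refine absurd ⟨y1, y2, hy1, hy2, fun y hy => ?_⟩ ho
      refine (hall y hy).imp (fun h' => ?_) (fun h' => (eqv_of_le hle (hlC hxC)).1 h')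
      have := key y hy h'
      rw [cls, if_neg hs] at this
      exact (h.eqv_iff hB hy hy1).2 this
  by_contra hno
  rw [not_or] at hno
  refine hg.not_three (hY.of_le hle (hlC hxC (hY.mem_loc C))) hB' (hC.of_le hle (hlC hxC))
    (hD.of_le hle (hlC hxD)) ?_ ?_ hCD (fun h' => hno.1 (hav hC hxC oBC h'))
    (fun h' => hno.2 (hav hD hxD oBD h')) ?_
  · intro h'; exact dBC e0 he0.1 (h' ▸ he0)
  · intro h'; exact dBD e0 he0.1 (h' ▸ he0)
  · rintro ⟨y1, y2, hy1, hy2, hall⟩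
    exact oCD ⟨y1, y2, hy1, hy2, fun y hy => (hall y hy).imp (eqv_of_le hle (hlC hxC)).1
      (eqv_of_le hle (hlC hxD)).1⟩

lemma exists_notMem_of_ncard [Finite V] {S : Set V} (h : S.ncard < Nat.card V) : ∃ v, v ∉ S := by
  by_contra hc
  push Not at hc
  rw [eq_univ_of_forall hc, ncard_univ] at h
  exact lt_irrefl _ h

/-- Among three pairwise overlapping bridges, none has a graph with more than four vertices. -/
lemma Hub.card_le [Finite V] (h : Hub R Y B a b s) (hY : IsCoc R Y) (hB : Bridge R Y B)
    {C D : Set α}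
    (hC : Bridge R Y C) (hD : Bridge R Y D) (hBC : B ≠ C) (hBD : B ≠ D) (hCD : C ≠ D)
    (oBC : ¬ Avoid R Y B C) (oBD : ¬ Avoid R Y B D) (oCD : ¬ Avoid R Y C D)
    (hg : ∀ x ∈ B, Graphic (ctr R {x})) : Nat.card V ≤ 4 := by
  by_contra hV
  push Not at hV
  have hpair : ∀ v : V, ∃ w, BadPair R Y s C {v, w} ∨ BadPair R Y s D {v, w} := by
    intro v
    have hnt : ({v}ᶜ : Set V).Nontrivial := by
      rw [← Set.one_lt_ncard_iff_nontrivial]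
      have := Set.ncard_add_ncard_compl ({v} : Set V)
      rw [Set.ncard_singleton] at this
      omega
    obtain ⟨w, hw, ⟨v', hv', x, hx, hxx⟩, hc⟩ := growth (U := {v}) (h.conn_compl hB)
      (singleton_nonempty v) (h.conn_compl hB v) hnt
    obtain rfl : v' = v := hv'
    refine ⟨w, ?_⟩
    rw [pair_comm] at hc
    have hP : ({v', w} : Set V) = {a x, b x} := by
      rcases hxx with ⟨h1, h2⟩ | ⟨h1, h2⟩
      · rw [h1, h2]
      · rw [h1, h2, pair_comm]
    refine h.badPair hY hB hC hD hBC hBD hCD oBC oBD oCD hx hP hc ?_ (hg x hx)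
    exact exists_notMem_of_ncard (lt_of_le_of_lt (Set.ncard_insert_le _ _) (by simp; omega))
  have hhit : ∀ {C}, ¬ Avoid R Y B C → ∀ u w, BadPair R Y s C {u, w} → ∃ y, Y y ≠ 0 ∧ s y = u := by
    intro C ho u w ⟨y2, hy2, hall⟩
    by_contra hc
    push Not at hc
    apply ho
    by_cases hw : ∃ y1, Y y1 ≠ 0 ∧ s y1 = w
    · obtain ⟨y1, hy1, hs1⟩ := hw
      refine ⟨y1, y2, hy1, hy2, fun y hy => (hall y hy).imp (fun h' => ?_) id⟩
      rcases h' with h' | h'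
      · exact absurd h' (hc y hy)
      · exact (h.eqv_iff hB hy hy1).2 ((mem_singleton_iff.1 h').trans hs1.symm)
    · push Not at hw
      refine ⟨y2, y2, hy2, hy2, fun y hy => (hall y hy).imp (fun h' => ?_) id⟩
      rcases h' with h' | h'
      · exact absurd h' (hc y hy)
      · exact absurd h' (hw y hy)
  have hsurj : ∀ v : V, ∃ y, Y y ≠ 0 ∧ s y = v := by
    intro v
    obtain ⟨w, hw | hw⟩ := hpair v
    exacts [hhit oBC v w hw, hhit oBD v w hw]
  have huniq : ∀ {C}, ¬ Avoid R Y B C → ∀ u w u' w', BadPair R Y s C {u, w} →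
      BadPair R Y s C {u', w'} → u' = u ∨ u' = w := by
    intro C ho u w u' w' ⟨y2, hy2, hall⟩ ⟨y3, hy3, hall'⟩
    by_contra hne
    obtain ⟨v, hv⟩ : ∃ v, v ∉ ({u, w, u', w'} : Set V) := by
      apply exists_notMem_of_ncard
      have h1 := Set.ncard_insert_le u ({w, u', w'} : Set V)
      have h2 := Set.ncard_insert_le w ({u', w'} : Set V)
      have h3 := Set.ncard_insert_le u' ({w'} : Set V)
      rw [Set.ncard_singleton] at h3
      omega
    simp only [mem_insert_iff, mem_singleton_iff] at hv
    obtain ⟨y, hy, hys⟩ := hsurj v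
    have e1 : eqv R Y C y y2 := (hall y hy).resolve_left (by
      simp only [mem_insert_iff, mem_singleton_iff]; grind)
    have e2 : eqv R Y C y y3 := (hall' y hy).resolve_left (by
      simp only [mem_insert_iff, mem_singleton_iff]; grind)
    have e3 := e2.symm.trans e1
    obtain ⟨y4, hy4, hs4⟩ := hsurj w'
    refine ho ⟨y4, y2, hy4, hy2, fun z hz => ?_⟩
    rcases hall z hz with h1 | h1
    · rcases hall' z hz with h2 | h2
      · left
        rw [h.eqv_iff hB hz hy4]
        simp only [mem_insert_iff, mem_singleton_iff] at h1 h2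
        grind
      · exact .inr (h2.trans e3)
    · exact .inr h1
  obtain ⟨P, hP⟩ : ∃ P : Set V, P.ncard ≤ 2 ∧ ∀ u w, BadPair R Y s C {u, w} → u ∈ P := by
    by_cases hex : ∃ u w, BadPair R Y s C {u, w}
    · obtain ⟨u, w, huw⟩ := hex
      refine ⟨{u, w}, (Set.ncard_insert_le _ _).trans (by simp), fun u' w' h' => ?_⟩
      have := huniq oBC u w u' w' huw h'
      exact this
    · push Not at hex
      exact ⟨∅, by simp, fun u w h' => absurd h' (hex u w)⟩
  obtain ⟨Q, hQ⟩ : ∃ P : Set V, P.ncard ≤ 2 ∧ ∀ u w, BadPair R Y s D {u, w} → u ∈ P := by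
    by_cases hex : ∃ u w, BadPair R Y s D {u, w}
    · obtain ⟨u, w, huw⟩ := hex
      refine ⟨{u, w}, (Set.ncard_insert_le _ _).trans (by simp), fun u' w' h' => ?_⟩
      have := huniq oBD u w u' w' huw h'
      exact this
    · push Not at hex
      exact ⟨∅, by simp, fun u w h' => absurd h' (hex u w)⟩
  obtain ⟨v, hv⟩ : ∃ v, v ∉ P ∪ Q := by
    apply exists_notMem_of_ncard
    have := Set.ncard_union_le P Q
    omega
  obtain ⟨w, hw | hw⟩ := hpair v
  · exact hv (.inl (hP.2 v w hw))
  · exact hv (.inr (hQ.2 v w hw))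

end contractEdge
end Core

section Core
variable {α : Type*} {V : Type}

/-! ### Three pairwise overlapping bridges -/

section three
variable {R : Submodule K (α → K)} {Y : α → K} {B : Set α} {a b s : α → V}

lemma Hub.finrank_le [Finite V] (h : Hub R Y B a b s) (hB : Bridge R Y B) :
    Module.finrank K (loc R Y B) ≤ Nat.card V := by
  classical
  have := Fintype.ofFinite V
  let T : (V → K) →ₗ[K] (α → K) :=
    { toFun := hv Y B a b s
      map_add' := fun f g => by
        funext e; simp only [hv, Pi.add_apply]; split_ifs <;> grind
      map_smul' := fun c f => by
        funext e; simp only [hv, Pi.smul_apply, smul_eq_mul, RingHom.id_apply]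
        split_ifs <;> grind }
  have hle : loc R Y B ≤ LinearMap.range T := by
    intro w hw
    obtain ⟨f, rfl⟩ := h.exists_hv hB hw
    exact ⟨f, rfl⟩
  calc Module.finrank K (loc R Y B) ≤ Module.finrank K (LinearMap.range T) :=
        Submodule.finrank_mono hle
    _ ≤ Module.finrank K (V → K) := LinearMap.finrank_range_le T
    _ = Nat.card V := by rw [Module.finrank_pi, Nat.card_eq_fintype_card]

lemma finrank_sup_lt [Finite α] {L L' : Submodule K (α → K)} (h0 : Y ≠ 0) (h : Y ∈ L)
    (h' : Y ∈ L') : Module.finrank K ↥(L ⊔ L') + 1 ≤ Module.finrank K L + Module.finrank K L' := by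
  have h1 := Submodule.finrank_sup_add_finrank_inf_eq L L'
  have h2 : 0 < Module.finrank K ↥(L ⊓ L') := by
    rw [Module.finrank_pos_iff]
    exact ⟨⟨⟨Y, h, h'⟩, 0, fun hc => h0 (congrArg Subtype.val hc)⟩⟩
  omega

/-- A cocircuit together with a bridge that is not the only one. -/
def Valid (R : Submodule K (α → K)) (Y : α → K) (B : Set α) : Prop :=
  IsCoc R Y ∧ Bridge R Y B ∧ ∃ e ∈ NL R, e ∉ B ∧ Y e = 0

/-- For a bridge `B` of maximum size, `B` and two bridges overlapping it overlap pairwise, cover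
all nonzero coordinates outside `Y`, and have local spaces of dimension at most 4 sharing `Y`;
hence `R` has dimension at most 10. -/
lemma not_valid [Finite α] (hg : ¬ Graphic R) (hall : ∀ x ∈ NL R, Graphic (ctr R {x}))
    (hr : 11 ≤ Module.finrank K R) (Y0 : α → K) (B0 : Set α) (h0 : Valid R Y0 B0) : False := by
  obtain ⟨⟨Y, B⟩, ⟨hY, hB, e, he, heB, hYe⟩, hmax⟩ := exists_max
    (fun p : (α → K) × Set α => Valid R p.1 p.2) (fun p => p.2.ncard) (Nat.card α)
    (fun p _ => Set.ncard_le_card _) ⟨(Y0, B0), h0⟩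
  simp only at hY hB heB hYe hmax
  have hhub : ∀ {C e}, Bridge R Y C → e ∈ NL R → e ∉ C → Y e = 0 →
      ∃ (V : Type) (_ : Finite V) (a b s : α → V), Hub R Y C a b s := by
    intro C e hC he heC hYe
    refine exists_hub hY hC ((hall e he).mono ?_)
    rintro _ rfl
    exact ⟨heC, hYe⟩
  have hgB : Graphic (ctr R B) := by
    obtain ⟨x, hx⟩ := hB.ne
    refine (hall x (hB.nl x hx)).mono ?_
    rintro _ rfl
    exact hx
  obtain ⟨V1, _, a1, b1, s1, h1⟩ := hhub hB he heB hYe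
  obtain ⟨C, D, hC, hD, hCD, hBC, hBD, oBC, oBD⟩ := h1.two_overlap hg hY hB hgB
  have dBC := hB.disjoint hC hBC
  have dBD := hB.disjoint hD hBD
  have dCD := hC.disjoint hD hCD
  obtain ⟨eB, heB'⟩ := hB.ne
  obtain ⟨V2, _, a2, b2, s2, h2⟩ := hhub hC (hB.nl eB heB') (dBC eB heB') (hB.zero eB heB')
  obtain ⟨V3, _, a3, b3, s3, h3⟩ := hhub hD (hB.nl eB heB') (dBD eB heB') (hB.zero eB heB')
  have oCD : ¬ Avoid R Y C D := by
    intro ha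
    obtain ⟨Y', B', hY', hB', hss, hd⟩ := h2.enlarge hY hB hC hD hBC hBD hCD oBC ha
    obtain ⟨e', he'⟩ := hD.ne
    have := hmax (Y', B') ⟨hY', hB', e', hD.nl e' he', hd e' he'⟩
    exact absurd (Set.ncard_lt_ncard hss (Set.toFinite _)) (not_lt.2 this)
  have hcov : ∀ x ∈ NL R, Y x = 0 → x ∈ B ∨ x ∈ C ∨ x ∈ D := by
    intro x hx hYx
    by_contra hc
    push Not at hc
    have hle := ctr_le R {x}
    have hl : ∀ {C}, x ∉ C → loc R Y C ≤ ctr R {x} := by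
      intro C hxC w hw
      rw [mem_loc] at hw
      refine ⟨hw.1, ?_⟩
      rintro _ rfl
      exact hw.2 _ hxC hYx
    have ho : ∀ {C D}, x ∉ C → x ∉ D → ¬ Avoid R Y C D → ¬ Avoid (ctr R {x}) Y C D := by
      rintro C D hxC hxD ho ⟨y1, y2, hy1, hy2, h⟩
      exact ho ⟨y1, y2, hy1, hy2, fun y hy => (h y hy).imp (eqv_of_le hle (hl hxC)).1
        (eqv_of_le hle (hl hxD)).1⟩
    exact (hall x hx).not_three (hY.of_le hle (hl hc.1 (hY.mem_loc B))) (hB.of_le hle (hl hc.1))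
      (hC.of_le hle (hl hc.2.1)) (hD.of_le hle (hl hc.2.2)) hBC hBD hCD (ho hc.1 hc.2.1 oBC)
      (ho hc.1 hc.2.2 oBD) (ho hc.2.1 hc.2.2 oCD)
  have hsup : R ≤ loc R Y B ⊔ loc R Y C ⊔ loc R Y D := by
    intro w hw
    obtain ⟨w1, hw1, e1⟩ := hB.sep w hw
    obtain ⟨w2, hw2, e2⟩ := hC.sep w hw
    obtain ⟨w3, hw3, e3⟩ := hD.sep w hw
    have m1 := mem_loc.1 hw1
    have m2 := mem_loc.1 hw2
    have m3 := mem_loc.1 hw3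
    have hsum : w + (w1 + w2 + w3) ∈ R := R.add_mem hw (R.add_mem (R.add_mem m1.1 m2.1) m3.1)
    have hY0 := hY.min _ hsum fun e hy => by
      simp only [Pi.add_apply]
      by_cases hne : w e = 0 ∧ w1 e = 0 ∧ w2 e = 0 ∧ w3 e = 0
      · rw [hne.1, hne.2.1, hne.2.2.1, hne.2.2.2]; simp
      have hnl : e ∈ NL R := by
        by_contra hc
        have hz : ∀ w ∈ R, w e = 0 := fun w hw => by
          by_contra h'; exact hc ⟨w, hw, h'⟩
        exact hne ⟨hz _ hw, hz _ m1.1, hz _ m2.1, hz _ m3.1⟩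
      rcases hcov e hnl hy with h' | h' | h'
      · rw [e1 e h', m2.2 e (dBC e h') hy, m3.2 e (dBD e h') hy]; grind
      · rw [e2 e h', m1.2 e (fun h => dBC e h h') hy, m3.2 e (dCD e h') hy]; grind
      · rw [e3 e h', m1.2 e (fun h => dBD e h h') hy, m2.2 e (fun h => dCD e h h') hy]; grind
    have hin : w1 + w2 + w3 ∈ loc R Y B ⊔ loc R Y C ⊔ loc R Y D :=
      Submodule.add_mem _ (Submodule.mem_sup_left (Submodule.add_mem _
        (Submodule.mem_sup_left hw1) (Submodule.mem_sup_right hw2))) (Submodule.mem_sup_right hw3)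
    have hYin : Y ∈ loc R Y B ⊔ loc R Y C ⊔ loc R Y D :=
      Submodule.mem_sup_right (hY.mem_loc D)
    have hweq : w = (w + (w1 + w2 + w3)) + (w1 + w2 + w3) := by
      funext e; simp only [Pi.add_apply]; grind
    rw [hweq]
    refine Submodule.add_mem _ ?_ hin
    rcases hY0 with h' | h'
    · rw [h']; exact Submodule.zero_mem _
    · rw [h']; exact hYin
  have av : ∀ {C D}, ¬ Avoid R Y C D → ¬ Avoid R Y D C := fun h h' => h h'.symm
  have c1 := h1.card_le hY hB hC hD hBC hBD hCD oBC oBD oCD (fun x hx => hall x (hB.nl x hx))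
  have c2 := h2.card_le hY hC hB hD hBC.symm hCD hBD (av oBC) oCD oBD
    (fun x hx => hall x (hC.nl x hx))
  have c3 := h3.card_le hY hD hB hC hBD.symm hCD.symm hBC (av oBD) (av oCD) oBC
    (fun x hx => hall x (hD.nl x hx))
  have f1 := h1.finrank_le hB
  have f2 := h2.finrank_le hC
  have f3 := h3.finrank_le hD
  have f4 := Submodule.finrank_mono hsup
  have f5 := finrank_sup_lt hY.ne (hY.mem_loc (R := R) B) (hY.mem_loc C)
  have hYBC : Y ∈ loc R Y B ⊔ loc R Y C := Submodule.mem_sup_right (hY.mem_loc C)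
  have f6 := finrank_sup_lt hY.ne hYBC (hY.mem_loc (R := R) D)
  omega

end three
end Core

section Core
variable {α : Type*} {V : Type}

/-! ### Finding a cocircuit with two bridges -/

section tau
variable {R : Submodule K (α → K)} {x : α} {a b : α → V}

lemma valid_of_sep [Finite α] {Y : α → K} {X : Set α} (hY : IsCoc R Y) (hX : Sep R Y X) {e e' : α}
    (he : e ∈ NL R) (heX : e ∈ X) (heY : Y e = 0) (he' : e' ∈ NL R) (heX' : e' ∉ X)
    (heY' : Y e' = 0) : ∃ B, Valid R Y B := by
  obtain ⟨B, hB, heB⟩ := exists_bridge he heY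
  exact ⟨B, hY, hB, e', he', fun h => heX' (hB.subset_of_sep hX ⟨e, heB, heX⟩ h), heY'⟩

/-- `R` described through a connected graph for the deletion of `x`: the map `E` extends
coboundaries to the coordinate `x`. -/
structure TRep (R : Submodule K (α → K)) (x : α) (a b : α → V)
    (E : (V → K) →ₗ[K] (α → K)) : Prop where
  mem : ∀ w, w ∈ R ↔ ∃ f, w = E f
  app : ∀ f e, e ≠ x → E f e = f (a e) + f (b e)
  conn : ∀ f : V → K, (∀ e, e ≠ x → f (a e) = f (b e)) → ∀ u v, f u = f v
  loop : a x = b x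
  zero : ∀ r ∈ R, (∀ e, e ≠ x → r e = 0) → r = 0

lemma GRep.exists_tRep (h : GRep (dlt R x) a b)
    (h0 : ∀ r ∈ R, (∀ e, e ≠ x → r e = 0) → r = 0) : ∃ E, TRep R x a b E := by
  classical
  have huniq : ∀ r ∈ R, ∀ r' ∈ R, (∀ e, e ≠ x → r e = r' e) → r = r' := by
    intro r hr r' hr' he
    have := h0 (r + r') (R.add_mem hr hr') (fun e hne => by simp [he e hne, k_self])
    funext e
    exact k_eq (congrFun this e)
  choose hx0 r hr hre using fun f => mem_dlt.1 (h.dl_mem f)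
  have hl : a x = b x := by
    have := k_eq (hx0 (ind {a x}))
    exact ((ind_eq_iff.1 this).1 rfl).symm
  let E : (V → K) →ₗ[K] (α → K) :=
    { toFun := r
      map_add' := fun f g => huniq _ (hr _) _ (R.add_mem (hr f) (hr g)) fun e he => by
        rw [← hre _ e he, Pi.add_apply, ← hre _ e he, ← hre _ e he, dl_add, Pi.add_apply]
      map_smul' := fun c f => huniq _ (hr _) _ (R.smul_mem _ (hr f)) fun e he => by
        rw [← hre _ e he, Pi.smul_apply, RingHom.id_apply, ← hre _ e he]
        simp only [dl, Pi.smul_apply, smul_eq_mul]; ring }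
  have happ : ∀ f e, e ≠ x → E f e = f (a e) + f (b e) := fun f e he => (hre f e he).symm
  refine ⟨E, fun w => ⟨fun hw => ?_, ?_⟩, happ, fun f hf u v => ?_, hl, h0⟩
  · obtain ⟨f, hf⟩ := (h.mem (Function.update w x 0)).1
      ⟨by simp, w, hw, fun e he => by simp [he]⟩
    refine ⟨f, huniq w hw (E f) (hr f) fun e he => ?_⟩
    rw [happ f e he]
    have := congrFun hf e
    rwa [Function.update_of_ne he] at this
  · rintro ⟨f, rfl⟩; exact hr f
  · refine h.conn f (fun e => ?_) u v
    by_cases he : e = x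
    · rw [he, hl]
    · exact hf e he

variable {E : (V → K) →ₗ[K] (α → K)}

lemma ind_insert {U : Set V} {w : V} (hw : w ∉ U) : ind (insert w U) = ind {w} + ind U := by
  classical
  funext v
  by_cases h : v = w
  · subst h; simp [ind, hw]
  · simp [ind, h]

lemma TRep.mem' (h : TRep R x a b E) (f : V → K) : E f ∈ R := (h.mem _).2 ⟨f, rfl⟩

lemma TRep.const (h : TRep R x a b E) {f : V → K} (hf : ∀ u v, f u = f v) : E f = 0 :=
  h.zero _ (h.mem' f) fun e he => by rw [h.app f e he, hf (a e) (b e), k_self]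

lemma TRep.tau_zero [Finite V] {f : V → K} (hf : ∀ v, E (ind {v}) x ≠ 0 → f v = 0) :
    E f x = 0 := by
  classical
  have := Fintype.ofFinite V
  have h1 := LinearMap.pi_apply_eq_sum_univ ((LinearMap.proj x).comp E) f
  simp only [LinearMap.comp_apply, LinearMap.proj_apply] at h1
  rw [h1]
  refine Finset.sum_eq_zero fun v _ => ?_
  have h2 : (fun j => if v = j then (1 : K) else 0) = ind {v} := by
    funext j; simp [ind, eq_comm]
  rw [h2]
  by_cases hv : E (ind {v}) x = 0
  · rw [hv, smul_zero]
  · rw [hf v hv, zero_smul]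

lemma TRep.nl (h : TRep R x a b E) {e : α} (he : a e ≠ b e) : e ∈ NL R := by
  have hx : e ≠ x := fun h' => he (by rw [h', h.loop])
  refine ⟨_, h.mem' (ind {a e}), ?_⟩
  rw [h.app _ e hx, ind_of_mem (mem_singleton _),
    ind_of_notMem (fun h => he (mem_singleton_iff.1 h).symm)]
  simp

lemma TRep.ne_x (h : TRep R x a b E) {e : α} (he : a e ≠ b e) : e ≠ x :=
  fun h' => he (by rw [h', h.loop])

lemma TRep.ends_of_nl (h : TRep R x a b E) {e : α} (hx : e ≠ x) (he : e ∈ NL R) : a e ≠ b e := by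
  intro heq
  obtain ⟨w, hw, hwe⟩ := he
  obtain ⟨f, rfl⟩ := (h.mem w).1 hw
  exact hwe (by rw [h.app f e hx, heq, k_self])

/-- At least three vertices have a star through `x`. -/
lemma TRep.three [Finite V] (h : TRep R x a b E) (hg : ¬ Graphic R) (hx : x ∈ NL R) :
    ∃ u v w, E (ind {u}) x ≠ 0 ∧ E (ind {v}) x ≠ 0 ∧ E (ind {w}) x ≠ 0 ∧ u ≠ v ∧ u ≠ w ∧ v ≠ w := by
  classical
  obtain ⟨w, hw, hwx⟩ := hx
  obtain ⟨f, rfl⟩ := (h.mem w).1 hw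
  obtain ⟨u, hu⟩ : ∃ u, E (ind {u}) x ≠ 0 := by
    by_contra hc
    push Not at hc
    exact hwx (TRep.tau_zero fun v hv => absurd (hc v) hv)
  obtain ⟨v, hv, huv⟩ : ∃ v, E (ind {v}) x ≠ 0 ∧ u ≠ v := by
    by_contra hc
    push Not at hc
    have h1 : E (ind univ) = 0 := h.const fun u v => by simp [ind]
    have h2 : E (ind univ + ind {u}) x = 0 := TRep.tau_zero fun v hv => by
      rw [← hc v hv, Pi.add_apply, ind_of_mem (mem_univ _), ind_of_mem (mem_singleton _), k_self]
    rw [map_add, h1, zero_add] at h2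
    exact hu h2
  by_contra hc
  push Not at hc
  have hT : ∀ z, E (ind {z}) x ≠ 0 → z = u ∨ z = v := fun z hz => by
    have := hc u v z hu hv hz huv
    by_contra h'
    rw [not_or] at h'
    exact h'.2 (this (Ne.symm h'.1)).symm
  have hval : ∀ f : V → K, E f x = f u + f v := by
    intro f
    have h2 : E (f + f u • ind {u} + f v • ind {v}) x = 0 := TRep.tau_zero fun z hz => by
      have e1 : ind ({v} : Set V) u = 0 := ind_of_notMem huv
      have e2 : ind ({u} : Set V) v = 0 := ind_of_notMem (Ne.symm huv)
      have e3 : ind ({v} : Set V) v = 1 := ind_of_mem rfl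
      have e4 : ind ({u} : Set V) u = 1 := ind_of_mem rfl
      rcases hT z hz with rfl | rfl
      · simp [e1, e4, k_self]
      · simp [e2, e3, k_self]
    rw [map_add, map_add, map_smul, map_smul] at h2
    simp only [Pi.add_apply, Pi.smul_apply, k_one hu, k_one hv, smul_eq_mul, mul_one] at h2
    grind
  refine hg ⟨V, inferInstance, Function.update a x u, Function.update b x v, fun w => ?_⟩
  rw [h.mem]
  refine exists_congr fun f => ?_
  have : E f = dl (Function.update a x u) (Function.update b x v) f := by
    funext e
    by_cases he : e = x
    · subst he; simp [dl, hval]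
    · simp [dl, he, h.app]
  rw [this]

lemma TRep.conn_univ (h : TRep R x a b E) : Conn a b univ univ :=
  fun f hf u _ v _ => h.conn f (fun e _ => hf e trivial trivial trivial) u v

/-- Two nonempty sides of a cut vertex `v`. -/
structure CutV (a b : α → V) (v : V) (W W' : Set V) : Prop where
  cov : ∀ u, u ≠ v → u ∈ W ∨ u ∈ W'
  dis : ∀ u ∈ W, u ∉ W'
  nv : v ∉ W ∧ v ∉ W'
  ne : W.Nonempty
  ne' : W'.Nonempty
  edge : ∀ e, ¬ (a e ∈ W ∧ b e ∈ W') ∧ ¬ (a e ∈ W' ∧ b e ∈ W)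

lemma CutV.symm {v : V} {W W' : Set V} (h : CutV a b v W W') : CutV a b v W' W :=
  ⟨fun u hu => (h.cov u hu).symm, fun u hu hu' => h.dis u hu' hu, h.nv.symm, h.ne', h.ne,
    fun e => (h.edge e).symm⟩

/-- The edges other than `x` with an end in `W`. -/
def touch (x : α) (a b : α → V) (W : Set V) : Set α := {e | e ≠ x ∧ (a e ∈ W ∨ b e ∈ W)}

section cutv
variable {v : V} {W W' : Set V}

open Classical in
/-- The function agreeing with `f + f v` on `W` and vanishing elsewhere. -/
noncomputable def part (v : V) (W : Set V) (f : V → K) : V → K :=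
  fun u => if u ∈ W then f u + f v else 0

lemma CutV.part_touch (hc : CutV a b v W W') (h : TRep R x a b E) (f : V → K) {e : α}
    (he : e ∈ touch x a b W) : E (part v W f) e = E f e := by
  rw [h.app _ e he.1, h.app _ e he.1]
  have h1 := hc.cov (a e); have h2 := hc.cov (b e)
  have h3 := hc.edge e; have h4 := he.2; have h5 := hc.nv
  unfold part
  by_cases ha : a e ∈ W <;> by_cases hb : b e ∈ W
  · rw [if_pos ha, if_pos hb]; grind
  · have : b e = v := by tauto
    rw [if_pos ha, if_neg hb, this]; grind
  · have : a e = v := by tauto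
    rw [if_pos hb, if_neg ha, this]; grind
  · tauto

lemma CutV.part_else (h : TRep R x a b E) (f : V → K) {e : α}
    (he : e ∉ touch x a b W) (hx : e ≠ x) : E (part v W f) e = 0 := by
  have : a e ∉ W ∧ b e ∉ W := by
    constructor <;> intro h' <;> exact he ⟨hx, by tauto⟩
  rw [h.app _ e hx]
  simp [part, this.1, this.2]

lemma CutV.exists_touch (hc : CutV a b v W W') (h : TRep R x a b E) :
    ∃ e ∈ touch x a b W, e ∈ NL R := by
  obtain ⟨u, hu⟩ := hc.ne
  obtain ⟨p, hp, q, hq, e, -, h'⟩ := h.conn_univ.exists_adj (S := W) (u := u) (v := v)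
    trivial trivial hu hc.nv.1
  have hpq : p ≠ q := fun h => hq.2 (h ▸ hp.1)
  have hab : a e ≠ b e := by
    rcases h' with ⟨rfl, rfl⟩ | ⟨rfl, rfl⟩
    exacts [hpq, hpq.symm]
  refine ⟨e, ⟨h.ne_x hab, ?_⟩, h.nl hab⟩
  rcases h' with ⟨rfl, rfl⟩ | ⟨rfl, rfl⟩
  exacts [.inl hp.1, .inr hp.1]

lemma CutV.exists_T [Finite V] (hc : CutV a b v W W') (h : TRep R x a b E) (hx : x ∈ NL R)
    (hns : ∀ X, GSep R X → (∃ e ∈ X, e ∈ NL R) → (∃ e, e ∉ X ∧ e ∈ NL R) → False) :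
    ∃ u ∈ W, E (ind {u}) x ≠ 0 := by
  by_contra hno
  push Not at hno
  refine hns (touch x a b W) (fun w hw => ?_) (hc.exists_touch h) ⟨x, fun h' => h'.1 rfl, hx⟩
  obtain ⟨f, rfl⟩ := (h.mem w).1 hw
  refine ⟨_, h.mem' (part v W f), fun e he => hc.part_touch h f he, fun e he => ?_⟩
  by_cases hex : e = x
  · subst hex
    refine TRep.tau_zero fun u hu => ?_
    rw [part, if_neg]
    exact fun hW => hu (hno u hW)
  · exact CutV.part_else h f he hex

lemma CutV.valid [Finite α] [Finite V] (hc : CutV a b v W W') (h : TRep R x a b E) (hx : x ∈ NL R)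
    (hns : ∀ X, GSep R X → (∃ e ∈ X, e ∈ NL R) → (∃ e, e ∉ X ∧ e ∈ NL R) → False)
    (hW : W.Nontrivial) : ∃ Y B, Valid R Y B := by
  obtain ⟨u, hu, hux⟩ := hc.exists_T h hx hns
  obtain ⟨Y, hY, hYx, hYsub⟩ := exists_coc (h.mem' (ind {u})) hux
  refine ⟨Y, ?_⟩
  have huW' := hc.dis u hu
  have hloop : ∀ e, e ∉ NL R → ∀ w ∈ R, w e = 0 := fun e he w hw => by
    by_contra h'; exact he ⟨w, hw, h'⟩
  have h0 : ∀ z ∈ W, ∀ e ∈ touch x a b W', E (ind {z}) e = 0 := by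
    intro z hz e he
    rw [h.app _ e he.1, ind_of_notMem, ind_of_notMem, add_zero]
    · intro h'
      rw [mem_singleton_iff] at h'
      have := hc.edge e; have := hc.dis z hz; have := he.2
      rw [h'] at *; tauto
    · intro h'
      rw [mem_singleton_iff] at h'
      have := hc.edge e; have := hc.dis z hz; have := he.2
      rw [h'] at *; tauto
  have hsep : Sep R Y (touch x a b W') := by
    intro w hw
    obtain ⟨f, rfl⟩ := (h.mem w).1 hw
    refine ⟨_, mem_loc.2 ⟨h.mem' (part v W' f), fun e he hy => ?_⟩,
      fun e he => hc.symm.part_touch h f he⟩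
    exact CutV.part_else h f he fun h' => hYx (h' ▸ hy)
  obtain ⟨e, he, hen⟩ := hc.symm.exists_touch h
  by_contra hno
  have hall : ∀ e', e' ∈ NL R → e' ∉ touch x a b W' → Y e' ≠ 0 := fun e' he' heX' hy =>
    hno (valid_of_sep hY hsep hen he (hYsub e (h0 u hu e he)) he' heX' hy)
  have hYE : E (ind {u}) = Y := by
    funext e'
    by_cases h1 : e' ∈ NL R
    · by_cases h2 : e' ∈ touch x a b W'
      · rw [h0 u hu e' h2, hYsub e' (h0 u hu e' h2)]
      · have h3 := hall e' h1 h2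
        rw [k_one h3, k_one fun h4 => h3 (hYsub e' h4)]
    · rw [hloop e' h1 _ (h.mem' _), hloop e' h1 _ hY.mem]
  obtain ⟨z, hz, hzu⟩ := hW.exists_ne u
  have hz2 := hY.min _ (h.mem' (ind {z})) fun e' hy => by
    by_cases h1 : e' ∈ NL R
    · by_cases h2 : e' ∈ touch x a b W'
      · exact h0 z hz e' h2
      · exact absurd hy (hall e' h1 h2)
    · exact hloop e' h1 _ (h.mem' _)
  have hvz : v ≠ z := fun h' => hc.nv.1 (h' ▸ hz)
  have hvu : v ≠ u := fun h' => hc.nv.1 (h' ▸ hu)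
  rcases hz2 with h1 | h1
  · have := h.conn (ind {z}) (fun e he => k_eq (by rw [← h.app _ e he, h1]; rfl)) v z
    exact hvz ((ind_eq_iff.1 this).2 rfl)
  · have := h.conn (ind {z} + ind {u}) (fun e he => k_eq (by
      rw [← h.app _ e he, map_add, h1, hYE, Pi.add_apply, k_self])) v u
    rw [Pi.add_apply, Pi.add_apply, ind_of_notMem (U := {z}) hvz, ind_of_notMem (U := {u}) hvu,
      ind_of_mem (U := {u}) rfl, ind_of_notMem (U := {z}) (Ne.symm hzu)] at this
    simp at this

end cutv

/-- A bipartition into two connected parts with at least two vertices each, separated by `x`,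
yields a cocircuit with two bridges. -/
lemma TRep.valid_of_bipartition [Finite α] (h : TRep R x a b E) {U : Set V} (hU : Conn a b univ U)
    (hU' : Conn a b univ Uᶜ) (hn : U.Nontrivial) (hn' : Uᶜ.Nontrivial)
    (hx : E (ind U) x ≠ 0) : ∃ Y B, Valid R Y B := by
  classical
  have hYe : ∀ e, E (ind U) e = 0 → (a e ∈ U ↔ b e ∈ U) := by
    intro e he
    have hex : e ≠ x := fun h' => hx (h' ▸ he)
    rw [h.app _ e hex] at he
    exact ind_eq_iff.1 (k_eq he)
  have hYe' : ∀ e, e ≠ x → (a e ∈ U ↔ b e ∈ U) → E (ind U) e = 0 := by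
    intro e hex he
    rw [h.app _ e hex, ind_eq_iff.2 he, k_self]
  have hY : IsCoc R (E (ind U)) := by
    refine ⟨h.mem' _, fun h' => hx (by rw [h']; rfl), fun w hw hs => ?_⟩
    obtain ⟨f, rfl⟩ := (h.mem w).1 hw
    obtain ⟨p, hp⟩ := hn.nonempty
    obtain ⟨q, hq⟩ := hn'.nonempty
    have key : ∀ e, (a e ∈ U ↔ b e ∈ U) → f (a e) = f (b e) := by
      intro e he
      by_cases hex : e = x
      · rw [hex, h.loop]
      · have := hs e (hYe' e hex he)
        rw [h.app _ e hex] at this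
        exact k_eq this
    have c1 := hU f (fun e _ h1 h2 => key e (by simp [h1, h2]))
    have c2 := hU' f (fun e _ h1 h2 => key e (by
      exact ⟨fun h' => absurd h' h1, fun h' => absurd h' h2⟩))
    have hf : f = f q • ind univ + (f p + f q) • ind U := by
      funext z
      by_cases hz : z ∈ U
      · simp [ind, hz, c1 z hz p hp]; grind
      · simp [ind, hz, c2 z hz q hq]
    have hE : E f = (f p + f q) • E (ind U) := by
      rw [hf, map_add, map_smul, map_smul, h.const (f := ind univ) (fun u v => by simp [ind]),
        smul_zero, zero_add, ← hf]
    rw [hE]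
    rcases k01 (f p + f q) with h' | h' <;> rw [h'] <;> simp
  have hin : ∀ {S : Set V}, Conn a b univ S → S.Nontrivial →
      ∃ e, a e ∈ S ∧ b e ∈ S ∧ a e ≠ b e := by
    intro S hS ⟨p, hp, q, hq, hpq⟩
    obtain ⟨p', hp', q', hq', e, -, h'⟩ := hS.exists_adj (S := {p}) hp hq rfl (Ne.symm hpq)
    have hne : p' ≠ q' := fun h => hq'.2 (h ▸ hp'.1)
    refine ⟨e, ?_⟩
    rcases h' with ⟨rfl, rfl⟩ | ⟨rfl, rfl⟩
    exacts [⟨hp'.2, hq'.1, hne⟩, ⟨hq'.1, hp'.2, hne.symm⟩]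
  obtain ⟨e, he1, he2, hne⟩ := hin hU hn
  obtain ⟨e', he1', he2', hne'⟩ := hin hU' hn'
  refine ⟨E (ind U), valid_of_sep (X := {e | e ≠ x ∧ a e ∈ U ∧ b e ∈ U}) hY ?_ (h.nl hne)
    ⟨h.ne_x hne, he1, he2⟩ (hYe' e (h.ne_x hne) (by simp [he1, he2])) (h.nl hne')
    (fun h' => he1' h'.2.1) (hYe' e' (h.ne_x hne') ⟨fun h => absurd h he1', fun h => absurd h he2'⟩)⟩
  intro w hw
  obtain ⟨f, rfl⟩ := (h.mem w).1 hw
  refine ⟨_, mem_loc.2 ⟨h.mem' (fun v => if v ∈ U then f v else 0), fun e he hy => ?_⟩,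
    fun e he => ?_⟩
  · have hex : e ≠ x := fun h' => hx (h' ▸ hy)
    have h1 := hYe e hy
    have h2 : a e ∉ U := fun h' => he ⟨hex, h', h1.1 h'⟩
    have h3 : b e ∉ U := fun h' => h2 (h1.2 h')
    rw [h.app _ e hex, if_neg h2, if_neg h3, add_zero]
  · rw [h.app _ e he.1, h.app _ e he.1, if_pos he.2.1, if_pos he.2.2]

/-- A non-graphic connected space with a graphic deletion of `x`, on at least six vertices, has a
cocircuit with at least two bridges. -/
lemma TRep.exists_valid [Finite α] [Finite V] (h : TRep R x a b E) (hg : ¬ Graphic R)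
    (hx : x ∈ NL R)
    (hns : ∀ X, GSep R X → (∃ e ∈ X, e ∈ NL R) → (∃ e, e ∉ X ∧ e ∈ NL R) → False)
    (hV : 6 ≤ Nat.card V) : ∃ Y B, Valid R Y B := by
  classical
  obtain ⟨t1, t2, t3, ht1, ht2, ht3, h12, h13, h23⟩ := h.three hg hx
  by_cases hcut : ∀ q, Conn a b univ {q}ᶜ
  · have hgrow := fun (U : Set V) (h1 : U.Nonempty) (h2 : Conn a b univ Uᶜ) (h3 : Uᶜ.Nontrivial) =>
      growth hcut h1 h2 h3
    by_cases hT : ∃ s, E (ind {s}) x = 0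
    · obtain ⟨s, hs⟩ := hT
      obtain ⟨U, ⟨hsU, hU, hUc, hUT⟩, hmax⟩ := exists_max
        (fun U : Set V => s ∈ U ∧ Conn a b univ U ∧ Conn a b univ Uᶜ ∧
          ∀ z ∈ U, E (ind {z}) x = 0) Set.ncard (Nat.card V) (fun U _ => Set.ncard_le_card _)
        ⟨{s}, rfl, conn_singleton s, hcut s, by rintro z rfl; exact hs⟩
      have n1 : t1 ∉ U := fun h => ht1 (hUT _ h)
      have n2 : t2 ∉ U := fun h => ht2 (hUT _ h)
      have n3 : t3 ∉ U := fun h => ht3 (hUT _ h)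
      obtain ⟨w, hw, ⟨u, hu, hadj⟩, hc⟩ := hgrow U ⟨s, hsU⟩ hUc ⟨t1, n1, t2, n2, h12⟩
      have hUw := hU.insert hu hadj
      have hwT : E (ind {w}) x ≠ 0 := by
        intro hw0
        have := hmax (insert w U) ⟨.inr hsU, hUw, hc, by
          rintro z (rfl | hz)
          exacts [hw0, hUT z hz]⟩
        rw [Set.ncard_insert_of_notMem hw (Set.toFinite U)] at this
        omega
      refine h.valid_of_bipartition hUw hc ⟨s, .inr hsU, w, .inl rfl, fun h => hw (h ▸ hsU)⟩ ?_ ?_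
      · have : ∀ t, t ∉ U → t ≠ w → t ∈ (insert w U)ᶜ := by
          rintro t ht htw (h' | h')
          exacts [htw h', ht h']
        by_cases e1 : t1 = w
        · exact ⟨t2, this t2 n2 (e1 ▸ h12.symm), t3, this t3 n3 (e1 ▸ h13.symm), h23⟩
        by_cases e2 : t2 = w
        · exact ⟨t1, this t1 n1 e1, t3, this t3 n3 (e2 ▸ h23.symm), h13⟩
        · exact ⟨t1, this t1 n1 e1, t2, this t2 n2 e2, h12⟩
      · rw [ind_insert hw, map_add, Pi.add_apply, TRep.tau_zero (f := ind U), add_zero]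
        · exact hwT
        · intro z hz
          exact ind_of_notMem fun hzU => hz (hUT z hzU)
    · push Not at hT
      have hnt : ∀ U : Set V, U.ncard ≤ 3 → Uᶜ.Nontrivial := by
        intro U hU
        rw [← Set.one_lt_ncard_iff_nontrivial]
        have := Set.ncard_add_ncard_compl U
        omega
      obtain ⟨w, hw, ⟨u, hu, hadj⟩, hc⟩ := hgrow {t1} ⟨t1, rfl⟩ (hcut t1) (hnt _ (by simp))
      have hUw := (conn_singleton t1).insert hu hadj
      have c2 : ({w, t1} : Set V).ncard ≤ 2 := (Set.ncard_insert_le _ _).trans (by simp)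
      obtain ⟨w', hw', ⟨u', hu', hadj'⟩, hc'⟩ := hgrow {w, t1} ⟨t1, .inr rfl⟩ hc
        (hnt _ (by omega))
      have hUw' := hUw.insert hu' hadj'
      refine h.valid_of_bipartition hUw' hc'
        ⟨w, .inr (.inl rfl), t1, .inr (.inr rfl), fun h => hw h⟩
        (hnt _ ((Set.ncard_insert_le _ _).trans (by omega))) ?_
      rw [ind_insert hw', ind_insert hw, map_add, map_add, Pi.add_apply, Pi.add_apply,
        k_one (hT w'), k_one (hT w), k_one (hT t1)]
      decide
  · push Not at hcut
    obtain ⟨v, hv⟩ := hcut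
    unfold Conn at hv
    push Not at hv
    obtain ⟨f, hf, u1, hu1, u2, hu2, hne⟩ := hv
    have main : ∀ u1 u2, u1 ≠ v → u2 ≠ v → f u1 = 1 → f u2 = 0 → ∃ Y B, Valid R Y B := by
      intro u1 u2 hu1 hu2 hf1 hf2
      have hc : CutV a b v {u | u ≠ v ∧ f u = 1} {u | u ≠ v ∧ f u = 0} := by
        refine ⟨fun u hu => ?_, ?_, ⟨fun h' => h'.1 rfl, fun h' => h'.1 rfl⟩, ⟨u1, hu1, hf1⟩,
          ⟨u2, hu2, hf2⟩, fun e => ⟨?_, ?_⟩⟩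
        · rcases k01 (f u) with h' | h'
          exacts [.inr ⟨hu, h'⟩, .inl ⟨hu, h'⟩]
        · rintro u ⟨-, h1⟩ ⟨-, h2⟩
          rw [h1] at h2; exact one_ne_zero h2
        · rintro ⟨⟨h1, h2⟩, h3, h4⟩
          have := hf e trivial h1 h3
          rw [h2, h4] at this; exact one_ne_zero this
        · rintro ⟨⟨h1, h2⟩, h3, h4⟩
          have := hf e trivial h1 h3
          rw [h2, h4] at this; exact zero_ne_one this
      set W := {u | u ≠ v ∧ f u = 1}
      set W' := {u | u ≠ v ∧ f u = 0}
      by_cases hW : W.Nontrivial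
      · exact hc.valid h hx hns hW
      by_cases hW' : W'.Nontrivial
      · exact hc.symm.valid h hx hns hW'
      exfalso
      rw [← Set.one_lt_ncard_iff_nontrivial] at hW hW'
      have h1 : insert v (W ∪ W') = univ := by
        refine eq_univ_of_forall fun u => ?_
        by_cases hu : u = v
        exacts [.inl hu, .inr (hc.cov u hu)]
      have h2 := Set.ncard_insert_le v (W ∪ W')
      have h3 := Set.ncard_union_le W W'
      rw [h1, ncard_univ] at h2
      omega
    rcases k01 (f u1) with h1 | h1 <;> rcases k01 (f u2) with h2 | h2
    · exact absurd (h1.trans h2.symm) hne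
    · exact main u2 u1 hu2 hu1 h2 h1
    · exact main u1 u2 hu1 hu2 h1 h2
    · exact absurd (h1.trans h2.symm) hne

end tau
end Core

section Core
variable {α : Type*} {V : Type}

/-! ### Cut spaces of large rank are recognised by single contractions -/

lemma Graphic.comp {β : Type*} {R : Submodule K (α → K)} (h : Graphic R) (g : β → α)
    (S : Submodule K (β → K)) (hS : ∀ w, w ∈ S ↔ ∃ r ∈ R, w = r ∘ g) : Graphic S := by
  obtain ⟨V, hV, a, b, hm⟩ := h
  refine ⟨V, hV, a ∘ g, b ∘ g, fun w => ?_⟩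
  rw [hS]
  constructor
  · rintro ⟨r, hr, rfl⟩
    obtain ⟨f, rfl⟩ := (hm r).1 hr
    exact ⟨f, rfl⟩
  · rintro ⟨f, rfl⟩
    exact ⟨_, (hm _).2 ⟨f, rfl⟩, rfl⟩

/-- The core theorem over a finite ground set, by induction on the number of nonzero coordinates:
deleting a coordinate keeps the hypotheses. -/
lemma core_finite [Finite α] (n : ℕ) : ∀ (R : Submodule K (α → K)), (NL R).ncard = n →
    11 ≤ Module.finrank K R → (∀ x ∈ NL R, Graphic (ctr R {x})) → Graphic R := by
  classical
  induction n using Nat.strong_induction_on with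
  | _ n ih =>
  intro R hn hr hall
  by_contra hg
  have hns : ∀ X, GSep R X → (∃ e ∈ X, e ∈ NL R) → (∃ e, e ∉ X ∧ e ∈ NL R) → False := by
    rintro X hX ⟨e, heX, he⟩ ⟨f, hfX, hf⟩
    exact hg (hX.graphic ((hall e he).mono (singleton_subset_iff.2 heX))
      ((hall f hf).mono (singleton_subset_iff.2 hfX)))
  obtain ⟨x, hx⟩ : ∃ x, x ∈ NL R := by
    by_contra hc
    push Not at hc
    have : R = ⊥ := by
      rw [eq_bot_iff]
      intro w hw
      rw [Submodule.mem_bot]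
      funext e
      by_contra h
      exact hc e ⟨w, hw, h⟩
    rw [this] at hr
    simp at hr
  have h0 : ∀ r ∈ R, (∀ e, e ≠ x → r e = 0) → r = 0 := by
    intro r hrR hre
    by_contra hr0
    have hrx : r x ≠ 0 := fun h => hr0 (funext fun e => by
      by_cases he : e = x
      · rw [he, h]; rfl
      · exact hre e he)
    refine hns {x} ?_ ⟨x, rfl, hx⟩ ?_
    · intro w hw
      by_cases hwx : w x = 0
      · exact ⟨0, R.zero_mem, by simp [hwx], by simp⟩
      · exact ⟨r, hrR, by simp [k_one hrx, k_one hwx], fun e he => hre e he⟩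
    · by_contra hc
      push Not at hc
      have hle : R ≤ Submodule.span K {r} := by
        intro w hw
        rw [Submodule.mem_span_singleton]
        refine ⟨w x, funext fun e => ?_⟩
        by_cases he : e = x
        · subst he; simp [k_one hrx]
        · have : w e = 0 := by
            by_contra h
            exact hc e he ⟨w, hw, h⟩
          simp [hre e he, this]
      have := (Submodule.finrank_mono hle).trans (finrank_span_le_card (R := K) {r})
      simp at this
      omega
  let T : R →ₗ[K] (α → K) :=
    { toFun := fun r => Function.update r.1 x 0
      map_add' := fun r s => by
        funext e; by_cases he : e = x
        · subst he; simp
        · simp [he]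
      map_smul' := fun c r => by
        funext e; by_cases he : e = x
        · subst he; simp
        · simp [he] }
  have hTapp : ∀ r : R, T r = Function.update r.1 x 0 := fun r => rfl
  have hT : Function.Injective T := by
    rw [← LinearMap.ker_eq_bot, LinearMap.ker_eq_bot']
    intro r h
    refine Subtype.ext (h0 r.1 r.2 fun e he => ?_)
    have := congrFun h e
    simpa [hTapp, he] using this
  have hrange : LinearMap.range T = dlt R x := by
    ext w
    rw [LinearMap.mem_range, mem_dlt]
    constructor
    · rintro ⟨r, rfl⟩
      exact ⟨by simp [hTapp], r.1, r.2, fun e he => by simp [hTapp, he]⟩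
    · rintro ⟨hwx, r, hr, hw⟩
      refine ⟨⟨r, hr⟩, funext fun e => ?_⟩
      by_cases he : e = x
      · subst he; simp [hTapp, hwx]
      · simp [hTapp, he, hw e he]
  have hfr : 11 ≤ Module.finrank K (dlt R x) := by
    rw [← hrange, LinearMap.finrank_range_of_inj hT]; exact hr
  have hNL : NL (dlt R x) ⊆ NL R \ {x} := by
    rintro e ⟨w, ⟨hwx, r, hr, hw⟩, hwe⟩
    have hex : e ≠ x := fun h => hwe (h ▸ hwx)
    exact ⟨⟨r, hr, by rwa [← hw e hex]⟩, hex⟩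
  have hgd : Graphic (dlt R x) := by
    refine ih (NL (dlt R x)).ncard ?_ _ rfl hfr fun y hy => ?_
    · rw [← hn]
      exact Set.ncard_lt_ncard (hNL.trans_ssubset (by
        rw [ssubset_iff_of_subset sdiff_subset]; exact ⟨x, hx, by simp⟩)) (Set.toFinite _)
    · rw [ctr_dlt R x y (hNL hy).2]
      exact (hall y (hNL hy).1).dlt x
  obtain ⟨V, hV, a, b, hrep⟩ := hgd.exists_gRep
  have hcard : 6 ≤ Nat.card V := by
    have := Fintype.ofFinite V
    let D : (V → K) →ₗ[K] (α → K) :=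
      { toFun := dl a b
        map_add' := dl_add a b
        map_smul' := fun c f => by funext e; simp [dl, mul_add] }
    have hle : dlt R x ≤ LinearMap.range D := by
      intro w hw
      obtain ⟨f, rfl⟩ := (hrep.mem w).1 hw
      exact ⟨f, rfl⟩
    have h1 := Submodule.finrank_mono hle
    have h2 := LinearMap.finrank_range_le D
    rw [Module.finrank_pi] at h2
    rw [Nat.card_eq_fintype_card]
    omega
  obtain ⟨E, hE⟩ := hrep.exists_tRep h0
  obtain ⟨Y, B, hv⟩ := hE.exists_valid hg hx hns hcard
  exact not_valid hg hall hr Y B hv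

/-- **Core theorem.** A finite binary space of dimension at least 11, all of whose contractions by
a nonzero coordinate are cut spaces, is a cut space. -/
theorem core (R : Submodule K (α → K)) (hfin : Finite R) (hr : 11 ≤ Module.finrank K R)
    (hall : ∀ x ∈ NL R, Graphic (ctr R {x})) : Graphic R := by
  classical
  -- coordinates on which all vectors of `R` agree are identified
  let ev : α → (R → K) := fun e r => r.1 e
  let β := range ev
  have : Finite β := inferInstance
  let g : α → β := rangeFactorization ev
  have hgs : Function.Surjective g := rangeFactorization_surjective
  let s : β → α := Function.surjInv hgs
  have hs : ∀ y, g (s y) = y := Function.surjInv_eq hgs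
  have hsg : ∀ (r : α → K), r ∈ R → ∀ e, r (s (g e)) = r e := by
    intro r hr e
    have : g (s (g e)) = g e := hs _
    have := congrArg Subtype.val this
    exact congrFun this ⟨r, hr⟩
  let P : R →ₗ[K] (β → K) :=
    { toFun := fun r => r.1 ∘ s
      map_add' := fun _ _ => rfl
      map_smul' := fun _ _ => rfl }
  have hP : Function.Injective P := by
    intro r r' h
    refine Subtype.ext (funext fun e => ?_)
    rw [← hsg r.1 r.2, ← hsg r'.1 r'.2]
    exact congrFun h (g e)
  have hback : ∀ r ∈ R, (r ∘ s) ∘ g = r := fun r hr => funext fun e => hsg r hr e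
  have hfr : Module.finrank K (LinearMap.range P) = Module.finrank K R :=
    LinearMap.finrank_range_of_inj hP
  have key : Graphic (LinearMap.range P) := by
    refine core_finite _ _ rfl (by omega) ?_
    rintro y ⟨_, ⟨r, rfl⟩, hy⟩
    refine (hall (s y) ⟨r.1, r.2, hy⟩).comp s _ fun w => ?_
    simp only [mem_ctr, mem_singleton_iff, forall_eq]
    constructor
    · rintro ⟨⟨r', rfl⟩, h⟩
      exact ⟨r'.1, ⟨r'.2, h⟩, rfl⟩
    · rintro ⟨r', ⟨h1, h2⟩, rfl⟩
      exact ⟨⟨⟨r', h1⟩, rfl⟩, h2⟩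
  refine key.comp g _ fun w => ?_
  constructor
  · intro hw
    exact ⟨w ∘ s, ⟨⟨w, hw⟩, rfl⟩, (hback w hw).symm⟩
  · rintro ⟨_, ⟨r, rfl⟩, rfl⟩
    show (r.1 ∘ s) ∘ g ∈ R
    rw [hback r.1 r.2]; exact r.2

end Core

section Cycles
variable {α : Type*} {R : Submodule K (α → K)}

/-! ### Cycles of a binary space and sets of nullity at most one -/

/-- `C` is a (possibly empty, possibly disconnected) cycle: it is orthogonal to `R`. -/
def Cyc (R : Submodule K (α → K)) (C : Finset α) : Prop := ∀ w ∈ R, ∑ e ∈ C, w e = 0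

/-- `I` contains no nonempty cycle. -/
def Ind0 (R : Submodule K (α → K)) (I : Finset α) : Prop := ∀ C ⊆ I, Cyc R C → C = ∅

/-- `I` contains at most one nonempty cycle, that is, has nullity at most one. -/
def Ind1 (R : Submodule K (α → K)) (I : Finset α) : Prop :=
  ∀ C ⊆ I, ∀ D ⊆ I, Cyc R C → Cyc R D → C.Nonempty → D.Nonempty → C = D

lemma sum_symmDiff [DecidableEq α] (w : α → K) (C D : Finset α) :
    ∑ e ∈ symmDiff C D, w e = ∑ e ∈ C, w e + ∑ e ∈ D, w e := by
  have h1 := Finset.sum_inter_add_sum_sdiff C D w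
  have h2 := Finset.sum_inter_add_sum_sdiff D C w
  have h3 : ∑ e ∈ symmDiff C D, w e = ∑ e ∈ C \ D, w e + ∑ e ∈ D \ C, w e := by
    rw [symmDiff_def, Finset.sup_eq_union, Finset.sum_union]
    exact disjoint_sdiff_sdiff
  rw [Finset.inter_comm D C] at h2
  rw [h3, ← h1, ← h2]
  grind

lemma Cyc.symmDiff [DecidableEq α] {C D : Finset α} (hC : Cyc R C) (hD : Cyc R D) :
    Cyc R (symmDiff C D) := fun w hw => by
  rw [sum_symmDiff, hC w hw, hD w hw, add_zero]

lemma Ind0.mono {I J : Finset α} (h : Ind0 R J) (hIJ : I ⊆ J) : Ind0 R I :=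
  fun C hC => h C (hC.trans hIJ)

lemma Ind1.mono {I J : Finset α} (h : Ind1 R J) (hIJ : I ⊆ J) : Ind1 R I :=
  fun C hC D hD => h C (hC.trans hIJ) D (hD.trans hIJ)

lemma not_cyc_singleton {e : α} (he : e ∈ NL R) : ¬ Cyc R {e} := by
  obtain ⟨w, hw, h⟩ := he
  intro hc
  exact h (by simpa using hc w hw)

lemma cyc_singleton {e : α} (he : e ∉ NL R) : Cyc R {e} := by
  intro w hw
  rw [Finset.sum_singleton]
  by_contra h
  exact he ⟨w, hw, h⟩

/-- One element raises the nullity by at most one. -/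
lemma Ind0.insert [DecidableEq α] {I : Finset α} (h : Ind0 R I) (y : α) :
    Ind1 R (insert y I) := by
  intro C hC D hD cC cD nC nD
  have key : ∀ C ⊆ Insert.insert y I, Cyc R C → C.Nonempty → y ∈ C := by
    intro C hC cC nC
    by_contra hy
    have : C ⊆ I := by grind
    exact nC.ne_empty (h C this cC)
  have h1 := key C hC cC nC
  have h2 := key D hD cD nD
  have := h (symmDiff C D) (by intro x; simp only [Finset.mem_symmDiff]; grind) (cC.symmDiff cD)
  exact symmDiff_eq_bot.1 this

lemma mem_cyc_zero [DecidableEq α] {I C : Finset α} {w : α → K} {y : α} (hw : w ∈ R)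
    (h0 : ∀ e ∈ I, w e = 0) (hy : w y ≠ 0) (hC : C ⊆ insert y I) (cC : Cyc R C) : C ⊆ I := by
  intro x hx
  by_contra hxI
  have hxy : x = y := by grind
  subst hxy
  have h1 : ∑ e ∈ C, w e = w x := Finset.sum_eq_single_of_mem x hx (fun b hb hbx => h0 b (by grind))
  exact hy (h1 ▸ cC w hw)

lemma Ind0.insert_of [DecidableEq α] {I : Finset α} (h : Ind0 R I) {w : α → K} {y : α}
    (hw : w ∈ R) (h0 : ∀ e ∈ I, w e = 0) (hy : w y ≠ 0) : Ind0 R (Insert.insert y I) :=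
  fun C hC cC => h C (mem_cyc_zero hw h0 hy hC cC) cC

lemma Ind1.insert_of [DecidableEq α] {I : Finset α} (h : Ind1 R I) {w : α → K} {y : α}
    (hw : w ∈ R) (h0 : ∀ e ∈ I, w e = 0) (hy : w y ≠ 0) : Ind1 R (insert y I) :=
  fun C hC D hD cC cD => h C (mem_cyc_zero hw h0 hy hC cC) D (mem_cyc_zero hw h0 hy hD cD) cC cD

lemma cyc_ctr [DecidableEq α] {e : α} (he : e ∈ NL R) {C : Finset α} (heC : e ∉ C) :
    Cyc (ctr R {e}) C ↔ Cyc R C ∨ Cyc R (insert e C) := by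
  constructor
  · intro h
    obtain ⟨w0, hw0, h0⟩ := he
    have key : ∀ w ∈ R, ∑ x ∈ C, w x = w e * ∑ x ∈ C, w0 x := by
      intro w hw
      have := h (w + w e • w0) ⟨R.add_mem hw (R.smul_mem _ hw0), by
        simp [k_one h0, k_self]⟩
      simp only [Pi.add_apply, Pi.smul_apply, smul_eq_mul, Finset.sum_add_distrib,
        ← Finset.mul_sum] at this
      exact k_eq this
    rcases k01 (∑ x ∈ C, w0 x) with hs | hs
    · left; intro w hw; rw [key w hw, hs, mul_zero]
    · right; intro w hw; rw [Finset.sum_insert heC, key w hw, hs, mul_one, k_self]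
  · rintro (h | h) w ⟨hw, hwe⟩
    · exact h w hw
    · have := h w hw
      rwa [Finset.sum_insert heC, hwe e rfl, zero_add] at this

lemma cyc_erase [DecidableEq α] {e : α} (he : e ∈ NL R) {C : Finset α} (h : Cyc R C) :
    Cyc (ctr R {e}) (C.erase e) := by
  rw [cyc_ctr he (Finset.notMem_erase e C)]
  by_cases heC : e ∈ C
  · right; rwa [Finset.insert_erase heC]
  · left; rwa [Finset.erase_eq_of_notMem heC]

lemma nonempty_erase [DecidableEq α] {e : α} (he : e ∈ NL R) {C : Finset α} (h : Cyc R C)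
    (hn : C.Nonempty) : (C.erase e).Nonempty := by
  by_contra hc
  rw [Finset.not_nonempty_iff_eq_empty, Finset.erase_eq_empty_iff] at hc
  rcases hc with hc | hc
  · exact hn.ne_empty hc
  · exact not_cyc_singleton he (hc ▸ h)

lemma ind0_ctr [DecidableEq α] {e : α} (he : e ∈ NL R) {I : Finset α} (heI : e ∉ I) :
    Ind0 (ctr R {e}) I ↔ Ind0 R (insert e I) := by
  constructor
  · intro h C hC cC
    by_contra hn
    have h1 := nonempty_erase he cC (Finset.nonempty_iff_ne_empty.2 hn)
    exact h1.ne_empty (h _ (by grind) (cyc_erase he cC))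
  · intro h C hC cC
    rcases (cyc_ctr he (fun h => heI (hC h))).1 cC with c | c
    · exact h C (hC.trans (Finset.subset_insert _ _)) c
    · have := h _ (Finset.insert_subset_insert e hC) c
      simp at this

lemma ind1_ctr [DecidableEq α] {e : α} (he : e ∈ NL R) {I : Finset α} (heI : e ∉ I) :
    Ind1 (ctr R {e}) I ↔ Ind1 R (insert e I) := by
  constructor
  · intro h C hC D hD cC cD nC nD
    have h1 : C.erase e = D.erase e := h _ (by grind) _ (by grind) (cyc_erase he cC)
      (cyc_erase he cD) (nonempty_erase he cC nC) (nonempty_erase he cD nD)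
    by_contra hne
    have h2 : symmDiff C D ⊆ {e} := by
      intro x hx
      by_contra hxe
      have := Finset.ext_iff.1 h1 x
      simp only [Finset.mem_symmDiff, Finset.mem_erase, Finset.mem_singleton] at *
      grind
    rcases Finset.subset_singleton_iff.1 h2 with h3 | h3
    · exact hne (symmDiff_eq_bot.1 h3)
    · exact not_cyc_singleton he (h3 ▸ cC.symmDiff cD)
  · intro h C hC D hD cC cD nC nD
    have key : ∀ C ⊆ I, Cyc (ctr R {e}) C → C.Nonempty →
        ∃ C' ⊆ insert e I, Cyc R C' ∧ C'.Nonempty ∧ C'.erase e = C := by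
      intro C hC cC nC
      have heC : e ∉ C := fun h => heI (hC h)
      rcases (cyc_ctr he heC).1 cC with c | c
      · exact ⟨C, hC.trans (Finset.subset_insert _ _), c, nC, Finset.erase_eq_of_notMem heC⟩
      · exact ⟨_, Finset.insert_subset_insert e hC, c, Finset.insert_nonempty _ _,
          Finset.erase_insert heC⟩
    obtain ⟨C', h1, h2, h3, rfl⟩ := key C hC cC nC
    obtain ⟨D', h1', h2', h3', rfl⟩ := key D hD cD nD
    rw [h C' h1 D' h1' h2 h2' h3 h3']

lemma ctr_of_loop {e : α} (he : e ∉ NL R) : ctr R {e} = R := by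
  ext w
  rw [mem_ctr]
  refine ⟨fun h => h.1, fun h => ⟨h, ?_⟩⟩
  rintro x rfl
  by_contra hx
  exact he ⟨w, h, hx⟩

/-- Duality: a coordinate that vanishes whenever those of `J` do is a sum of coordinates in `J`. -/
lemma dual_span [DecidableEq α] (J : Finset α) (y : α) : ∀ (R : Submodule K (α → K)),
    (∀ w ∈ R, (∀ j ∈ J, w j = 0) → w y = 0) → ∃ C ⊆ J, ∀ w ∈ R, w y = ∑ e ∈ C, w e := by
  induction J using Finset.induction_on with
  | empty =>
    intro R h
    exact ⟨∅, le_rfl, fun w hw => by simpa using h w hw (by simp)⟩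
  | insert j J hj ih =>
    intro R h
    obtain ⟨C, hC, hw⟩ := ih (ctr R {j}) (by
      rintro w ⟨hw, hwj⟩ hJ
      refine h w hw fun x hx => ?_
      rcases Finset.mem_insert.1 hx with rfl | hx
      · exact hwj x rfl
      · exact hJ x hx)
    by_cases hjl : j ∈ NL R
    · obtain ⟨w0, hw0, h0⟩ := hjl
      have key : ∀ w ∈ R, w y + ∑ x ∈ C, w x = w j * (w0 y + ∑ x ∈ C, w0 x) := by
        intro w hw'
        have := hw (w + w j • w0) ⟨R.add_mem hw' (R.smul_mem _ hw0), by
          simp [k_one h0, k_self]⟩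
        simp only [Pi.add_apply, Pi.smul_apply, smul_eq_mul, Finset.sum_add_distrib,
          ← Finset.mul_sum] at this
        grind
      rcases k01 (w0 y + ∑ x ∈ C, w0 x) with hs | hs
      · refine ⟨C, hC.trans (Finset.subset_insert _ _), fun w hw => ?_⟩
        have := key w hw
        rw [hs, mul_zero] at this
        exact k_eq this
      · refine ⟨insert j C, Finset.insert_subset_insert _ hC, fun w hw => ?_⟩
        rw [Finset.sum_insert (fun h => hj (hC h))]
        have := key w hw
        rw [hs, mul_one] at this
        grind
    · rw [ctr_of_loop hjl] at hw
      exact ⟨C, hC.trans (Finset.subset_insert _ _), hw⟩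

lemma dual_cyc [DecidableEq α] {J : Finset α} {y : α} (hy : y ∉ J)
    (h : ∀ w ∈ R, (∀ j ∈ J, w j = 0) → w y = 0) : ∃ C ⊆ J, Cyc R (insert y C) := by
  obtain ⟨C, hC, hw⟩ := dual_span J y R h
  exact ⟨C, hC, fun w hR => by
    rw [Finset.sum_insert (fun h => hy (hC h)), ← hw w hR, k_self]⟩

lemma Ind0.mem_NL {I : Finset α} (h : Ind0 R I) {e : α} (he : e ∈ I) : e ∈ NL R := by
  by_contra hc
  have := h {e} (by simpa using he) (cyc_singleton hc)
  simp at this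

lemma Ind0.card_le (I : Finset α) : ∀ (R : Submodule K (α → K)), Finite R →
    Ind0 R I → I.card ≤ Module.finrank K R := by
  classical
  induction I using Finset.induction_on with
  | empty => simp
  | insert e I he ih =>
    intro R hR h
    have hN := h.mem_NL (Finset.mem_insert_self e I)
    have hf : Finite (ctr R {e}) := Finite.of_injective
      (Submodule.inclusion (ctr_le R {e})) (Submodule.inclusion_injective _)
    have := ih (ctr R {e}) hf ((ind0_ctr hN he).2 h)
    have hlt : ctr R {e} < R := by
      refine lt_of_le_of_ne (ctr_le _ _) fun hc => ?_
      obtain ⟨w, hw, h0⟩ := hN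
      rw [← hc] at hw
      exact h0 (hw.2 e rfl)
    have : FiniteDimensional K R := Module.Finite.of_finite
    have := Submodule.finrank_lt_finrank_of_lt hlt
    rw [Finset.card_insert_of_notMem he]
    omega

lemma Ind1.card_le {I : Finset α} (hR : Finite R) (h : Ind1 R I) :
    I.card ≤ Module.finrank K R + 1 := by
  classical
  by_cases h0 : Ind0 R I
  · have := Ind0.card_le I R hR h0
    omega
  · simp only [Ind0] at h0
    push Not at h0
    obtain ⟨Z, hZ, cZ, nZ⟩ := h0
    obtain ⟨e, he⟩ := nZ
    have : Ind0 R (I.erase e) := by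
      intro C hC cC
      by_contra hne
      have := h C (hC.trans (Finset.erase_subset _ _)) Z hZ cC cZ
        (Finset.nonempty_iff_ne_empty.2 hne) ⟨e, he⟩
      subst this
      have := hC he
      simp at this
    have := Ind0.card_le _ R hR this
    rw [Finset.card_erase_of_mem (hZ he)] at this
    omega

lemma Graphic.finite (h : Graphic R) : Finite R := by
  obtain ⟨V, _, a, b, hm⟩ := h
  refine Finite.of_surjective (fun f : V → K => (⟨dl a b f, (hm _).2 ⟨f, rfl⟩⟩ : R)) ?_
  rintro ⟨w, hw⟩
  obtain ⟨f, rfl⟩ := (hm w).1 hw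
  exact ⟨f, rfl⟩

end Cycles

section Lift
variable {α : Type*} {R R₂ : Submodule K (α → K)} {N : Matroid α} {V : Type}

/-! ### Matroids represented by a binary space -/

/-- `N` is the lift matroid of the binary space `R`: independent sets have nullity at most one.
The condition is imposed on finite sets. -/
structure Lam (N : Matroid α) (R : Submodule K (α → K)) : Prop where
  off : ∀ w ∈ R, ∀ e, e ∉ N.E → w e = 0
  indep_iff : ∀ I : Finset α, ↑I ⊆ N.E → (N.Indep ↑I ↔ Ind1 R I)

/-- `N` is the binary matroid of `R`: independent sets have nullity zero. -/
structure Bn (N : Matroid α) (R : Submodule K (α → K)) : Prop where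
  off : ∀ w ∈ R, ∀ e, e ∉ N.E → w e = 0
  indep_iff : ∀ I : Finset α, ↑I ⊆ N.E → (N.Indep ↑I ↔ Ind0 R I)

/-- No cocircuit of `N` has fewer than three elements. -/
def Cos (N : Matroid α) : Prop := ∀ e f, ∃ B, N.IsBase B ∧ e ∉ B ∧ f ∉ B

/-- `N` has rank at least ten. -/
def Big (N : Matroid α) : Prop := ∃ B : Finset α, N.Indep ↑B ∧ 10 ≤ B.card

/-- Over `J`, the space `R` detects when an element extends an independent set. -/
def Det (N : Matroid α) (R : Submodule K (α → K)) (J : Finset α) : Prop :=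
  ∀ A : Finset α, J ⊆ A → N.Indep ↑A → ∀ x ∈ N.E, x ∉ A →
    (N.Indep (insert x ↑A) ↔ ∃ w ∈ R, (∀ y ∈ A, w y = 0) ∧ w x ≠ 0)

/-- `J` is independent and some further element of the ground set depends on it. -/
def HasDep (N : Matroid α) (J : Finset α) : Prop :=
  N.Indep ↑J ∧ ∃ h ∈ N.E, h ∉ J ∧ ¬ N.Indep (insert h ↑J)

lemma insert_sub {A : Finset α} [DecidableEq α] (hA : N.Indep ↑A) {x : α} (hx : x ∈ N.E) :
    ((insert x A : Finset α) : Set α) ⊆ N.E := by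
  rw [Finset.coe_insert]
  exact insert_subset hx hA.subset_ground

lemma Lam.det (h : Lam N R) {J : Finset α} (hJ : HasDep N J) : Det N R J := by
  classical
  obtain ⟨hJ, y, hy, hyJ, hd⟩ := hJ
  have h0 : ¬ Ind0 R J := by
    intro h0
    apply hd
    rw [← Finset.coe_insert, h.indep_iff _ (insert_sub hJ hy)]
    exact h0.insert y
  simp only [Ind0] at h0
  push Not at h0
  obtain ⟨Z, hZ, cZ, nZ⟩ := h0
  intro A hJA hA x hx hxA
  rw [← Finset.coe_insert, h.indep_iff _ (insert_sub hA hx)]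
  constructor
  · intro hi
    by_contra hc
    push Not at hc
    obtain ⟨C, hC, cC⟩ := dual_cyc hxA hc
    have := hi (insert x C) (Finset.insert_subset_insert x hC) Z
      ((hZ.trans hJA).trans (Finset.subset_insert _ _)) cC cZ (Finset.insert_nonempty _ _) nZ
    exact hxA (hJA (hZ (this ▸ Finset.mem_insert_self x C)))
  · rintro ⟨w, hw, hw0, hwx⟩
    exact ((h.indep_iff A hA.subset_ground).1 hA).insert_of hw hw0 hwx

lemma Bn.det (h : Bn N R) (J : Finset α) : Det N R J := by
  classical
  intro A hJA hA x hx hxA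
  rw [← Finset.coe_insert, h.indep_iff _ (insert_sub hA hx)]
  constructor
  · intro hi
    by_contra hc
    push Not at hc
    obtain ⟨C, hC, cC⟩ := dual_cyc hxA hc
    have := hi (insert x C) (Finset.insert_subset_insert x hC) cC
    simp at this
  · rintro ⟨w, hw, hw0, hwx⟩
    exact ((h.indep_iff A hA.subset_ground).1 hA).insert_of hw hw0 hwx

/-- A vector of minimal support with dependent complement is determined by `N` alone, hence lies in
every space that represents `N`. -/
lemma Lam.mem_of_min [N.RankFinite] (h : Lam N R) {w : α → K} (hw : w ∈ R) (hw0 : w ≠ 0)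
    (hmin : ∀ w' ∈ R, w' ≠ 0 → (∀ e, w e = 0 → w' e = 0) → w' = w)
    (hdep : ¬ N.Indep {e | e ∈ N.E ∧ w e = 0}) (hoff : ∀ w ∈ R₂, ∀ e, e ∉ N.E → w e = 0)
    (hdet : ∀ J, HasDep N J → Det N R₂ J) : w ∈ R₂ := by
  classical
  have hH : {e | e ∈ N.E ∧ w e = 0} ⊆ N.E := fun e he => he.1
  obtain ⟨J', hJ'⟩ := N.exists_isBasis {e | e ∈ N.E ∧ w e = 0} hH
  obtain ⟨J, rfl⟩ : ∃ J : Finset α, (J : Set α) = J' :=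
    ⟨hJ'.indep.finite.toFinset, by simp⟩
  have hJw : ∀ j ∈ J, w j = 0 := fun j hj => (hJ'.subset hj).2
  have ha : ∀ x ∈ N.E, w x = 0 → x ∉ J → ¬ N.Indep (insert x ↑J) := by
    intro x hx hwx hxJ hi
    exact hxJ (hJ'.mem_of_insert_indep ⟨hx, hwx⟩ hi)
  have hHD : HasDep N J := by
    refine ⟨hJ'.indep, ?_⟩
    have : ∃ x ∈ {e | e ∈ N.E ∧ w e = 0}, x ∉ (J : Set α) := by
      by_contra hc
      push Not at hc
      exact hdep (by rw [← Subset.antisymm hJ'.subset hc]; exact hJ'.indep)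
    obtain ⟨x, ⟨hx, hwx⟩, hxJ⟩ := this
    exact ⟨x, hx, hxJ, ha x hx hwx hxJ⟩
  have d1 := h.det hHD
  have d2 := hdet J hHD
  -- vectors vanishing on `J` vanish wherever `w` does
  have hz : ∀ R' : Submodule K (α → K), (∀ w ∈ R', ∀ e, e ∉ N.E → w e = 0) → Det N R' J →
      ∀ w' ∈ R', (∀ j ∈ J, w' j = 0) → ∀ e, w e = 0 → w' e = 0 := by
    intro R' ho hd w' hw' hJ0 e he
    by_contra hne
    have heE : e ∈ N.E := by
      by_contra hc
      exact hne (ho w' hw' e hc)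
    have heJ : e ∉ J := fun hc => hne (hJ0 e hc)
    exact ha e heE he heJ ((hd J le_rfl hJ'.indep e heE heJ).2 ⟨w', hw', hJ0, hne⟩)
  have hE : ∀ y, w y ≠ 0 → y ∈ N.E := fun y hy => by
    by_contra hc
    exact hy (h.off w hw y hc)
  have hnJ : ∀ y, w y ≠ 0 → y ∉ J := fun y hy hc => hy (hJw y hc)
  have hb : ∀ y, w y ≠ 0 → N.Indep (insert y ↑J) := fun y hy =>
    (d1 J le_rfl hJ'.indep y (hE y hy) (hnJ y hy)).2 ⟨w, hw, hJw, hy⟩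
  have hc : ∀ y y', w y ≠ 0 → w y' ≠ 0 → y' ≠ y → ¬ N.Indep (insert y' ↑(insert y J)) := by
    intro y y' hy hy' hne hi
    obtain ⟨w', hw', h0, h1⟩ := (d1 (insert y J) (Finset.subset_insert _ _)
      (by rw [Finset.coe_insert]; exact hb y hy) y' (hE y' hy')
      (by simp [hne, hnJ y' hy'])).1 hi
    have := hmin w' hw' (fun hc => h1 (by rw [hc]; rfl))
      (hz R h.off d1 w' hw' fun j hj => h0 j (Finset.mem_insert_of_mem hj))
    subst this
    exact hy (h0 y (Finset.mem_insert_self _ _))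
  obtain ⟨y, hy⟩ : ∃ y, w y ≠ 0 := by
    by_contra hcon
    push Not at hcon
    exact hw0 (funext hcon)
  obtain ⟨w2, hw2, h20, h2y⟩ := (d2 J le_rfl hJ'.indep y (hE y hy) (hnJ y hy)).1 (hb y hy)
  have : w2 = w := by
    funext x
    by_cases hx : w x = 0
    · rw [hx]; exact hz R₂ hoff d2 w2 hw2 h20 x hx
    · rw [k_one hx]
      apply k_one
      intro hx2
      by_cases hxy : y = x
      · subst hxy; exact h2y hx2
      refine hc x y hx hy hxy ((d2 (insert x J) (Finset.subset_insert _ _)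
        (by rw [Finset.coe_insert]; exact hb x hx) y (hE y hy) (by simp [hxy, hnJ y hy])).2
        ⟨w2, hw2, ?_, h2y⟩)
      intro z hz
      rcases Finset.mem_insert.1 hz with rfl | hz
      · exact hx2
      · exact h20 z hz
  exact this ▸ hw2

/-- Decomposing into vectors of minimal support removes the minimality assumption. -/
lemma Lam.mem_of_dep [N.RankFinite] (h : Lam N R) (hR : Finite R)
    (hoff : ∀ w ∈ R₂, ∀ e, e ∉ N.E → w e = 0)
    (hdet : ∀ J, HasDep N J → Det N R₂ J) {w : α → K} (hw : w ∈ R)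
    (hdep : ¬ N.Indep {e | e ∈ N.E ∧ w e = 0}) : w ∈ R₂ := by
  have hf : ∀ w : α → K, {r | r ∈ R ∧ ∀ e, w e = 0 → r e = 0}.Finite := fun w =>
    (Set.toFinite (R : Set (α → K))).subset fun r hr => hr.1
  obtain ⟨n, hn⟩ : ∃ n, n = {r | r ∈ R ∧ ∀ e, w e = 0 → r e = 0}.ncard := ⟨_, rfl⟩
  induction n using Nat.strong_induction_on generalizing w with
  | _ n ih =>
    by_cases hw0 : w = 0
    · rw [hw0]; exact R₂.zero_mem
    by_cases hmin : ∀ w' ∈ R, w' ≠ 0 → (∀ e, w e = 0 → w' e = 0) → w' = w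
    · exact h.mem_of_min hw hw0 hmin hdep hoff hdet
    push Not at hmin
    obtain ⟨w', hw', h0, hsub, hne⟩ := hmin
    have key : ∀ v ∈ R, (∀ e, w e = 0 → v e = 0) → (∃ e, w e ≠ 0 ∧ v e = 0) → v ∈ R₂ := by
      rintro v hv hvw ⟨e, hwe, hve⟩
      refine ih _ ?_ hv ?_ rfl
      · rw [hn]
        refine Set.ncard_lt_ncard ?_ (hf w)
        have hsub : {r | r ∈ R ∧ ∀ e, v e = 0 → r e = 0} ⊆ {r | r ∈ R ∧ ∀ e, w e = 0 → r e = 0} :=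
          fun r hr => ⟨hr.1, fun e he => hr.2 e (hvw e he)⟩
        rw [ssubset_iff_of_subset hsub]
        exact ⟨w, ⟨hw, fun _ h => h⟩, fun hc => hwe (hc.2 e hve)⟩
      · exact fun hi => hdep (hi.subset fun e he => ⟨he.1, hvw e he.2⟩)
    obtain ⟨e, he⟩ : ∃ e, w' e ≠ w e := by
      by_contra hc
      push Not at hc
      exact hne (funext hc)
    have hwe : w e ≠ 0 := fun hc => he (by rw [hc, hsub e hc])
    have hwe' : w' e = 0 := by
      by_contra hc
      exact he (by rw [k_one hc, k_one hwe])
    obtain ⟨f, hf'⟩ : ∃ f, w' f ≠ 0 := by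
      by_contra hc
      push Not at hc
      exact h0 (funext hc)
    have hwf : w f ≠ 0 := fun hc => hf' (hsub f hc)
    have m1 := key w' hw' hsub ⟨e, hwe, hwe'⟩
    have m2 := key (w + w') (R.add_mem hw hw') (fun x hx => by simp [hx, hsub x hx])
      ⟨f, hwf, by simp [k_one hwf, k_one hf', k_self]⟩
    have := R₂.add_mem m2 m1
    rwa [show w + w' + w' = w from funext fun x => by simp only [Pi.add_apply]; grind] at this

/-- A nonzero vector has at least three nonzero coordinates. -/
lemma Lam.three [N.RankFinite] (h : Lam N R) (hc : Cos N) {w : α → K} (hw : w ∈ R) (hw0 : w ≠ 0)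
    (e f : α) : ∃ x, w x ≠ 0 ∧ x ≠ e ∧ x ≠ f := by
  classical
  by_contra hcon
  push Not at hcon
  obtain ⟨B', hB', heB, hfB⟩ := hc e f
  obtain ⟨B, rfl⟩ : ∃ B : Finset α, (B : Set α) = B' := ⟨hB'.finite.toFinset, by simp⟩
  obtain ⟨y, hy⟩ : ∃ y, w y ≠ 0 := by
    by_contra hc
    push Not at hc
    exact hw0 (funext hc)
  have hB0 : ∀ x ∈ B, w x = 0 := by
    intro x hx
    by_contra hne
    by_cases hxe : x = e
    · exact heB (hxe ▸ hx)
    · exact hfB (hcon x hne hxe ▸ hx)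
  have hyE : y ∈ N.E := by
    by_contra hc
    exact hy (h.off w hw y hc)
  have hi : N.Indep (insert y ↑B) := by
    rw [← Finset.coe_insert, h.indep_iff _ (insert_sub hB'.indep hyE)]
    exact ((h.indep_iff B hB'.subset_ground).1 hB'.indep).insert_of hw hB0 hy
  have : y ∈ (B : Set α) := by
    rw [hB'.eq_of_subset_indep hi (subset_insert _ _)]
    exact mem_insert _ _
  exact hy (hB0 y this)

lemma GRep.finrank_le [Finite V] {a b : α → V} (h : GRep R a b) :
    Module.finrank K R ≤ Nat.card V := by
  have := Fintype.ofFinite V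
  let D : (V → K) →ₗ[K] (α → K) :=
    { toFun := dl a b
      map_add' := dl_add a b
      map_smul' := fun c f => by funext e; simp [dl, mul_add] }
  have hle : R ≤ LinearMap.range D := by
    intro w hw
    obtain ⟨f, rfl⟩ := (h.mem w).1 hw
    exact ⟨f, rfl⟩
  have h1 := Submodule.finrank_mono hle
  have h2 := LinearMap.finrank_range_le D
  rw [Module.finrank_pi] at h2
  rw [Nat.card_eq_fintype_card]
  omega

lemma star_ne {a b : α → V} {v : V} {e : α} (h : dl a b (ind {v}) e ≠ 0) :
    (v = a e ∧ v ≠ b e) ∨ (v = b e ∧ v ≠ a e) := by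
  have h1 : ind {v} (a e) ≠ ind {v} (b e) := fun hc => h (by rw [dl_apply, hc, k_self])
  rw [Ne, ind_eq_iff, mem_singleton_iff, mem_singleton_iff] at h1
  grind

/-- By double counting, at most one vertex star has an independent complement. -/
lemma Lam.not_two_stars [N.RankFinite] [Finite V] (h : Lam N R) (hc : Cos N) (hB : Big N)
    {a b : α → V} (hr : GRep R a b) {u v : V} (huv : u ≠ v)
    (hu : N.Indep {e | e ∈ N.E ∧ dl a b (ind {u}) e = 0})
    (hv : N.Indep {e | e ∈ N.E ∧ dl a b (ind {v}) e = 0}) : False := by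
  classical
  have := Fintype.ofFinite V
  have hRf : Finite R := hr.graphic.finite
  obtain ⟨A, hA⟩ : ∃ A : Finset α, (A : Set α) = {e | e ∈ N.E ∧ dl a b (ind {u}) e = 0} :=
    ⟨hu.finite.toFinset, by simp⟩
  obtain ⟨B, hB'⟩ : ∃ B : Finset α, (B : Set α) = {e | e ∈ N.E ∧ dl a b (ind {v}) e = 0} :=
    ⟨hv.finite.toFinset, by simp⟩
  have mA : ∀ e, e ∈ A ↔ e ∈ N.E ∧ dl a b (ind {u}) e = 0 := fun e => by
    rw [← Finset.mem_coe, hA]; rfl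
  have mB : ∀ e, e ∈ B ↔ e ∈ N.E ∧ dl a b (ind {v}) e = 0 := fun e => by
    rw [← Finset.mem_coe, hB']; rfl
  rw [← hA] at hu
  rw [← hB'] at hv
  have cA := ((h.indep_iff A hu.subset_ground).1 hu).card_le hRf
  have cB := ((h.indep_iff B hv.subset_ground).1 hv).card_le hRf
  have hn := hr.finrank_le
  rw [Nat.card_eq_fintype_card] at hn
  obtain ⟨I, hI, hI10⟩ := hB
  have cI := ((h.indep_iff I hI.subset_ground).1 hI).card_le hRf
  have hstar : ∀ v, dl a b (ind {v}) ≠ 0 := by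
    intro v h0
    have hconst := hr.conn (ind {v}) fun e => k_eq (congrFun h0 e)
    obtain ⟨v', hv'⟩ : ∃ v', v' ≠ v := by
      by_cases hvu : u = v
      · exact ⟨_, fun h => huv (hvu.trans h.symm)⟩
      · exact ⟨u, hvu⟩
    have := hconst v v'
    rw [ind_of_mem (mem_singleton v), ind_of_notMem (by simpa using hv')] at this
    exact one_ne_zero this
  let W : Finset V := Finset.univ.filter fun x => x ≠ u ∧ x ≠ v
  have hW : W.card + 2 = Fintype.card V := by
    have : W = Finset.univ \ {u, v} := by ext x; simp [W]
    rw [this, ← Finset.card_univ, ← Finset.card_pair huv]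
    exact Finset.card_sdiff_add_card_eq_card (Finset.subset_univ _)
  have hsupp : ∀ x ∈ W, ∀ e, dl a b (ind {x}) e ≠ 0 → e ∈ A ∪ B := by
    intro x hx e he
    have hxW : x ≠ u ∧ x ≠ v := by simpa [W] using hx
    have heE : e ∈ N.E := by
      by_contra hc
      exact he (h.off _ (hr.dl_mem _) e hc)
    by_contra hcon
    rw [Finset.mem_union, mA, mB] at hcon
    push Not at hcon
    have h1 := star_ne he
    have h2 := star_ne (hcon.1 heE)
    have h3 := star_ne (hcon.2 heE)
    grind
  have h3 : ∀ x ∈ W, 3 ≤ ((A ∪ B).filter fun e => dl a b (ind {x}) e ≠ 0).card := by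
    intro x hx
    have hm := hr.dl_mem (ind {x})
    obtain ⟨e0, -⟩ : ∃ e, dl a b (ind {x}) e ≠ 0 := by
      by_contra hc
      push Not at hc
      exact hstar x (funext hc)
    obtain ⟨p, hp, -, -⟩ := h.three hc hm (hstar x) e0 e0
    obtain ⟨q, hq, hqp, -⟩ := h.three hc hm (hstar x) p p
    obtain ⟨r, hr', hrp, hrq⟩ := h.three hc hm (hstar x) p q
    have h1 : ({p, q, r} : Finset α) ⊆ (A ∪ B).filter fun e => dl a b (ind {x}) e ≠ 0 := by
      intro y hy
      rw [Finset.mem_filter]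
      have : dl a b (ind {x}) y ≠ 0 := by
        simp only [Finset.mem_insert, Finset.mem_singleton] at hy
        rcases hy with rfl | rfl | rfl <;> assumption
      exact ⟨hsupp x hx y this, this⟩
    have h2 : ({p, q, r} : Finset α).card = 3 :=
      Finset.card_eq_three.2 ⟨p, q, r, hqp.symm, hrp.symm, hrq.symm, rfl⟩
    rw [← h2]
    exact Finset.card_le_card h1
  have hdouble : ∑ x ∈ W, ((A ∪ B).filter fun e => dl a b (ind {x}) e ≠ 0).card
      = ∑ e ∈ A ∪ B, (W.filter fun x => dl a b (ind {x}) e ≠ 0).card := by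
    simp only [Finset.card_filter]
    exact Finset.sum_comm
  have hedge : ∀ e ∈ A ∪ B, (W.filter fun x => dl a b (ind {x}) e ≠ 0).card ≤
      (if e ∈ A then 1 else 0) + (if e ∈ B then 1 else 0) := by
    intro e he
    have heE : e ∈ N.E := by
      rcases Finset.mem_union.1 he with he | he
      · exact ((mA e).1 he).1
      · exact ((mB e).1 he).1
    have hsub : (W.filter fun x => dl a b (ind {x}) e ≠ 0) ⊆ {a e, b e} := by
      intro x hx
      have := star_ne (Finset.mem_filter.1 hx).2
      simp only [Finset.mem_insert, Finset.mem_singleton]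
      grind
    have hone : ∀ t, (t = u ∨ t = v) → dl a b (ind {t}) e ≠ 0 →
        (W.filter fun x => dl a b (ind {x}) e ≠ 0).card ≤ 1 := by
      intro t ht hte
      rw [Finset.card_le_one]
      intro x hx y hy
      have h1 := star_ne hte
      have h2 := star_ne (Finset.mem_filter.1 hx).2
      have h3 := star_ne (Finset.mem_filter.1 hy).2
      have h4 : x ≠ u ∧ x ≠ v := by simpa [W] using (Finset.mem_filter.1 hx).1
      have h5 : y ≠ u ∧ y ≠ v := by simpa [W] using (Finset.mem_filter.1 hy).1
      grind
    by_cases h1 : e ∈ A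
    · by_cases h2 : e ∈ B
      · simp only [h1, h2, if_true]
        exact (Finset.card_le_card hsub).trans Finset.card_le_two
      · simp only [h1, h2, if_true, if_false]
        exact hone v (Or.inr rfl) fun hc => h2 ((mB e).2 ⟨heE, hc⟩)
    · have h2 : e ∈ B := (Finset.mem_union.1 he).resolve_left h1
      simp only [h1, h2, if_true, if_false]
      exact hone u (Or.inl rfl) fun hc => h1 ((mA e).2 ⟨heE, hc⟩)
  have hsum := Finset.sum_le_sum hedge
  rw [Finset.sum_add_distrib] at hsum
  have s1 : ∑ e ∈ A ∪ B, (if e ∈ A then 1 else 0) = A.card := by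
    rw [← Finset.card_filter]
    congr 1; ext x; simp only [Finset.mem_filter, Finset.mem_union]; tauto
  have s2 : ∑ e ∈ A ∪ B, (if e ∈ B then 1 else 0) = B.card := by
    rw [← Finset.card_filter]
    congr 1; ext x; simp only [Finset.mem_filter, Finset.mem_union]; tauto
  rw [s1, s2, ← hdouble] at hsum
  have hlow := Finset.card_nsmul_le_sum W _ 3 h3
  rw [smul_eq_mul] at hlow
  omega

/-- The space of a large lift matroid of a graph is contained in every space detecting
extensions. -/
lemma Lam.le [N.RankFinite] (h : Lam N R) (hg : Graphic R) (hc : Cos N) (hB : Big N)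
    (hoff : ∀ w ∈ R₂, ∀ e, e ∉ N.E → w e = 0)
    (hdet : ∀ J, HasDep N J → Det N R₂ J) : R ≤ R₂ := by
  classical
  have hRf := hg.finite
  obtain ⟨V, _, a, b, hr⟩ := hg.exists_gRep
  have := Fintype.ofFinite V
  have hst : ∀ v, ¬ N.Indep {e | e ∈ N.E ∧ dl a b (ind {v}) e = 0} → dl a b (ind {v}) ∈ R₂ :=
    fun v hv => h.mem_of_dep hRf hoff hdet (hr.dl_mem _) hv
  have hsum : ∀ f : V → K, (∀ v, f v ≠ 0 → dl a b (ind {v}) ∈ R₂) → dl a b f ∈ R₂ := by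
    intro f hf
    have hfs : f = ∑ v ∈ Finset.univ.filter (fun v => f v ≠ 0), ind {v} := by
      funext x
      rw [Finset.sum_apply]
      by_cases hx : f x = 0
      · rw [hx, Finset.sum_eq_zero]
        intro v hv
        apply ind_of_notMem
        rintro rfl
        exact (Finset.mem_filter.1 hv).2 hx
      · rw [Finset.sum_eq_single_of_mem x (by simp [hx]) (fun y _ hyx =>
          ind_of_notMem fun hc => hyx hc.symm), ind_of_mem (mem_singleton _), k_one hx]
    have hdl : ∀ s : Finset V, (∀ v ∈ s, dl a b (ind {v}) ∈ R₂) →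
        dl a b (∑ v ∈ s, ind {v}) ∈ R₂ := by
      intro s
      induction s using Finset.induction_on with
      | empty =>
        intro _
        rw [Finset.sum_empty, show dl a b 0 = 0 from funext fun e => by simp [dl]]
        exact R₂.zero_mem
      | insert v s hv ih =>
        intro hs
        rw [Finset.sum_insert hv, dl_add]
        exact R₂.add_mem (hs v (Finset.mem_insert_self _ _))
          (ih fun x hx => hs x (Finset.mem_insert_of_mem hx))
    rw [hfs]
    exact hdl _ fun v hv => hf v (Finset.mem_filter.1 hv).2
  intro w hw
  obtain ⟨f, rfl⟩ := (hr.mem w).1 hw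
  by_cases hbad : ∃ v0, N.Indep {e | e ∈ N.E ∧ dl a b (ind {v0}) e = 0}
  · obtain ⟨v0, h0⟩ := hbad
    -- adding a constant to `f`, it may be assumed to vanish at the exceptional vertex
    have hfe : dl a b f = dl a b (fun v => f v + f v0) := by
      funext e; simp only [dl]; grind
    rw [hfe]
    refine hsum _ fun v hv => hst v fun hi => ?_
    have hne : v ≠ v0 := by rintro rfl; exact hv (k_self _)
    exact h.not_two_stars hc hB hr hne hi h0
  · push Not at hbad
    exact hsum f fun v _ => hst v (hbad v)

lemma Lam.unique [N.RankFinite] (h : Lam N R) (h₂ : Lam N R₂) (hg : Graphic R) (hg₂ : Graphic R₂)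
    (hc : Cos N) (hB : Big N) : R = R₂ :=
  le_antisymm (h.le hg hc hB h₂.off fun _ => h₂.det) (h₂.le hg₂ hc hB h.off fun _ => h.det)

/-- Large lift matroids of graphs are not binary. -/
lemma Lam.not_bn [N.RankFinite] (h : Lam N R) (hg : Graphic R) (hc : Cos N) (hB : Big N) :
    ¬ Bn N R₂ := by
  classical
  intro hb
  have hle : R ≤ R₂ := h.le hg hc hB hb.off fun J _ => hb.det J
  have hRf := hg.finite
  obtain ⟨J, hJ, hmax⟩ := exists_max (fun J : Finset α => Ind0 R J) (fun J => J.card)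
    (Module.finrank K R) (fun J hJ => Ind0.card_le J R hRf hJ)
    ⟨∅, fun C hC _ => Finset.subset_empty.1 hC⟩
  have hcl : ∀ x, x ∉ J → ∀ w ∈ R, (∀ j ∈ J, w j = 0) → w x = 0 := by
    intro x hx w hw h0
    by_contra hne
    have := hmax _ (hJ.insert_of hw h0 hne)
    rw [Finset.card_insert_of_notMem hx] at this
    omega
  obtain ⟨e, he⟩ : ∃ e, e ∈ J := by
    by_contra hcon
    push Not at hcon
    obtain ⟨I, hI, hI10⟩ := hB
    have hI1 := (h.indep_iff I hI.subset_ground).1 hI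
    obtain ⟨x, hx, y, hy, hxy⟩ := Finset.one_lt_card.1 (by omega : 1 < I.card)
    have hloop : ∀ z, Cyc R {z} := fun z w hw => by
      rw [Finset.sum_singleton]
      exact hcl z (hcon z) w hw fun j hj => absurd hj (hcon j)
    have := hI1 {x} (by simpa using hx) {y} (by simpa using hy) (hloop x) (hloop y)
      (Finset.singleton_nonempty _) (Finset.singleton_nonempty _)
    exact hxy (Finset.singleton_injective this)
  have hJe : Ind0 R (J.erase e) := hJ.mono (Finset.erase_subset _ _)
  obtain ⟨w, hw, hw0, hwe⟩ : ∃ w ∈ R, (∀ j ∈ J.erase e, w j = 0) ∧ w e ≠ 0 := by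
    by_contra hcon
    push Not at hcon
    obtain ⟨C, hC, cC⟩ := dual_cyc (Finset.notMem_erase e J) hcon
    have := hJ (insert e C) (by grind) cC
    simp at this
  have hne : w ≠ 0 := fun hc => hwe (by rw [hc]; rfl)
  obtain ⟨f, hf, hfe, -⟩ := h.three hc hw hne e e
  obtain ⟨g, hg', hge, hgf⟩ := h.three hc hw hne e f
  have hE : ∀ y ∈ NL R, y ∈ N.E := by
    rintro y ⟨r, hr, hy⟩
    by_contra hc
    exact hy (h.off r hr y hc)
  have hfE := hE f ⟨w, hw, hf⟩
  have hgE := hE g ⟨w, hw, hg'⟩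
  have hfJ : f ∉ J := fun hc => hf (hw0 f (by simp [hc, hfe]))
  have hgJ : g ∉ J := fun hc => hg' (hw0 g (by simp [hc, hge]))
  have hJE : ∀ x ∈ J, x ∈ N.E := fun x hx => hE x (hJ.mem_NL hx)
  have i0 : ∀ I : Finset α, (∀ x ∈ I, x ∈ insert f (insert g J)) → Ind1 R I → Ind0 R₂ I := by
    intro I hI h1
    have hIE : (I : Set α) ⊆ N.E := by
      intro x hx
      have := hI x hx
      simp only [Finset.mem_insert] at this
      rcases this with rfl | rfl | hx
      exacts [hfE, hgE, hJE x hx]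
    exact (hb.indep_iff I hIE).1 ((h.indep_iff I hIE).2 h1)
  have i1 := i0 (insert f J) (by grind) (hJ.insert f)
  have i2 := i0 (insert g J) (by grind) (hJ.insert g)
  have i3 := i0 (insert g (insert f (J.erase e))) (by grind)
    ((hJe.insert_of hw hw0 hf).insert g)
  have hsub : ((insert f (insert g J) : Finset α) : Set α) ⊆ N.E := by
    intro x hx
    simp only [Finset.coe_insert, Set.mem_insert_iff, Finset.mem_coe] at hx
    rcases hx with rfl | rfl | hx
    exacts [hfE, hgE, hJE x hx]
  have hall : Ind0 R₂ (insert f (insert g J)) := by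
    intro Z hZ cZ
    have cR : Cyc R Z := fun w hw => cZ w (hle hw)
    by_cases hfZ : f ∈ Z
    · by_cases hgZ : g ∈ Z
      · refine i3 Z ?_ cZ
        have heZ : e ∉ Z := by
          intro heZ
          have h1 := cR w hw
          have h2 : ∑ x ∈ ({e, f, g} : Finset α), w x = ∑ x ∈ Z, w x := by
            refine Finset.sum_subset (by intro x; simp; grind) fun x hx hx' => ?_
            simp only [Finset.mem_insert, Finset.mem_singleton, not_or] at hx'
            have := hZ hx
            simp only [Finset.mem_insert] at this
            exact hw0 x (by grind)
          rw [← h2, Finset.sum_insert (by simp [hfe.symm, hge.symm]),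
            Finset.sum_insert (by simp [hgf.symm]), Finset.sum_singleton, k_one hwe, k_one hf,
            k_one hg'] at h1
          revert h1; decide
        intro x hx
        have := hZ hx
        simp only [Finset.mem_insert, Finset.mem_erase] at this ⊢
        grind
      · exact i1 Z (by grind) cZ
    · exact i2 Z (by grind) cZ
  have hlast := (h.indep_iff _ hsub).1 ((hb.indep_iff _ hsub).2 hall)
  obtain ⟨C, hC, cC⟩ := dual_cyc hfJ (hcl f hfJ)
  obtain ⟨D, hD, cD⟩ := dual_cyc hgJ (hcl g hgJ)
  have := hlast (insert f C) (by grind) (insert g D) (by grind) cC cD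
    (Finset.insert_nonempty _ _) (Finset.insert_nonempty _ _)
  have hfm : f ∈ insert g D := this ▸ Finset.mem_insert_self f C
  rcases Finset.mem_insert.1 hfm with h1 | h1
  · exact hgf h1.symm
  · exact hfJ (hD h1)

end Lift

section Glue
variable {α : Type*} {R R₂ : Submodule K (α → K)} {N M : Matroid α}

/-! ### Gluing the representations of the single-element contractions -/

lemma Lam.nonloop (h : Lam N R) {e : α} (he : e ∈ NL R) : N.IsNonloop e := by
  have heE : e ∈ N.E := by
    obtain ⟨w, hw, hwe⟩ := he
    by_contra hc
    exact hwe (h.off w hw e hc)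
  rw [← indep_singleton, ← Finset.coe_singleton, h.indep_iff _ (by simpa using heE)]
  intro C hC D hD _ _ nC nD
  rw [(Finset.subset_singleton_iff.1 hC).resolve_left nC.ne_empty,
    (Finset.subset_singleton_iff.1 hD).resolve_left nD.ne_empty]

lemma con_sub {e : α} {I : Finset α} (hI : (I : Set α) ⊆ (N ／ {e}).E) :
    (I : Set α) ⊆ N.E ∧ e ∉ I := by
  rw [contract_ground] at hI
  exact ⟨fun x hx => (hI hx).1, fun h => (hI h).2 rfl⟩

lemma con_indep [DecidableEq α] {e : α} (he : N.IsNonloop e) {I : Finset α} (heI : e ∉ I) :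
    (N ／ {e}).Indep ↑I ↔ N.Indep ↑(insert e I) := by
  rw [he.contractElem_indep_iff, Finset.coe_insert]
  simp [heI]

lemma insert_sub' [DecidableEq α] {e : α} (he : e ∈ N.E) {I : Finset α} (hI : (I : Set α) ⊆ N.E) :
    ((insert e I : Finset α) : Set α) ⊆ N.E := by
  rw [Finset.coe_insert]; exact insert_subset he hI

lemma off_ctr (h : ∀ w ∈ R, ∀ e, e ∉ N.E → w e = 0) (e : α) :
    ∀ w ∈ ctr R {e}, ∀ x, x ∉ (N ／ {e}).E → w x = 0 := by
  rintro w ⟨hw, hwe⟩ x hx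
  by_cases hxe : x = e
  · exact hwe x hxe
  · exact h w hw x fun hc => hx ⟨hc, hxe⟩

lemma Lam.con (h : Lam N R) {e : α} (he : e ∈ NL R) : Lam (N ／ {e}) (ctr R {e}) := by
  classical
  refine ⟨off_ctr h.off e, fun I hI => ?_⟩
  obtain ⟨h1, h2⟩ := con_sub hI
  rw [con_indep (h.nonloop he) h2, ind1_ctr he h2,
    h.indep_iff _ (insert_sub' (h.nonloop he).mem_ground h1)]

lemma Bn.con (h : Bn N R) {e : α} (he : N.IsNonloop e) : Bn (N ／ {e}) (ctr R {e}) := by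
  classical
  have heR : e ∈ NL R := by
    refine Ind0.mem_NL (I := {e}) ?_ (Finset.mem_singleton_self e)
    rw [← h.indep_iff _ (by simpa using he.mem_ground), Finset.coe_singleton]
    exact indep_singleton.2 he
  refine ⟨off_ctr h.off e, fun I hI => ?_⟩
  obtain ⟨h1, h2⟩ := con_sub hI
  rw [con_indep he h2, ind0_ctr heR h2, h.indep_iff _ (insert_sub' he.mem_ground h1)]

/-- Contracting an element that is a loop of `R` but not of `N` gives a binary matroid. -/
lemma Lam.con_loop (h : Lam N R) {e : α} (he : N.IsNonloop e) (heR : e ∉ NL R) :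
    Bn (N ／ {e}) R := by
  classical
  refine ⟨?_, fun I hI => ?_⟩
  · have := off_ctr h.off e
    rwa [ctr_of_loop heR] at this
  · obtain ⟨h1, h2⟩ := con_sub hI
    rw [con_indep he h2, h.indep_iff _ (insert_sub' he.mem_ground h1)]
    constructor
    · intro h C hC cC
      by_contra hne
      have := h C (hC.trans (Finset.subset_insert _ _)) {e} (by simp) cC (cyc_singleton heR)
        (Finset.nonempty_iff_ne_empty.2 hne) (Finset.singleton_nonempty _)
      exact h2 (hC (this ▸ Finset.mem_singleton_self e))
    · exact fun h => h.insert e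

lemma exists_con_base {c : α} (hc : N.IsNonloop c) {B : Set α} (hB : N.IsBase B) :
    ∃ B', (N ／ {c}).IsBase B' ∧ B' ⊆ B ∧ B.encard ≤ B'.encard + 1 := by
  have hi : N.Indep {c} := indep_singleton.2 hc
  obtain ⟨B₁, hB₁, h1, h2⟩ := hi.exists_isBase_subset_union_isBase hB
  refine ⟨B₁ \ {c}, ?_, ?_, ?_⟩
  · rw [hi.contract_isBase_iff, sdiff_union_of_subset h1]
    exact ⟨hB₁, disjoint_sdiff_left⟩
  · rintro x ⟨hx, hxc⟩
    exact (h2 hx).resolve_left hxc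
  · rw [hB.encard_eq_encard_of_isBase hB₁, encard_sdiff_singleton_add_one (h1 rfl)]

lemma Cos.con (h : Cos N) {c : α} (hc : N.IsNonloop c) : Cos (N ／ {c}) := by
  intro e f
  obtain ⟨B, hB, he, hf⟩ := h e f
  obtain ⟨B', hB', hs, -⟩ := exists_con_base hc hB
  exact ⟨B', hB', fun h => he (hs h), fun h => hf (hs h)⟩

/-- `N` has rank at least `n`. -/
def RkGe (N : Matroid α) (n : ℕ) : Prop := ∃ B : Finset α, N.Indep ↑B ∧ n ≤ B.card

lemma RkGe.big (h : RkGe N 10) : Big N := h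

lemma RkGe.mono {m n : ℕ} (h : RkGe N n) (hmn : m ≤ n) : RkGe N m := by
  obtain ⟨B, hB, hc⟩ := h
  exact ⟨B, hB, hmn.trans hc⟩

lemma RkGe.con [N.RankFinite] {n : ℕ} (h : RkGe N (n + 1)) {c : α} (hc : N.IsNonloop c) :
    RkGe (N ／ {c}) n := by
  obtain ⟨I, hI, hn⟩ := h
  obtain ⟨B, hB, hIB⟩ := hI.exists_isBase_superset
  obtain ⟨B', hB', -, hcard⟩ := exists_con_base hc hB
  obtain ⟨J, rfl⟩ : ∃ J : Finset α, (J : Set α) = B' := ⟨hB'.finite.toFinset, by simp⟩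
  refine ⟨J, hB'.indep, ?_⟩
  have h1 := (encard_le_encard hIB).trans hcard
  rw [encard_coe_eq_coe_finsetCard, encard_coe_eq_coe_finsetCard] at h1
  have : I.card ≤ J.card + 1 := by exact_mod_cast h1
  omega

/-- The properties of the matroid `M` used in the gluing: no loops, no small cocircuits, large
finite rank, and every contraction of an element is binary or a lift of a graph. -/
structure Setup (M : Matroid α) : Prop where
  fin : M.RankFinite
  loopless : ∀ e ∈ M.E, M.IsNonloop e
  cos : Cos M
  rk : RkGe M 12
  con : ∀ e ∈ M.E, (∃ R, Bn (M ／ {e}) R) ∨ ∃ R, Lam (M ／ {e}) R ∧ Graphic R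

lemma Setup.step (hM : Setup M) {c e : α} (hcE : c ∈ M.E) (h : Lam (M ／ {c}) R)
    (hg : Graphic R) (he : e ∈ NL R) : ∃ R₂, Lam (M ／ {e}) R₂ ∧ Graphic R₂ ∧ e ∈ M.E ∧
      c ∈ NL R₂ ∧ ctr R₂ {c} = ctr R {e} := by
  have := hM.fin
  have hnc := hM.loopless c hcE
  have hne := h.nonloop he
  have heE : e ∈ M.E := hne.mem_ground.1
  have hec : e ≠ c := hne.mem_ground.2
  have hnE := hM.loopless e heE
  have hcos : Cos (M ／ {c} ／ {e}) := (hM.cos.con hnc).con hne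
  have hbig : Big (M ／ {c} ／ {e}) := ((hM.rk.con hnc).con hne).big
  have hL := h.con he
  have hLg := hg.ctr {e}
  have hcomm : M ／ {e} ／ {c} = M ／ {c} ／ {e} := contract_comm _ _ _
  have hnb : ∀ R', ¬ Bn (M ／ {c} ／ {e}) R' := fun R' => hL.not_bn hLg hcos hbig
  have hcn : (M ／ {e}).IsNonloop c := by
    rw [← indep_singleton, hnE.contractElem_indep_iff]
    refine ⟨hec, ?_⟩
    have := (hnc.contractElem_indep_iff).1 (indep_singleton.2 hne)
    rw [pair_comm]
    exact this.2
  rcases hM.con e heE with ⟨R', hb⟩ | ⟨R₂, h2, hg2⟩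
  · have := hb.con hcn
    rw [hcomm] at this
    exact absurd this (hnb _)
  · have hcR : c ∈ NL R₂ := by
      by_contra hc
      have := h2.con_loop hcn hc
      rw [hcomm] at this
      exact hnb _ this
    refine ⟨R₂, h2, hg2, heE, hcR, ?_⟩
    have := h2.con hcR
    rw [hcomm] at this
    exact this.unique hL (hg2.ctr {c}) hLg hcos hbig

/-- The contraction of `R` by `e` represents the contraction of `M` by `e`. -/
structure Good (M : Matroid α) (R : Submodule K (α → K)) (e : α) : Prop where
  mem : e ∈ M.E
  lam : Lam (M ／ {e}) (ctr R {e})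
  gr : Graphic (ctr R {e})

/-- The coordinates `p`, `q`, `e` are linearly independent functionals on `R`. -/
def LI3 (R : Submodule K (α → K)) (p q e : α) : Prop :=
  ∀ i j k : K, ∃ w ∈ R, w p = i ∧ w q = j ∧ w e = k

lemma Good.extend (hM : Setup M) {p q e : α} (hp : Good M R p) (hq : Good M R q)
    (h : LI3 R p q e) : Good M R e := by
  have hFin := hM.fin
  obtain ⟨w1, hw1, h1p, h1q, h1e⟩ := h 0 0 1
  obtain ⟨S, hS, hgS, heE, -, hSp⟩ := hM.step hp.mem hp.lam hp.gr
    (e := e) ⟨w1, ⟨hw1, by simpa using h1p⟩, by simp [h1e]⟩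
  obtain ⟨S', hS', hgS', -, -, hSq⟩ := hM.step hq.mem hq.lam hq.gr
    (e := e) ⟨w1, ⟨hw1, by simpa using h1q⟩, by simp [h1e]⟩
  have hne := hM.loopless e heE
  obtain rfl : S = S' := hS.unique hS' hgS hgS' (hM.cos.con hne)
    ((hM.rk.con hne).mono (by norm_num)).big
  have mp : ∀ w, (w ∈ S ∧ w p = 0) ↔ (w ∈ R ∧ w p = 0 ∧ w e = 0) := by
    intro w
    have := SetLike.ext_iff.1 hSp w
    simp only [mem_ctr, mem_singleton_iff, forall_eq, and_assoc] at this
    exact this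
  have mq : ∀ w, (w ∈ S ∧ w q = 0) ↔ (w ∈ R ∧ w q = 0 ∧ w e = 0) := by
    intro w
    have := SetLike.ext_iff.1 hSq w
    simp only [mem_ctr, mem_singleton_iff, forall_eq, and_assoc] at this
    exact this
  obtain ⟨y, hy, hyp, hyq, hye⟩ := h 1 0 0
  have hyS : y ∈ S := ((mq y).2 ⟨hy, hyq, hye⟩).1
  have hSR : S = ctr R {e} := by
    ext x
    rw [mem_ctr]
    simp only [mem_singleton_iff, forall_eq]
    constructor
    · intro hx
      rcases k01 (x p) with h0 | h0
      · have := (mp x).1 ⟨hx, h0⟩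
        exact ⟨this.1, this.2.2⟩
      · have := (mp (x + y)).1 ⟨S.add_mem hx hyS, by simp [h0, hyp, k_self]⟩
        refine ⟨?_, by simpa [hye] using this.2.2⟩
        have := R.add_mem this.1 hy
        rwa [show x + y + y = x from funext fun z => by simp only [Pi.add_apply]; grind] at this
    · rintro ⟨hx, hxe⟩
      rcases k01 (x p) with h0 | h0
      · exact ((mp x).2 ⟨hx, h0, hxe⟩).1
      · have := ((mp (x + y)).2 ⟨R.add_mem hx hy, by simp [h0, hyp, k_self], by simp [hxe, hye]⟩).1
        have := S.add_mem this hyS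
        rwa [show x + y + y = x from funext fun z => by simp only [Pi.add_apply]; grind] at this
  exact ⟨heE, hSR ▸ hS, hSR ▸ hgS⟩

/-- If `p`, `q` are independent on `R`, either `e` is independent of them or it is a combination. -/
lemma li3_or {p q : α} {u v : α → K} (hu : u ∈ R) (hv : v ∈ R) (up : u p = 1) (uq : u q = 0)
    (vp : v p = 0) (vq : v q = 1) (e : α) :
    LI3 R p q e ∨ ∃ i j : K, ∀ w ∈ R, w e = i * w p + j * w q := by
  by_cases h : ∃ w ∈ R, w e ≠ u e * w p + v e * w q
  · obtain ⟨w, hw, hne⟩ := h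
    left
    have hx : ∃ x ∈ R, x p = 0 ∧ x q = 0 ∧ x e = 1 := by
      refine ⟨w + w p • u + w q • v,
        R.add_mem (R.add_mem hw (R.smul_mem _ hu)) (R.smul_mem _ hv), ?_, ?_, ?_⟩
      · simp [up, vp, k_self]
      · simp [uq, vq, k_self]
      · apply k_one
        intro h0
        simp only [Pi.add_apply, Pi.smul_apply, smul_eq_mul] at h0
        grind
    obtain ⟨x, hx, xp, xq, xe⟩ := hx
    intro i j k
    refine ⟨i • u + j • v + (k + i * u e + j * v e) • x,
      R.add_mem (R.add_mem (R.smul_mem _ hu) (R.smul_mem _ hv)) (R.smul_mem _ hx), ?_, ?_, ?_⟩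
    · simp [up, vp, xp]
    · simp [uq, vq, xq]
    · simp only [Pi.add_apply, Pi.smul_apply, smul_eq_mul, xe]; grind
  · push Not at h
    exact Or.inr ⟨_, _, h⟩

lemma LI3.or' {p q r : α} (h : LI3 R p q r) (e : α) :
    LI3 R p q e ∨ ∃ i j : K, ∀ w ∈ R, w e = i * w p + j * w q := by
  obtain ⟨u, hu, up, uq, -⟩ := h 1 0 0
  obtain ⟨v, hv, vp, vq, -⟩ := h 0 1 0
  exact li3_or hu hv up uq vp vq e

/-- Three good independent coordinates make every nonzero coordinate good. -/
lemma good_all (hM : Setup M) {c p q : α} (hc : Good M R c) (hp : Good M R p)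
    (h : LI3 R c p q) {e : α} (he : e ∈ NL R) : Good M R e := by
  have hq := hc.extend hM hp h
  have h1 : LI3 R p q c := fun i j k => by
    obtain ⟨w, hw, h1, h2, h3⟩ := h k i j; exact ⟨w, hw, h2, h3, h1⟩
  have h2 : LI3 R c q p := fun i j k => by
    obtain ⟨w, hw, h1, h2, h3⟩ := h i k j; exact ⟨w, hw, h1, h3, h2⟩
  rcases h.or' e with a | ⟨i, j, a⟩
  · exact hc.extend hM hp a
  rcases h1.or' e with b | ⟨i', j', b⟩
  · exact hp.extend hM hq b
  rcases h2.or' e with d | ⟨i'', j'', d⟩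
  · exact hc.extend hM hq d
  exfalso
  obtain ⟨u, hu, u1, u2, u3⟩ := h 1 0 0
  obtain ⟨v, hv, v1, v2, v3⟩ := h 0 1 0
  have a1 := a u hu; have a2 := a v hv
  have b1 := b u hu; have b2 := b v hv
  have d1 := d u hu; have d2 := d v hv
  simp only [u1, u2, u3, v1, v2, v3, mul_one, mul_zero, add_zero, zero_add] at a1 a2 b1 b2 d1 d2
  obtain ⟨w, hw, hwe⟩ := he
  rw [a w hw, ← a1, ← a2, b1, d2] at hwe
  simp at hwe

/-- If all nonzero coordinates of `R` are good, then `M` is the lift matroid of `R`. -/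
lemma lam_of_good (hM : Setup M) (hoff : ∀ w ∈ R, ∀ e, e ∉ M.E → w e = 0)
    (hgood : ∀ e ∈ NL R, Good M R e) (hne : ∃ f, f ∈ NL R) : Lam M R := by
  classical
  have hFin := hM.fin
  refine ⟨hoff, fun I hI => ?_⟩
  have single : ∀ x, Ind1 R {x} := by
    intro x C hC D hD _ _ nC nD
    rw [(Finset.subset_singleton_iff.1 hC).resolve_left nC.ne_empty,
      (Finset.subset_singleton_iff.1 hD).resolve_left nD.ne_empty]
  have key : ∀ I : Finset α, (I : Set α) ⊆ M.E → ∀ e ∈ I, e ∈ NL R → (M.Indep ↑I ↔ Ind1 R I) := by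
    intro I hI e he heN
    have hg := hgood e heN
    have hs : ((I.erase e : Finset α) : Set α) ⊆ (M ／ {e}).E := by
      intro x hx
      rw [Finset.coe_erase] at hx
      exact ⟨hI hx.1, hx.2⟩
    have h1 := hg.lam.indep_iff _ hs
    rw [con_indep (hM.loopless e hg.mem) (Finset.notMem_erase e I),
      ind1_ctr heN (Finset.notMem_erase e I), Finset.insert_erase he] at h1
    exact h1
  by_cases hex : ∃ e ∈ I, e ∈ NL R
  · obtain ⟨e, he, heN⟩ := hex
    exact key I hI e he heN
  push Not at hex
  constructor
  · intro hi
    -- two elements `e ≠ e'` of an independent set of loops of `R` lead to a third one `g`, and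
    -- all three are spanned by `e` together with any nonzero coordinate `f`
    by_contra hn
    obtain ⟨e, he, e', he', hee⟩ : ∃ e ∈ I, ∃ e' ∈ I, e ≠ e' := by
      by_contra hc
      push Not at hc
      apply hn
      rcases I.eq_empty_or_nonempty with rfl | ⟨x, hx⟩
      · exact (single hne.choose).mono (by simp)
      · exact (single x).mono fun y hy => by simp [hc x hx y hy]
    obtain ⟨f, hf⟩ := hne
    have hfE := (hgood f hf).mem
    have hdep : ∀ x y, x ∈ M.E → y ∈ M.E → x ∉ NL R → y ∉ NL R → x ≠ y →
        ∀ f ∈ NL R, ¬ M.Indep ↑({f, x, y} : Finset α) := by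
      intro x y hx hy hxN hyN hxy f hf
      have hfx : f ≠ x := fun h => hxN (h ▸ hf)
      have hfy : f ≠ y := fun h => hyN (h ▸ hf)
      rw [key {f, x, y} (by
        intro z hz
        simp only [Finset.coe_insert, Finset.coe_singleton, mem_insert_iff,
          mem_singleton_iff] at hz
        rcases hz with rfl | rfl | rfl
        exacts [(hgood z hf).mem, hx, hy]) f (by simp) hf]
      intro h1
      have := h1 {x} (by simp) {y} (by simp) (cyc_singleton hxN) (cyc_singleton hyN)
        (Finset.singleton_nonempty _) (Finset.singleton_nonempty _)
      exact hxy (Finset.singleton_injective this)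
    have hpair : M.Indep ↑({e, e'} : Finset α) := hi.subset (by
      intro z hz
      simp only [Finset.coe_insert, Finset.coe_singleton, mem_insert_iff, mem_singleton_iff] at hz
      rcases hz with rfl | rfl
      exacts [he, he'])
    obtain ⟨B', hB', hsub⟩ := hpair.exists_isBase_superset
    obtain ⟨B, rfl⟩ : ∃ B : Finset α, (B : Set α) = B' := ⟨hB'.finite.toFinset, by simp⟩
    have hcard : 12 ≤ B.card := by
      obtain ⟨I0, hI0, h12⟩ := hM.rk
      obtain ⟨B0, hB0, hs0⟩ := hI0.exists_isBase_superset
      have h1 := (encard_le_encard hs0).trans_eq (hB0.encard_eq_encard_of_isBase hB')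
      rw [encard_coe_eq_coe_finsetCard, encard_coe_eq_coe_finsetCard] at h1
      exact h12.trans (by exact_mod_cast h1)
    obtain ⟨g, hgB, hg⟩ : ∃ g ∈ B, g ∉ ({e, e'} : Finset α) := by
      by_contra hc
      push Not at hc
      have := (Finset.card_le_card hc).trans Finset.card_le_two
      omega
    simp only [Finset.mem_insert, Finset.mem_singleton, not_or] at hg
    have heB : e ∈ B := hsub (by simp)
    have heB' : e' ∈ B := hsub (by simp)
    have hgE : g ∈ M.E := hB'.subset_ground hgB
    have heE := hI he
    have heE' := hI he'
    have h3 : M.Indep {g, e, e'} := hB'.indep.subset (by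
      rintro z (rfl | rfl | rfl)
      exacts [hgB, heB, heB'])
    have hgN : g ∉ NL R := fun hgN =>
      hdep e e' heE heE' (hex e he) (hex e' he') hee g hgN (by
        rw [Finset.coe_insert, Finset.coe_pair]; exact h3)
    have hfe : f ≠ e := fun h => hex e he (h ▸ hf)
    have hfei : M.Indep {f, e} := by
      rw [← Finset.coe_pair, key {f, e} (by
        intro z hz
        simp only [Finset.coe_insert, Finset.coe_singleton, mem_insert_iff,
          mem_singleton_iff] at hz
        rcases hz with rfl | rfl
        exacts [hfE, heE]) f (by simp) hf, ← ind1_ctr hf (by simpa using hfe)]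
      intro C hC D hD _ _ nC nD
      rw [(Finset.subset_singleton_iff.1 hC).resolve_left nC.ne_empty,
        (Finset.subset_singleton_iff.1 hD).resolve_left nD.ne_empty]
    have hcl : ∀ y ∈ M.E, y ∉ NL R → e ≠ y → y ∈ M.closure {f, e} := by
      intro y hy hyN hey
      rw [hfei.mem_closure_iff']
      refine ⟨hy, fun hi => ?_⟩
      exfalso
      refine hdep e y heE hy (hex e he) hyN hey f hf ?_
      rw [Finset.coe_insert, Finset.coe_pair]
      refine hi.subset ?_
      rintro z (rfl | rfl | rfl) <;> simp
    have hsubcl : ({g, e, e'} : Set α) ⊆ M.closure {f, e} := by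
      rintro z (rfl | rfl | rfl)
      · exact hcl z hgE hgN (fun h => hg.1 h.symm)
      · exact M.subset_closure _ hfei.subset_ground (by simp)
      · exact hcl z heE' (hex z he') hee
    have hr := M.eRk_mono hsubcl
    rw [eRk_closure_eq, h3.eRk_eq_encard, hfei.eRk_eq_encard, encard_pair hfe,
      encard_insert_of_notMem (by simp [hg.1, hg.2]), encard_pair hee] at hr
    norm_num at hr
  · intro h1
    rcases I.eq_empty_or_nonempty with rfl | ⟨x, hx⟩
    · simp
    · have : I = {x} := by
        refine Finset.eq_singleton_iff_unique_mem.2 ⟨hx, fun y hy => ?_⟩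
        have := h1 {y} (by simpa using hy) {x} (by simpa using hx)
          (cyc_singleton (hex y hy)) (cyc_singleton (hex x hx))
          (Finset.singleton_nonempty _) (Finset.singleton_nonempty _)
        exact Finset.singleton_injective this
      rw [this, Finset.coe_singleton, indep_singleton]
      exact hM.loopless x (hI hx)

/-- **Gluing.** If some contraction of `M` is not binary, then `M` is the lift matroid of a cut
space. -/
lemma Setup.exists_lam (hM : Setup M) {c : α} (hcE : c ∈ M.E) (hcb : ∀ R, ¬ Bn (M ／ {c}) R) :
    ∃ R, Lam M R ∧ Graphic R := by
  classical
  have hFin := hM.fin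
  obtain ⟨Rc, hL, hg⟩ := (hM.con c hcE).resolve_left (fun ⟨R, h⟩ => hcb R h)
  have hnc := hM.loopless c hcE
  have hdimc : 10 ≤ Module.finrank K Rc := by
    obtain ⟨B, hB, h11⟩ := hM.rk.con hnc
    have := ((hL.indep_iff B hB.subset_ground).1 hB).card_le hg.finite
    omega
  obtain ⟨e₀, he₀⟩ : ∃ e, e ∈ NL Rc := by
    by_contra hc
    push Not at hc
    have : Rc = ⊥ := by
      rw [eq_bot_iff]
      intro w hw
      rw [Submodule.mem_bot]
      funext e
      by_contra h
      exact hc e ⟨w, hw, h⟩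
    rw [this] at hdimc
    simp at hdimc
  obtain ⟨Re, hLe, hge, heE, hcRe, hce⟩ := hM.step hcE hL hg he₀
  have hcz : ∀ w ∈ Rc, w c = 0 := fun w hw => hL.off w hw c fun h => h.2 rfl
  have hez : ∀ w ∈ Re, w e₀ = 0 := fun w hw => hLe.off w hw e₀ fun h => h.2 rfl
  obtain ⟨R, hRdef⟩ : ∃ R, R = Rc ⊔ Re := ⟨_, rfl⟩
  have hcR : ctr R {c} = Rc := by
    ext w
    rw [mem_ctr, hRdef, Submodule.mem_sup]
    simp only [mem_singleton_iff, forall_eq]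
    constructor
    · rintro ⟨⟨x, hx, y, hy, rfl⟩, h0⟩
      refine Rc.add_mem hx ?_
      have : y ∈ ctr Re {c} := ⟨hy, by simpa [hcz x hx] using h0⟩
      rw [hce] at this
      exact this.1
    · exact fun hw => ⟨⟨w, hw, 0, Re.zero_mem, add_zero w⟩, hcz w hw⟩
  have heR : ctr R {e₀} = Re := by
    ext w
    rw [mem_ctr, hRdef, Submodule.mem_sup]
    simp only [mem_singleton_iff, forall_eq]
    constructor
    · rintro ⟨⟨x, hx, y, hy, rfl⟩, h0⟩
      refine Re.add_mem ?_ hy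
      have : x ∈ ctr Rc {e₀} := ⟨hx, by simpa [hez y hy] using h0⟩
      rw [← hce] at this
      exact this.1
    · exact fun hw => ⟨⟨0, Rc.zero_mem, w, hw, zero_add w⟩, hez w hw⟩
  have goodc : Good M R c := ⟨hcE, hcR ▸ hL, hcR ▸ hg⟩
  have goode : Good M R e₀ := ⟨heE, heR ▸ hLe, heR ▸ hge⟩
  have hRf : Finite R := by
    have f1 := hg.finite
    have f2 := hge.finite
    refine Finite.of_surjective (fun p : Rc × Re => (⟨p.1.1 + p.2.1, by
      rw [hRdef]; exact Submodule.add_mem_sup p.1.2 p.2.2⟩ : R)) ?_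
    rintro ⟨w, hw⟩
    rw [hRdef, Submodule.mem_sup] at hw
    obtain ⟨x, hx, y, hy, rfl⟩ := hw
    exact ⟨(⟨x, hx⟩, ⟨y, hy⟩), rfl⟩
  have hoff : ∀ w ∈ R, ∀ e, e ∉ M.E → w e = 0 := by
    intro w hw e he
    rw [hRdef, Submodule.mem_sup] at hw
    obtain ⟨x, hx, y, hy, rfl⟩ := hw
    rw [Pi.add_apply, hL.off x hx e fun h => he h.1, hLe.off y hy e fun h => he h.1, add_zero]
  have hRcR : Rc ≤ R := by rw [hRdef]; exact le_sup_left
  obtain ⟨u, hu, uc⟩ := hcRe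
  obtain ⟨v, hv, ve⟩ := he₀
  have huR : u ∈ R := by rw [hRdef]; exact Submodule.mem_sup_right hu
  have hvR : v ∈ R := hRcR hv
  have hor := li3_or huR hvR (k_one uc) (hez u hu) (hcz v hv) (k_one ve)
  obtain ⟨q, hq⟩ : ∃ q, LI3 R c e₀ q := by
    by_contra hcon
    push Not at hcon
    -- otherwise `Rc` would be spanned by the single vector `v`
    have hle : Rc ≤ Submodule.span K {v} := by
      intro w hw
      rw [Submodule.mem_span_singleton]
      refine ⟨w e₀, funext fun x => ?_⟩
      obtain ⟨i, j, hij⟩ := (hor x).resolve_left (hcon x)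
      rw [Pi.smul_apply, smul_eq_mul, hij w (hRcR hw), hij v hvR, hcz w hw, hcz v hv, k_one ve]
      ring
    have := (Submodule.finrank_mono hle).trans (finrank_span_le_card (R := K) {v})
    simp at this
    omega
  have hall : ∀ e ∈ NL R, Good M R e := fun e he => good_all hM goodc goode hq he
  have hLam : Lam M R := lam_of_good hM hoff hall ⟨c, u, huR, uc⟩
  refine ⟨R, hLam, core R hRf ?_ fun e he => (hall e he).gr⟩
  obtain ⟨B, hB, h12⟩ := hM.rk
  have := ((hLam.indep_iff B hB.subset_ground).1 hB).card_le hRf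
  omega

end Glue

section Graphs
variable {V α : Type u} {G : Graph V α}

/-! ### Graphs and their cut spaces -/

/-- The coboundary of the vertex function `f`, at the edge `e`. -/
def gd (G : Graph V α) (f : V → K) (e : α) : K :=
  Sym2.lift ⟨fun u v => f u + f v, fun _ _ => add_comm _ _⟩ (G.inc e)

lemma gd_mk {f : V → K} {e : α} {x y : V} (h : G.inc e = s(x, y)) : gd G f e = f x + f y := by
  simp [gd, h]

lemma exists_ends (G : Graph V α) (e : α) : ∃ x y, G.inc e = s(x, y) := by
  obtain ⟨x, y, h⟩ := Sym2.exists.1 ⟨G.inc e, rfl⟩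
  exact ⟨x, y, h⟩

lemma gd_add (f g : V → K) (e : α) : gd G (f + g) e = gd G f e + gd G g e := by
  obtain ⟨x, y, h⟩ := exists_ends G e
  simp only [gd_mk h, Pi.add_apply]; ring

lemma gd_smul (c : K) (f : V → K) (e : α) : gd G (c • f) e = c * gd G f e := by
  obtain ⟨x, y, h⟩ := exists_ends G e
  simp only [gd_mk h, Pi.smul_apply, smul_eq_mul]; ring

/-- The cut space of `G` over the two-element field, extended by zero off the edge set. -/
def cutSpace (G : Graph V α) : Submodule K (α → K) where
  carrier := {w | ∃ f : V → K, (∀ e ∈ G.E, w e = gd G f e) ∧ ∀ e ∉ G.E, w e = 0}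
  zero_mem' := ⟨0, fun e _ => by obtain ⟨x, y, h⟩ := exists_ends G e; simp [gd_mk h],
    fun _ _ => rfl⟩
  add_mem' := by
    rintro w w' ⟨f, h1, h2⟩ ⟨f', h1', h2'⟩
    exact ⟨f + f', fun e he => by rw [gd_add, Pi.add_apply, h1 e he, h1' e he],
      fun e he => by rw [Pi.add_apply, h2 e he, h2' e he, add_zero]⟩
  smul_mem' := by
    rintro c w ⟨f, h1, h2⟩
    exact ⟨c • f, fun e he => by rw [gd_smul, Pi.smul_apply, h1 e he, smul_eq_mul],
      fun e he => by rw [Pi.smul_apply, h2 e he, smul_zero]⟩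

lemma mem_cutSpace {w : α → K} : w ∈ cutSpace G ↔
    ∃ f : V → K, (∀ e ∈ G.E, w e = gd G f e) ∧ ∀ e ∉ G.E, w e = 0 := Iff.rfl

lemma cyc_iff {C : Finset α} (hC : (C : Set α) ⊆ G.E) :
    Cyc (cutSpace G) C ↔ ∀ f : V → K, ∑ e ∈ C, gd G f e = 0 := by
  classical
  constructor
  · intro h f
    rw [← h (fun e => if e ∈ G.E then gd G f e else 0)
      ⟨f, fun e he => by simp [he], fun e he => by simp [he]⟩]
    exact Finset.sum_congr rfl (fun e he => by simp [hC he])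
  · rintro h w ⟨f, h1, -⟩
    rw [← h f]
    exact Finset.sum_congr rfl (fun e he => h1 e (hC he))

open Classical in
/-- The number of times `v` is an end of `e`. -/
noncomputable def wt (G : Graph V α) (e : α) (v : V) : ℕ :=
  (if v ∈ G.inc e then 1 else 0) + (if G.inc e = Sym2.diag v then 1 else 0)

lemma deg_eq (C : Finset α) (v : V) : G.deg ↑C v = ∑ e ∈ C, wt G e v := by
  classical
  have key : ∀ (p : α → Prop) [DecidablePred p],
      {e ∈ (C : Set α) | p e}.ncard = ∑ e ∈ C, if p e then 1 else 0 := by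
    intro p _
    have : {e ∈ (C : Set α) | p e} = ↑(C.filter p) := by ext; simp
    rw [this, Set.ncard_coe_finset, Finset.card_filter]
  simp only [Graph.deg, wt, Finset.sum_add_distrib, key]

lemma wt_mk [DecidableEq V] {e : α} {x y v : V} (h : G.inc e = s(x, y)) :
    wt G e v = (if v = x then 1 else 0) + (if v = y then 1 else 0) := by
  have h1 : (v ∈ G.inc e) ↔ (v = x ∨ v = y) := by rw [h, Sym2.mem_iff]
  have h2 : (G.inc e = Sym2.diag v) ↔ (v = x ∧ v = y) := by
    rw [h, Sym2.diag, Sym2.eq_iff]; grind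
  simp only [wt, h1, h2]
  grind

lemma wt_pos {e : α} {v : V} : 0 < wt G e v ↔ v ∈ G.inc e := by
  classical
  obtain ⟨x, y, h⟩ := exists_ends G e
  rw [wt_mk h, h, Sym2.mem_iff]
  grind

lemma gd_eq_sum {f : V → K} {e : α} {W : Finset V} (hW : ∀ v ∈ G.inc e, v ∈ W ∨ f v = 0) :
    gd G f e = ∑ v ∈ W, f v * (wt G e v : K) := by
  classical
  obtain ⟨x, y, h⟩ := exists_ends G e
  have hx := hW x (by simp [h])
  have hy := hW y (by simp [h])
  simp only [gd_mk h, wt_mk h, Nat.cast_add, Nat.cast_ite, Nat.cast_one, Nat.cast_zero, mul_add,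
    Finset.sum_add_distrib, mul_ite, mul_one, mul_zero, Finset.sum_ite_eq']
  grind

lemma gd_ind [DecidableEq V] (e : α) (v : V) :
    gd G (fun x => if x = v then 1 else 0) e = (wt G e v : K) := by
  obtain ⟨x, y, h⟩ := exists_ends G e
  rw [gd_mk h, wt_mk h]
  push_cast
  grind

lemma sum_gd {C : Finset α} {f : V → K} {W : Finset V}
    (hW : ∀ e ∈ C, ∀ v ∈ G.inc e, v ∈ W ∨ f v = 0) :
    ∑ e ∈ C, gd G f e = ∑ v ∈ W, f v * (G.deg ↑C v : K) := by
  rw [Finset.sum_congr rfl (fun e he => gd_eq_sum (hW e he)), Finset.sum_comm]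
  simp only [deg_eq, Nat.cast_sum, Finset.mul_sum]

lemma Cyc.even {C : Finset α} (hC : (C : Set α) ⊆ G.E) (h : Cyc (cutSpace G) C) (v : V) :
    Even (G.deg ↑C v) := by
  classical
  rw [← ZMod.natCast_eq_zero_iff_even]
  have := (cyc_iff hC).1 h (fun x => if x = v then 1 else 0)
  rw [deg_eq]
  push_cast
  simpa only [gd_ind] using this

lemma vertsOf_finite (C : Finset α) : (G.vertsOf ↑C).Finite := by
  have : G.vertsOf ↑C ⊆ ⋃ e ∈ C, {v | v ∈ G.inc e} := by
    rintro v ⟨e, he, hv⟩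
    simp only [mem_iUnion]
    exact ⟨e, he, hv⟩
  refine Set.Finite.subset (Set.Finite.biUnion C.finite_toSet fun e _ => ?_) this
  obtain ⟨x, y, h⟩ := exists_ends G e
  refine Set.Finite.subset (Set.toFinite {x, y}) ?_
  intro v hv
  have : v ∈ G.inc e := hv
  rw [h, Sym2.mem_iff] at this
  simpa using this

lemma deg_pos {C : Finset α} {v : V} : 0 < G.deg ↑C v ↔ v ∈ G.vertsOf ↑C := by
  rw [deg_eq, Finset.sum_pos_iff]
  simp only [wt_pos, Graph.vertsOf, mem_ofPred_eq, Finset.mem_coe]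

lemma isCycle_cyc {C : Finset α} (h : G.IsCycle ↑C) : Cyc (cutSpace G) C := by
  obtain ⟨hE, -, -, hd, -⟩ := h
  rw [cyc_iff hE]
  intro f
  rw [sum_gd (W := (vertsOf_finite (G := G) C).toFinset)
    (fun e he v hv => Or.inl (by simpa using ⟨e, he, hv⟩))]
  refine Finset.sum_eq_zero fun v hv => ?_
  rw [hd v (by simpa using hv)]
  have : ((2 : ℕ) : K) = 0 := rfl
  rw [this, mul_zero]

/-- A cycle contains no smaller nonempty even edge set. -/
lemma isCycle_min {C D : Finset α} (h : G.IsCycle ↑C) (hDC : D ⊆ C) (hD : Cyc (cutSpace G) D)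
    (hn : D.Nonempty) : D = C := by
  classical
  obtain ⟨hE, -, -, hd, hc⟩ := h
  have hDE : (D : Set α) ⊆ G.E := (Finset.coe_subset.2 hDC).trans hE
  have key : ∀ v ∈ G.vertsOf ↑D, ∀ e ∈ C, v ∈ G.inc e → e ∈ D := by
    intro v hv e he hve
    by_contra heD
    have h1 := deg_pos.2 hv
    have h2 := hD.even hDE v
    have h3 := hd v ⟨e, he, hve⟩
    have h4 : G.deg ↑D v + wt G e v ≤ G.deg ↑C v := by
      rw [deg_eq, deg_eq, add_comm, ← Finset.sum_insert (f := fun e => wt G e v) heD]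
      exact Finset.sum_le_sum_of_subset (Finset.insert_subset he hDC)
    have h5 := wt_pos.2 hve
    obtain ⟨k, hk⟩ := h2
    omega
  obtain ⟨e0, he0⟩ := hn
  obtain ⟨x0, y0, hxy⟩ := exists_ends G e0
  have hx0 : x0 ∈ G.vertsOf ↑D := ⟨e0, he0, by simp [hxy]⟩
  have all : ∀ v ∈ G.vertsOf ↑C, v ∈ G.vertsOf ↑D := by
    intro v hv
    have := hc x0 ⟨e0, hDC he0, by simp [hxy]⟩ v hv
    clear hv
    induction this with
    | refl => exact hx0
    | tail _ h ih =>
      obtain ⟨e, he, hi⟩ := h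
      exact ⟨e, key _ ih e he (by simp [hi]), by simp [hi]⟩
  refine hDC.antisymm fun e he => ?_
  obtain ⟨x, y, hxy⟩ := exists_ends G e
  have hx : x ∈ G.inc e := by simp [hxy]
  exact key x (all x ⟨e, he, hx⟩) e he hx

lemma connectedOn_of_min {C : Finset α} (hE : (C : Set α) ⊆ G.E) (hC : Cyc (cutSpace G) C)
    (hmin : ∀ D ⊆ C, Cyc (cutSpace G) D → D.Nonempty → D = C) : G.ConnectedOn ↑C := by
  classical
  rintro u ⟨e0, he0, hu⟩ v ⟨e, he, hv⟩
  set U : Set V := {v | Relation.ReflTransGen (G.AdjOn ↑C) u v} with hU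
  have hadj : ∀ x y, G.AdjOn ↑C x y → (x ∈ U ↔ y ∈ U) := by
    intro x y h
    constructor
    · intro hx; exact Relation.ReflTransGen.tail hx h
    · intro hy
      obtain ⟨e, he, hi⟩ := h
      exact Relation.ReflTransGen.tail hy ⟨e, he, by rw [hi, Sym2.eq_swap]⟩
  let S := C.filter (fun e => ∃ x ∈ G.inc e, x ∈ U)
  have hS : Cyc (cutSpace G) S := by
    have hSE : (S : Set α) ⊆ G.E := fun e he => hE (Finset.filter_subset _ _ he)
    rw [cyc_iff hSE]
    intro f
    rw [← (cyc_iff hE).1 hC (fun v => if v ∈ U then f v else 0), Finset.sum_filter]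
    refine Finset.sum_congr rfl fun e he => ?_
    obtain ⟨x, y, h⟩ := exists_ends G e
    have := hadj x y ⟨e, he, h⟩
    simp only [gd_mk h, h, Sym2.mem_iff]
    by_cases hx : x ∈ U
    · have hy := this.1 hx
      have : ∃ z, (z = x ∨ z = y) ∧ z ∈ U := ⟨x, Or.inl rfl, hx⟩
      simp [hx, hy, this]
    · have hy : y ∉ U := fun h => hx (this.2 h)
      have : ¬ ∃ z, (z = x ∨ z = y) ∧ z ∈ U := by
        rintro ⟨z, rfl | rfl, hz⟩
        exacts [hx hz, hy hz]
      simp [hx, hy, this]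
  have hSC := hmin S (Finset.filter_subset _ _) hS
    ⟨e0, Finset.mem_filter.2 ⟨he0, u, hu, Relation.ReflTransGen.refl⟩⟩
  have heS : e ∈ S := by rw [hSC]; exact he
  obtain ⟨-, x, hx, hxU⟩ := Finset.mem_filter.1 heS
  obtain ⟨y, hxy⟩ := Sym2.mem_iff_exists.1 hx
  rw [hxy, Sym2.mem_iff] at hv
  rcases hv with rfl | rfl
  · exact hxU
  · exact (hadj x v ⟨e, he, hxy⟩).1 hxU

/-- In a minimal nonempty even edge set there are at most as many edges as vertices, by counting
dimensions: the incidence map has a kernel of dimension one and its image lies in a hyperplane. -/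
lemma card_le_of_min {C : Finset α} (hE : (C : Set α) ⊆ G.E)
    (hmin : ∀ D ⊆ C, Cyc (cutSpace G) D → D.Nonempty → D = C) {W : Finset V}
    (hW : ∀ e ∈ C, ∀ v ∈ G.inc e, v ∈ W) (hn : W.Nonempty) : C.card ≤ W.card := by
  classical
  obtain ⟨v0, hv0⟩ := hn
  let T : (C → K) →ₗ[K] (W.erase v0 → K) :=
    { toFun := fun x v => ∑ e : C, x e * (wt G e v : K)
      map_add' := fun x y => by
        funext v; simp [add_mul, Finset.sum_add_distrib]
      map_smul' := fun c x => by
        funext v; simp [Finset.mul_sum, mul_assoc] }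
  have hker : Module.finrank K (LinearMap.ker T) ≤ 1 := by
    by_cases hz : LinearMap.ker T = ⊥
    · rw [hz]; simp
    have key : ∀ x ∈ LinearMap.ker T, x ≠ 0 → x = 1 := by
      intro x hx hx0
      let S := C.filter (fun e => ∃ h : e ∈ C, x ⟨e, h⟩ ≠ 0)
      have hSC : S ⊆ C := Finset.filter_subset _ _
      have hsum : ∀ g : α → K, ∑ e ∈ S, g e = ∑ e : C, x e * g e := by
        intro g
        rw [Finset.sum_filter, ← Finset.sum_coe_sort C]
        refine Finset.sum_congr rfl fun e _ => ?_
        rcases k01 (x e) with h | h <;> simp [h]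
      have hS : Cyc (cutSpace G) S := by
        rw [cyc_iff ((Finset.coe_subset.2 hSC).trans hE)]
        intro f
        have h1 : ∀ e, gd G f e = gd G (fun v => f v + f v0) e := by
          intro e
          obtain ⟨x, y, h⟩ := exists_ends G e
          rw [gd_mk h, gd_mk h]; grind
        simp only [h1]
        rw [sum_gd (W := W.erase v0)]
        · refine Finset.sum_eq_zero fun v hv => ?_
          have := congrFun (LinearMap.mem_ker.1 hx) ⟨v, hv⟩
          have h2 : ((G.deg ↑S v : ℕ) : K) = 0 := by
            rw [deg_eq]; push_cast
            rw [hsum]; exact this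
          rw [h2, mul_zero]
        · intro e he v hv
          by_cases h : v = v0
          · right; rw [h, k_self]
          · left; exact Finset.mem_erase.2 ⟨h, hW e (hSC he) v hv⟩
      have hSn : S.Nonempty := by
        obtain ⟨e, he⟩ := Function.ne_iff.1 hx0
        exact ⟨e, Finset.mem_filter.2 ⟨e.2, e.2, he⟩⟩
      have := hmin S hSC hS hSn
      funext e
      have he : (e : α) ∈ S := by rw [this]; exact e.2
      obtain ⟨-, _, h⟩ := Finset.mem_filter.1 he
      exact k_one h
    obtain ⟨x, hx, hx0⟩ := (Submodule.ne_bot_iff _).1 hz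
    refine finrank_le_one (⟨x, hx⟩ : LinearMap.ker T) fun y => ?_
    by_cases hy : y = 0
    · exact ⟨0, by rw [hy, zero_smul]⟩
    · refine ⟨1, ?_⟩
      rw [one_smul]
      ext1
      exact (key x hx hx0).trans (key y.1 y.2 (fun h => hy (Subtype.ext h))).symm
  have h1 := LinearMap.finrank_range_add_finrank_ker T
  have h2 := Submodule.finrank_le (LinearMap.range T)
  rw [Module.finrank_fintype_fun_eq_card, Fintype.card_coe] at h1 h2
  rw [Finset.card_erase_of_mem hv0] at h2
  have := Finset.card_pos.2 ⟨v0, hv0⟩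
  omega

lemma isCycle_of_min {C : Finset α} (hE : (C : Set α) ⊆ G.E) (hC : Cyc (cutSpace G) C)
    (hn : C.Nonempty) (hmin : ∀ D ⊆ C, Cyc (cutSpace G) D → D.Nonempty → D = C) :
    G.IsCycle ↑C := by
  classical
  refine ⟨hE, C.finite_toSet, by simpa using hn, ?_, connectedOn_of_min hE hC hmin⟩
  set W := (vertsOf_finite (G := G) C).toFinset with hWdef
  have hW : ∀ e ∈ C, ∀ v ∈ G.inc e, v ∈ W := fun e he v hv => by
    rw [hWdef, Set.Finite.mem_toFinset]; exact ⟨e, he, hv⟩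
  obtain ⟨e0, he0⟩ := hn
  obtain ⟨x0, y0, hxy⟩ := exists_ends G e0
  have hcard := card_le_of_min hE hmin hW ⟨x0, hW e0 he0 x0 (by simp [hxy])⟩
  have hge : ∀ v ∈ W, 2 ≤ G.deg ↑C v := by
    intro v hv
    have h1 := deg_pos.2 ((Set.Finite.mem_toFinset _).1 hv)
    obtain ⟨k, hk⟩ := hC.even hE v
    omega
  have hs : ∑ v ∈ W, G.deg ↑C v = 2 * C.card := by
    simp only [deg_eq]
    rw [Finset.sum_comm, Finset.sum_const_nat (m := 2), mul_comm]
    intro e he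
    obtain ⟨x, y, h⟩ := exists_ends G e
    have hx := hW e he x (by simp [h])
    have hy := hW e he y (by simp [h])
    simp only [wt_mk h, Finset.sum_add_distrib, Finset.sum_ite_eq', hx, hy, if_true]
  have heq : ∑ v ∈ W, 2 = ∑ v ∈ W, G.deg ↑C v := by
    refine le_antisymm (Finset.sum_le_sum hge) ?_
    rw [hs, Finset.sum_const, smul_eq_mul]; omega
  intro v hv
  exact ((Finset.sum_eq_sum_iff_of_le hge).1 heq v ((Set.Finite.mem_toFinset _).2 hv)).symm

lemma exists_isCycle {D : Finset α} (hE : (D : Set α) ⊆ G.E) (hD : Cyc (cutSpace G) D)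
    (hn : D.Nonempty) : ∃ C ⊆ D, G.IsCycle ↑C := by
  obtain ⟨C, ⟨h1, h2, h3⟩, hm⟩ := exists_min
    (fun C : Finset α => C ⊆ D ∧ Cyc (cutSpace G) C ∧ C.Nonempty) Finset.card
    ⟨D, Finset.Subset.refl _, hD, hn⟩
  refine ⟨C, h1, isCycle_of_min ((Finset.coe_subset.2 h1).trans hE) h2 h3 ?_⟩
  intro D' hD' c n
  exact Finset.eq_of_subset_of_card_le hD' (hm D' ⟨hD'.trans h1, c, n⟩)

lemma not_ind0_iff {I : Finset α} (hI : (I : Set α) ⊆ G.E) :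
    ¬ Ind0 (cutSpace G) I ↔ ∃ C : Set α, G.IsCycle C ∧ C ⊆ ↑I := by
  constructor
  · intro h
    simp only [Ind0] at h
    push Not at h
    obtain ⟨C, hC, cC, nC⟩ := h
    obtain ⟨D, hD, hc⟩ := exists_isCycle ((Finset.coe_subset.2 hC).trans hI) cC nC
    exact ⟨D, hc, Finset.coe_subset.2 (hD.trans hC)⟩
  · rintro ⟨C, hC, hCI⟩ h
    obtain ⟨C, rfl⟩ := (I.finite_toSet.subset hCI).exists_finset_coe
    have := h C (Finset.coe_subset.1 hCI) (isCycle_cyc hC)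
    obtain ⟨-, -, hn, -⟩ := hC
    simp [this] at hn

lemma not_ind1_iff {I : Finset α} (hI : (I : Set α) ⊆ G.E) :
    ¬ Ind1 (cutSpace G) I ↔ G.HasTwoCycles ↑I := by
  classical
  constructor
  · intro h
    by_contra hc
    apply h
    have one : ∀ C D : Finset α, G.IsCycle ↑C → G.IsCycle ↑D → C ⊆ I → D ⊆ I → C = D := by
      intro C D hC hD hCI hDI
      by_contra hne
      exact hc ⟨C, D, hC, hD, fun h => hne (Finset.coe_injective h), Finset.coe_subset.2 hCI,
        Finset.coe_subset.2 hDI⟩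
    have main : ∀ C D : Finset α, G.IsCycle ↑C → C ⊆ I → D ⊆ I → Cyc (cutSpace G) D → D.Nonempty →
        D = C := by
      intro C D hC hCI hDI cD nD
      by_contra hne
      obtain ⟨C1, h1, hC1⟩ := exists_isCycle ((Finset.coe_subset.2 hDI).trans hI) cD nD
      have e1 := one C1 C hC1 hC (h1.trans hDI) hCI
      subst e1
      have hsub : symmDiff D C1 ⊆ D := by
        intro x; rw [Finset.mem_symmDiff]; rintro (h | h); exacts [h.1, h1 h.1]
      obtain ⟨C2, h2, hC2⟩ := exists_isCycle ((Finset.coe_subset.2 (hsub.trans hDI)).trans hI)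
        (cD.symmDiff (isCycle_cyc hC1)) (by
          rw [Finset.nonempty_iff_ne_empty]
          exact fun h => hne (symmDiff_eq_bot.1 h))
      have e2 := one C2 C1 hC2 hC1 ((h2.trans hsub).trans hDI) hCI
      subst e2
      obtain ⟨-, -, ⟨x, hx⟩, -⟩ := hC2
      have := h2 hx
      rw [Finset.mem_symmDiff] at this
      rcases this with h | h
      · exact h.2 hx
      · exact h.2 (h1 hx)
    intro C hC D hD cC cD nC nD
    obtain ⟨C1, h1, hC1⟩ := exists_isCycle ((Finset.coe_subset.2 hC).trans hI) cC nC
    rw [main C1 C hC1 (h1.trans hC) hC cC nC, main C1 D hC1 (h1.trans hC) hD cD nD]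
  · rintro ⟨C, D, hC, hD, hne, hCI, hDI⟩ h
    obtain ⟨C, rfl⟩ := (I.finite_toSet.subset hCI).exists_finset_coe
    obtain ⟨D, rfl⟩ := (I.finite_toSet.subset hDI).exists_finset_coe
    exact hne (congrArg _ (h C (Finset.coe_subset.1 hCI) D (Finset.coe_subset.1 hDI)
      (isCycle_cyc hC) (isCycle_cyc hD) (by simpa using hC.2.2.1) (by simpa using hD.2.2.1)))

end Graphs

section Reps
variable {V α : Type u} {G : Graph V α} {N : Matroid α} {R : Submodule K (α → K)}

/-! ### Graphic and bicircular lift matroids in terms of cut spaces -/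

lemma hasTwoCycles_mono {X Y : Set α} (h : G.HasTwoCycles X) (hXY : X ⊆ Y) : G.HasTwoCycles Y := by
  obtain ⟨C, D, hC, hD, hne, h1, h2⟩ := h
  exact ⟨C, D, hC, hD, hne, h1.trans hXY, h2.trans hXY⟩

lemma exists_liftCircuit {I : Finset α} (hI : (I : Set α) ⊆ G.E) (h : G.HasTwoCycles ↑I) :
    ∃ X : Set α, X ⊆ ↑I ∧ G.LiftCircuit X := by
  obtain ⟨X, ⟨h1, h2⟩, hm⟩ := exists_min
    (fun X : Finset α => X ⊆ I ∧ G.HasTwoCycles ↑X) Finset.card ⟨I, Finset.Subset.refl _, h⟩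
  refine ⟨X, Finset.coe_subset.2 h1, ⟨(Finset.coe_subset.2 h1).trans hI, h2⟩, ?_⟩
  rintro Y ⟨-, hY⟩ hYX
  obtain ⟨Y, rfl⟩ := (X.finite_toSet.subset hYX).exists_finset_coe
  have hYX' : Y ⊆ X := Finset.coe_subset.1 hYX
  have := Finset.eq_of_subset_of_card_le hYX' (hm Y ⟨hYX'.trans h1, hY⟩)
  rw [this]

lemma IsLiftRep.lam (h : IsLiftRep G N) : Lam N (cutSpace G) := by
  obtain ⟨hE, hc⟩ := h
  refine ⟨fun w ⟨f, _, h0⟩ e he => h0 e (hE ▸ he), fun I hI => ?_⟩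
  have hIG : (I : Set α) ⊆ G.E := hE ▸ hI
  rw [← not_iff_not, not_ind1_iff hIG, Matroid.not_indep_iff hI]
  constructor
  · intro hd
    obtain ⟨C, hCI, hC⟩ := hd.exists_isCircuit_subset
    exact hasTwoCycles_mono ((hc C).1 hC).1.2 hCI
  · intro h2
    obtain ⟨X, hXI, hX⟩ := exists_liftCircuit hIG h2
    exact (((hc X).2 hX).1).superset hXI hI

lemma IsGraphicRep.bn (h : IsGraphicRep G N) : Bn N (cutSpace G) := by
  obtain ⟨hE, hc⟩ := h
  refine ⟨fun w ⟨f, _, h0⟩ e he => h0 e (hE ▸ he), fun I hI => ?_⟩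
  have hIG : (I : Set α) ⊆ G.E := hE ▸ hI
  rw [← not_iff_not, not_ind0_iff hIG, Matroid.not_indep_iff hI]
  constructor
  · intro hd
    obtain ⟨C, hCI, hC⟩ := hd.exists_isCircuit_subset
    exact ⟨C, (hc C).1 hC, hCI⟩
  · rintro ⟨X, hX, hXI⟩
    exact (((hc X).2 hX).1).superset hXI hI

/-- A vector of `R` vanishing on a base vanishes everywhere, so `R` is finite. -/
lemma Lam.finite [N.RankFinite] (h : Lam N R) : Finite R := by
  classical
  obtain ⟨B, hB⟩ := N.exists_isBase
  obtain ⟨B, rfl⟩ := hB.finite.exists_finset_coe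
  have hind := (h.indep_iff B hB.subset_ground).1 hB.indep
  have hz : ∀ w ∈ R, (∀ e ∈ B, w e = 0) → w = 0 := by
    intro w hw h0
    funext y
    by_contra hy
    have hyE : y ∈ N.E := by
      by_contra hyE
      exact hy (h.off w hw y hyE)
    have hyB : y ∉ B := fun hB => hy (h0 y hB)
    have := (h.indep_iff (insert y B) (by
      rw [Finset.coe_insert]; exact insert_subset hyE hB.subset_ground)).2
      (hind.insert_of hw h0 hy)
    rw [Finset.coe_insert] at this
    have := hB.eq_of_subset_indep this (subset_insert _ _)
    exact hyB (by rw [← Finset.mem_coe, this]; exact mem_insert _ _)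
  refine Finite.of_injective (fun (w : R) (e : B) => w.1 e) fun w w' hww => ?_
  have := hz (w.1 - w'.1) (R.sub_mem w.2 w'.2) fun e he => by
    have := congrFun hww ⟨e, he⟩
    simpa [sub_eq_zero] using this
  exact Subtype.ext (sub_eq_zero.1 this)

/-- If the cut space is finite, identifying vertices that no cut separates makes the graph
finite. -/
lemma graphic_cutSpace (hR : Finite (cutSpace G)) : Graphic (cutSpace G) := by
  classical
  choose F hF1 hF2 using fun w : cutSpace G => mem_cutSpace.1 w.2
  choose x y hxy using exists_ends G
  obtain ⟨n, ⟨σ⟩⟩ := Finite.exists_equiv_fin (cutSpace G → K)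
  let φ : V → Fin n := fun v => σ (fun w => F w v)
  refine ⟨Fin n, inferInstance, fun e => if e ∈ G.E then φ (x e) else σ 0,
    fun e => if e ∈ G.E then φ (y e) else σ 0, fun w => ⟨fun hw => ?_, ?_⟩⟩
  · refine ⟨fun i => σ.symm i ⟨w, hw⟩, funext fun e => ?_⟩
    rw [dl_apply]
    by_cases he : e ∈ G.E
    · simp only [he, if_true, φ, Equiv.symm_apply_apply]
      rw [← gd_mk (hxy e), ← hF1 _ e he]
    · simp only [he, if_false, Equiv.symm_apply_apply, Pi.zero_apply, add_zero]
      exact hF2 ⟨w, hw⟩ e he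
  · rintro ⟨f, rfl⟩
    refine ⟨fun v => f (φ v), fun e he => ?_, fun e he => ?_⟩
    · rw [dl_apply, gd_mk (hxy e)]; simp only [he, if_true]
    · rw [dl_apply]; simp only [he, if_false, k_self]

lemma isBicircularLift_of_lam [N.RankFinite] (h : Lam N R) (hg : Graphic R) :
    IsBicircularLift N := by
  classical
  obtain ⟨V, -, a, b, hm⟩ := hg
  let G : Graph (ULift.{u} V) α := ⟨N.E, fun e => s(⟨a e⟩, ⟨b e⟩)⟩
  have hgd : ∀ f e, gd G f e = f ⟨a e⟩ + f ⟨b e⟩ := fun f e => gd_mk rfl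
  have hR : cutSpace G = R := by
    ext w
    rw [mem_cutSpace]
    constructor
    · rintro ⟨f, h1, h2⟩
      have hmem : dl a b (fun v => f ⟨v⟩) ∈ R := (hm _).2 ⟨_, rfl⟩
      convert hmem using 1
      funext e
      by_cases he : e ∈ N.E
      · rw [h1 e he, hgd]; rfl
      · rw [h2 e he, h.off _ hmem e he]
    · intro hw
      obtain ⟨f, rfl⟩ := (hm w).1 hw
      exact ⟨fun v => f v.down, fun e _ => by rw [hgd]; rfl, fun e he => h.off _ hw e he⟩
  subst hR
  have hfin : ∀ I : Finset α, ↑I ⊆ N.E → (N.Dep ↑I ↔ G.HasTwoCycles ↑I) := by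
    intro I hI
    rw [← Matroid.not_indep_iff hI, h.indep_iff I hI, not_ind1_iff (G := G) hI]
  have hdep : ∀ Y : Set α, N.Dep Y ↔ Y ⊆ G.E ∧ G.HasTwoCycles Y := by
    intro Y
    constructor
    · intro hY
      obtain ⟨C, hCY, hC⟩ := hY.exists_isCircuit_subset
      obtain ⟨C, rfl⟩ := hC.finite.exists_finset_coe
      exact ⟨hY.subset_ground, hasTwoCycles_mono ((hfin C hC.subset_ground).1 hC.dep) hCY⟩
    · rintro ⟨hYE, C, D, hC, hD, hne, h1, h2⟩
      obtain ⟨I, hI⟩ := (hC.2.1.union hD.2.1).exists_finset_coe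
      have hIY : (I : Set α) ⊆ Y := hI ▸ union_subset h1 h2
      have h2 : G.HasTwoCycles ↑I :=
        ⟨C, D, hC, hD, hne, hI ▸ subset_union_left, hI ▸ subset_union_right⟩
      exact ((hfin I (hIY.trans hYE)).2 h2).superset hIY hYE
  refine ⟨ULift V, G, rfl, fun C => ?_⟩
  rw [Circuit, Graph.LiftCircuit]
  have : N.Dep = fun Y => Y ⊆ G.E ∧ G.HasTwoCycles Y := funext fun Y => propext (hdep Y)
  rw [this]

lemma InBL.cases [N.RankFinite] (h : InBL N) :
    (∃ R, Bn N R) ∨ ∃ R, Lam N R ∧ Graphic R := by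
  rcases h with ⟨V, G, h⟩ | ⟨V, G, h⟩
  · exact Or.inl ⟨_, h.bn⟩
  · exact Or.inr ⟨_, h.lam, graphic_cutSpace h.lam.finite⟩

end Reps

section Final
variable {α : Type u} {M : Matroid α}

/-! ### Consequences of 3-connectivity and of a `U₂,₄`-minor -/

lemma eRk_eq (M : Matroid α) (X : Set α) : eRk M X = M.eRk X := by
  apply le_antisymm
  · exact iSup_le fun I => I.2.1.encard_le_eRk_of_subset I.2.2
  · obtain ⟨I, hIX, hI, hc⟩ := Matroid.le_eRk_iff.1 (le_refl (M.eRk X))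
    rw [← hc]
    exact le_iSup (fun I : {I : Set α // M.Indep I ∧ I ⊆ X} => (I : Set α).encard) ⟨I, hI, hIX⟩

lemma eRank_eq (M : Matroid α) : eRank M = M.eRank := by
  rw [eRank, eRk_eq, Matroid.eRk_ground]

lemma rkGe_of_not_le (h : ¬ eRank M ≤ 11) : RkGe M 12 := by
  have h12 : (12 : ℕ∞) ≤ M.eRk M.E := by
    rw [Matroid.eRk_ground, ← eRank_eq]
    exact Order.add_one_le_of_lt (not_le.1 h)
  obtain ⟨I, -, hI, hc⟩ := Matroid.le_eRk_iff.1 h12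
  have hfin : I.Finite := Set.finite_of_encard_eq_coe (k := 12) (by exact_mod_cast hc)
  obtain ⟨B, rfl⟩ := hfin.exists_finset_coe
  rw [Set.encard_coe_eq_coe_finsetCard] at hc
  exact ⟨B, hI, le_of_eq (by exact_mod_cast hc.symm)⟩

lemma le_encard_sdiff (h : RkGe M 12) {Y : Set α} (hY : Y.encard ≤ 2) :
    (2 : ℕ∞) ≤ (M.E \ Y).encard := by
  obtain ⟨B, hB, hc⟩ := h
  have h1 : (12 : ℕ∞) ≤ M.E.encard := by
    refine le_trans ?_ (Set.encard_le_encard hB.subset_ground)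
    rw [Set.encard_coe_eq_coe_finsetCard]
    exact_mod_cast hc
  have h2 := Set.encard_le_encard_sdiff_add_encard M.E Y
  by_contra hlt
  push Not at hlt
  have h3 : (12 : ℕ∞) ≤ 2 + 2 := h1.trans (h2.trans (add_le_add hlt.le hY))
  exact absurd h3 (by decide)

lemma rankFinite_of_threeConnected (h3 : ThreeConnected M) (h : RkGe M 12) : M.RankFinite := by
  rw [← Matroid.eRank_ne_top_iff]
  intro htop
  have : M.E.Nonempty := by
    obtain ⟨B, hB, hc⟩ := h
    obtain ⟨e, he⟩ := Finset.card_pos.1 (by omega : 0 < B.card)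
    exact ⟨e, hB.subset_ground he⟩
  obtain ⟨e, he⟩ := this
  refine h3.1 ⟨M.E \ {e}, {e}, ?_, disjoint_sdiff_left, ?_, ?_, ?_⟩
  · exact sdiff_union_of_subset (by simpa using he)
  · refine le_trans ?_ (le_encard_sdiff h (Y := {e}) (by simp))
    norm_num
  · simp
  · rw [eRank_eq, htop]; simp

/-- A set of one or two elements has a spanning complement and nonzero rank. -/
lemma rank_small (h3 : ThreeConnected M) (h : RkGe M 12) {Y : Set α} (hYE : Y ⊆ M.E)
    (hY : Y.encard = 1 ∨ Y.encard = 2) : M.eRank ≤ M.eRk (M.E \ Y) ∧ 0 < M.eRk Y := by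
  have := rankFinite_of_threeConnected h3 h
  have hfin : ∀ X, ∃ n : ℕ, (n : ℕ∞) = M.eRk X := fun X => by
    refine ENat.ne_top_iff_exists.1 fun ht => ?_
    have h1 := M.eRk_le_eRank X
    rw [ht, top_le_iff] at h1
    exact (M.eRank_ne_top_iff.2 this) h1
  obtain ⟨x, hx⟩ := hfin (M.E \ Y)
  obtain ⟨y, hy⟩ := hfin Y
  obtain ⟨r, hr⟩ := hfin M.E
  have hxr := M.eRk_le_eRank (M.E \ Y)
  have hyk := M.eRk_le_encard Y
  have key : ∀ k : ℕ, (k = 1 ∨ k = 2) → Y.encard = k → ¬ x + y ≤ r + (k - 1) := by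
    intro k hk hYk hle
    have hsep : IsKSep M k (M.E \ Y) Y := by
      refine ⟨sdiff_union_of_subset hYE, disjoint_sdiff_left, ?_, hYk.ge, ?_⟩
      · refine le_trans ?_ (le_encard_sdiff h (Y := Y) (by rcases hY with h | h <;> rw [h]; norm_num))
        rcases hk with rfl | rfl <;> norm_num
      · rw [eRk_eq, eRk_eq, eRank_eq, ← M.eRk_ground, ← hx, ← hy, ← hr]
        exact_mod_cast hle
    rcases hk with rfl | rfl
    · exact h3.1 ⟨_, _, hsep⟩
    · exact h3.2 ⟨_, _, hsep⟩
  rw [← M.eRk_ground, ← hx, ← hr] at hxr ⊢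
  rw [← hy] at hyk ⊢
  norm_cast at hxr ⊢
  rcases hY with hY | hY
  · have h1 := key 1 (Or.inl rfl) (by exact_mod_cast hY)
    rw [hY] at hyk
    have hyk : y ≤ 1 := by exact_mod_cast hyk
    omega
  · have h1 := key 2 (Or.inr rfl) (by exact_mod_cast hY)
    rw [hY] at hyk
    have hyk : y ≤ 2 := by exact_mod_cast hyk
    omega

lemma nonloop_of_threeConnected (h3 : ThreeConnected M) (h : RkGe M 12) {e : α} (he : e ∈ M.E) :
    M.IsNonloop e := by
  have := (rank_small h3 h (Y := {e}) (by simpa using he) (Or.inl (by simp))).2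
  by_contra hc
  rw [Matroid.not_isNonloop_iff he] at hc
  rw [hc.eRk_eq] at this
  exact lt_irrefl _ this

lemma cos_of_threeConnected (h3 : ThreeConnected M) (h : RkGe M 12) : Cos M := by
  have := rankFinite_of_threeConnected h3 h
  intro e f
  have hle : M.eRank ≤ M.eRk (M.E \ ({e, f} ∩ M.E)) := by
    have hc : ({e, f} ∩ M.E).encard ≤ 2 :=
      (Set.encard_le_encard inter_subset_left).trans
        ((Set.encard_insert_le {f} e).trans (by rw [Set.encard_singleton]; rfl))
    by_cases h0 : {e, f} ∩ M.E = ∅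
    · rw [h0, sdiff_empty, Matroid.eRk_ground]
    · refine (rank_small h3 h inter_subset_right ?_).1
      have h1 := Set.one_le_encard_iff_nonempty.2 (nonempty_iff_ne_empty.2 h0)
      generalize ({e, f} ∩ M.E).encard = n at hc h1
      lift n to ℕ using ne_top_of_le_ne_top (by decide) hc
      have hc' : n ≤ 2 := by exact_mod_cast hc
      have h1' : 1 ≤ n := by exact_mod_cast h1
      rcases (by omega : n = 1 ∨ n = 2) with rfl | rfl
      · left; rfl
      · right; rfl
  obtain ⟨B, hB⟩ := M.exists_isBasis (M.E \ ({e, f} ∩ M.E)) sdiff_subset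
  have hbase := hB.indep.isBase_of_eRk_ge hB.indep.finite (by rw [hB.eRk_eq_eRk]; exact hle)
  refine ⟨B, hbase, fun he => ?_, fun hf => ?_⟩
  · have := hB.subset he
    exact this.2 ⟨by simp, this.1⟩
  · have := hB.subset hf
    exact this.2 ⟨by simp, this.1⟩

lemma Setup.of_threeConnected (h3 : ThreeConnected M) (h : RkGe M 12)
    (hex : ∀ N, IsStrictMinor N M → InBL N) : Setup M := by
  have := rankFinite_of_threeConnected h3 h
  refine ⟨this, fun e he => nonloop_of_threeConnected h3 h he, cos_of_threeConnected h3 h, h,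
    fun e he => InBL.cases (hex _ ⟨⟨{e}, ∅, ?_⟩, fun heq => ?_⟩)⟩
  · exact (Matroid.delete_empty (M ／ {e})).symm
  · have : e ∈ (M ／ {e}).E := by rw [heq]; exact he
    exact this.2 rfl

/-- A `U₂,₄`-minor on `q₁, q₂, q₃, q₄` arises by contracting a nonempty independent set `J`. -/
lemma exists_u24 (h : RkGe M 12) (hfin : M.RankFinite) (hU : HasU24Minor M) :
    ∃ (q₁ q₂ q₃ q₄ : α) (J : Finset α), q₁ ≠ q₂ ∧ q₁ ≠ q₃ ∧ q₁ ≠ q₄ ∧ q₂ ≠ q₃ ∧ q₂ ≠ q₄ ∧ q₃ ≠ q₄ ∧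
      J.Nonempty ∧ (∀ x ∈ J, x ∈ M.E) ∧ (∀ x ∈ J, x ≠ q₁ ∧ x ≠ q₂ ∧ x ≠ q₃ ∧ x ≠ q₄) ∧
      {q₁, q₂, q₃, q₄} ⊆ M.E ∧
      ∃ P : Set α → Prop, (∀ I ⊆ ({q₁, q₂, q₃, q₄} : Set α), (M.Indep (I ∪ ↑J) ↔ P I)) ∧
        ∀ T ⊆ ({q₁, q₂, q₃, q₄} : Set α), T.encard = 3 → ¬ P T ∧ ∀ t ∈ T, P (T \ {t}) := by
  obtain ⟨N, ⟨C, D, hN⟩, hc4, hcirc⟩ := hU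
  obtain ⟨q₁, q₂, q₃, q₄, h12, h13, h14, h23, h24, h34, hQ⟩ := Set.encard_eq_four.1 hc4
  have hN' : N = M ／ C ＼ D := hN
  have hQs : N.E = (M.E \ C) \ D := by rw [hN']; rfl
  have hQE : N.E ⊆ M.E := by rw [hQs]; exact fun x hx => hx.1.1
  have hT : ∀ T ⊆ N.E, T.encard = 3 → ¬ N.Indep T ∧ ∀ t ∈ T, N.Indep (T \ {t}) := by
    intro T hTQ hT
    have hci : N.IsCircuit T := (hcirc T).2 ⟨hTQ, by rw [hT]; rfl⟩
    exact ⟨hci.not_indep, fun t ht => hci.sdiff_singleton_indep ht⟩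
  obtain ⟨J, hJ⟩ := M.exists_isBasis' C
  have hiff : ∀ I ⊆ N.E, (M.Indep (I ∪ J) ↔ N.Indep I) := by
    intro I hI
    rw [hN', Matroid.delete_indep_iff, hJ.contract_indep_iff]
    rw [hQs] at hI
    have h1 : Disjoint C I := Set.disjoint_left.2 fun x hx hxI => (hI hxI).1.2 hx
    have h2 : Disjoint I D := Set.disjoint_left.2 fun x hxI hx => (hI hxI).2 hx
    tauto
  suffices hs : ∃ J : Finset α, J.Nonempty ∧ (∀ x ∈ J, x ∈ M.E) ∧ (∀ x ∈ J, x ∉ N.E) ∧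
      ∀ I ⊆ N.E, (M.Indep (I ∪ ↑J) ↔ N.Indep I) by
    obtain ⟨J, hn, hJE, hJN, hJi⟩ := hs
    rw [hQ] at hJN hJi hQE hT
    refine ⟨q₁, q₂, q₃, q₄, J, h12, h13, h14, h23, h24, h34, hn, hJE, fun x hx => ?_, hQE,
      N.Indep, hJi, hT⟩
    simpa only [mem_insert_iff, mem_singleton_iff, not_or] using hJN x hx
  obtain ⟨J, rfl⟩ := hJ.indep.finite.exists_finset_coe
  by_cases hn : J.Nonempty
  · refine ⟨J, hn, fun x hx => hJ.indep.subset_ground hx, fun x hx hxN => ?_, hiff⟩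
    rw [hQs] at hxN
    exact hxN.1.2 (hJ.subset hx)
  · rw [Finset.not_nonempty_iff_eq_empty] at hn
    subst hn
    obtain ⟨c, hcE, hcQ⟩ : ∃ c ∈ M.E, c ∉ M.closure N.E := by
      by_contra hall
      push Not at hall
      obtain ⟨B, hB, hcard⟩ := h
      have h1 := hB.encard_le_eRk_of_subset (X := M.closure N.E)
        fun x hx => hall x (hB.subset_ground hx)
      rw [Matroid.eRk_closure_eq] at h1
      have h2 := h1.trans ((M.eRk_le_encard _).trans hc4.le)
      rw [Set.encard_coe_eq_coe_finsetCard] at h2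
      have h3 : B.card ≤ 4 := by exact_mod_cast h2
      omega
    have hcN : c ∉ N.E := fun hc => hcQ (M.subset_closure N.E hQE hc)
    refine ⟨{c}, by simp, by simpa using hcE, by simpa using hcN, fun I hI => ?_⟩
    rw [← hiff I hI]
    simp only [Finset.coe_singleton, Finset.coe_empty, union_empty, union_singleton]
    refine ⟨fun h => h.subset (subset_insert _ _), fun hI' => ?_⟩
    exact (hI'.insert_indep_iff_of_notMem fun hc => hcN (hI hc)).2
      ⟨hcE, fun hc => hcQ (M.closure_subset_closure hI hc)⟩

lemma exists_not_bn (h : RkGe M 12) (hfin : M.RankFinite) (hl : ∀ e ∈ M.E, M.IsNonloop e)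
    (hU : HasU24Minor M) : ∃ c ∈ M.E, ∀ R, ¬ Bn (M ／ {c}) R := by
  classical
  obtain ⟨q₁, q₂, q₃, q₄, J, h12, h13, h14, h23, h24, h34, ⟨c, hcJ⟩, hJE, hJQ, hQE, P, hP, hT⟩ :=
    exists_u24 h hfin hU
  refine ⟨c, hJE c hcJ, fun R hR => ?_⟩
  have hcq := hJQ c hcJ
  have key : ∀ I : Finset α, I ⊆ {q₁, q₂, q₃, q₄} → (Ind0 R (I ∪ J.erase c) ↔ P ↑I) := by
    intro I hI
    have hIQ : (I : Set α) ⊆ {q₁, q₂, q₃, q₄} := by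
      have := Finset.coe_subset.2 hI
      push_cast at this
      exact this
    have hcI : c ∉ I ∪ J.erase c := by
      intro hc
      rw [Finset.mem_union] at hc
      rcases hc with hc | hc
      · have := hI hc
        simp only [Finset.mem_insert, Finset.mem_singleton] at this
        tauto
      · simp at hc
    rw [← hR.indep_iff, con_indep (hl c (hJE c hcJ)) hcI, ← hP _ hIQ, ← Finset.coe_union]
    · have : insert c (I ∪ J.erase c) = I ∪ J := by
        rw [← Finset.union_insert, Finset.insert_erase hcJ]
      rw [this]
    · intro x hx
      refine ⟨?_, fun hxc => hcI (hxc ▸ hx)⟩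
      rw [Finset.mem_coe, Finset.mem_union] at hx
      rcases hx with hx | hx
      · exact hQE (hIQ hx)
      · exact hJE x (Finset.mem_of_mem_erase hx)
  have hZ : ∀ T : Finset α, T ⊆ {q₁, q₂, q₃, q₄} → T.card = 3 →
      ∃ Z : Finset α, T ⊆ Z ∧ Z ⊆ T ∪ J.erase c ∧ Cyc R Z := by
    intro T hTQ hTc
    obtain ⟨hd, hi⟩ := hT T (by
      have := Finset.coe_subset.2 hTQ
      push_cast at this
      exact this) (by rw [Set.encard_coe_eq_coe_finsetCard, hTc]; rfl)
    rw [← key T hTQ] at hd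
    simp only [Ind0] at hd
    push Not at hd
    obtain ⟨Z, hZ, cZ, nZ⟩ := hd
    refine ⟨Z, fun t ht => ?_, hZ, cZ⟩
    by_contra htZ
    have h1 := hi t ht
    rw [← Finset.coe_singleton, ← Finset.coe_sdiff, ← key _ (Finset.sdiff_subset.trans hTQ)] at h1
    refine nZ.ne_empty (h1 Z (fun x hx => ?_) cZ)
    have := hZ hx
    simp only [Finset.mem_union, Finset.mem_sdiff, Finset.mem_singleton] at this ⊢
    grind
  have hpair : Ind0 R ({q₃, q₄} ∪ J.erase c) := by
    rw [key _ (by intro x; simp only [Finset.mem_insert, Finset.mem_singleton]; tauto)]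
    have h1 := (hT {q₁, q₃, q₄} (by
      intro x; simp only [mem_insert_iff, mem_singleton_iff]; tauto)
      (Set.encard_eq_three.2 ⟨_, _, _, h13, h14, h34, rfl⟩)).2 q₁ (by simp)
    have h2 : ({q₁, q₃, q₄} : Set α) \ {q₁} = ↑({q₃, q₄} : Finset α) := by
      ext x
      simp only [mem_sdiff, mem_insert_iff, mem_singleton_iff, Finset.coe_insert,
        Finset.coe_singleton]
      grind
    rwa [h2] at h1
  obtain ⟨Z, hZ1, hZ2, cZ⟩ := hZ {q₁, q₂, q₃} (by
    intro x; simp only [Finset.mem_insert, Finset.mem_singleton]; tauto)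
    (Finset.card_eq_three.2 ⟨_, _, _, h12, h13, h23, rfl⟩)
  obtain ⟨Z', hZ1', hZ2', cZ'⟩ := hZ {q₁, q₂, q₄} (by
    intro x; simp only [Finset.mem_insert, Finset.mem_singleton]; tauto)
    (Finset.card_eq_three.2 ⟨_, _, _, h12, h14, h24, rfl⟩)
  -- The difference of the two cycles avoids `q₁` and `q₂`, hence lies in an independent set.
  have hsub : symmDiff Z Z' ⊆ {q₃, q₄} ∪ J.erase c := by
    intro x hx
    rw [Finset.mem_symmDiff] at hx
    have e1 := @hZ2 x
    have e2 := @hZ2' x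
    have e3 : q₁ ∈ Z := hZ1 (by simp)
    have e4 : q₂ ∈ Z := hZ1 (by simp)
    have e5 : q₁ ∈ Z' := hZ1' (by simp)
    have e6 : q₂ ∈ Z' := hZ1' (by simp)
    simp only [Finset.mem_union, Finset.mem_insert, Finset.mem_singleton] at e1 e2 ⊢
    grind
  have heq : Z = Z' := symmDiff_eq_bot.1 (hpair _ hsub (cZ.symmDiff cZ'))
  have h3 : q₃ ∈ Z' := heq ▸ hZ1 (by simp)
  have h3' := hZ2' h3
  simp only [Finset.mem_union, Finset.mem_insert, Finset.mem_singleton, Finset.mem_erase] at h3'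
  have := fun h => (hJQ q₃ h).2.2.1 rfl
  tauto

end Final

theorem statement_17 {α : Type u} (M : Matroid α) (h3 : ThreeConnected M)
    (hex : ExcludedMinorBL M) (hU : HasU24Minor M) :
    eRank M ≤ 11 ∨ eRank M✶ ≤ 4 := by
  by_contra hcon
  push Not at hcon
  have hr := rkGe_of_not_le (not_le.2 hcon.1)
  have hM := Setup.of_threeConnected h3 hr hex.2
  have hfin := hM.fin
  obtain ⟨c, hcE, hc⟩ := exists_not_bn hr hfin hM.loopless hU
  obtain ⟨R, hR, hg⟩ := hM.exists_lam hcE hc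
  exact hex.1 (Or.inr (isBicircularLift_of_lam hR hg))

end BLFormal
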